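/- arXiv:1005.3908 — 5 statements merged into one kernel-verified Lean document; each statement's English description precedes it below -/
import Mathlib

section
/- Let ν be the exponential measure on ℝ^n, dν(x) = Z_n^{−1} e^{−|x|} dx, where |x| is the Euclidean norm and Z_n the normalizing constant. Then there exists a constant C = C(n) such that for every bounded C¹ function f with bounded gradient, Ent_ν(f²) ≤ C ∫ |∇f(x)|² (1+|x|) dν(x). -/
/-!
The proof works with the smooth density `e^{-U}`, `U = √(1 + |x|²)`, which is comparable to `e^{-|x|}`.
Write `D = ∫ U |∇f|² e^{-U}`; up to the factor `Z` this is at most the right-hand side.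

Integration by parts against the Euler field `x` gives a Hardy inequality (`Reg.hardy`)
`∫ U g² e^{-U} ≤ 2 (d + 1) ∫ g² e^{-U} + 4 ∫ U |∇g|² e^{-U}`. It makes the part of `∫ g² e^{-U}` outside a
large ball absorbable, and with the Poincaré inequality on that ball it yields a constant `m` with
`∫ (f - m)² e^{-U} ≤ K D` (`poincare`).

For `g = f - m` the function `w = g² e^{-U}` is then controlled in `W^{1,1}`, so in `L^{1+1/d}` by the
Sobolev embedding (`sobolev`). Since `log (1 + g²) ≤ log (1 + w) + U` and `w log (1 + w) ≤ d w^{1+1/d}`,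
the Hardy and Sobolev inequalities together bound `∫ g² log (1 + g² / s) e^{-U}` by a multiple of `s`
as soon as `s ≥ D` (`log_bound`). It is here that the weight `1 + |x|` is needed.

Finally `Ent_ν(f²) ≤ ∫ (f² log f² - f² log t - f² + t) dν` for every `t > 0` (`entropy_le`). With
`t = m² + s` the integrand is at most a constant times `g² + s + g² log (1 + g² / s)`
(`pointwise_bound`), whose integral is `O(s)`; then `s` decreases to its lower bound.
-/

open MeasureTheory Real Filter Set

/-- The entropy `Ent_μ(g) = ∫ g log g dμ − (∫ g dμ) log(∫ g dμ)`. -/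
noncomputable def entropy {α : Type*} [MeasurableSpace α] (μ : Measure α) (g : α → ℝ) : ℝ :=
  ∫ x, g x * Real.log (g x) ∂μ - (∫ x, g x ∂μ) * Real.log (∫ x, g x ∂μ)

namespace WLS

set_option linter.unusedSectionVars false

section

/-! ### The smooth weight and integration by parts -/

variable {E : Type*} [NormedAddCommGroup E] [InnerProductSpace ℝ E]

/-- The smooth substitute `√(1 + |x|²)` for `|x|`; it satisfies `|x| ≤ U x ≤ 1 + |x|`. -/
noncomputable def U (x : E) : ℝ := √(1 + ‖x‖ ^ 2)
/-- The `C¹` unnormalized density `e^{-U}`, within a factor `e` of `e^{-|x|}`. -/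
noncomputable def wt (x : E) : ℝ := Real.exp (-U x)

lemma one_le_U (x : E) : 1 ≤ U x := by
  rw [U, Real.one_le_sqrt]; nlinarith [sq_nonneg ‖x‖]

lemma U_pos (x : E) : 0 < U x := lt_of_lt_of_le one_pos (one_le_U x)

lemma U_sq (x : E) : U x ^ 2 = 1 + ‖x‖ ^ 2 := Real.sq_sqrt (by positivity)

lemma norm_le_U (x : E) : ‖x‖ ≤ U x := Real.le_sqrt_of_sq_le (by linarith)

lemma U_le (x : E) : U x ≤ 1 + ‖x‖ := by
  rw [U, Real.sqrt_le_left (by positivity)]; nlinarith [norm_nonneg x]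

lemma wt_pos (x : E) : 0 < wt x := Real.exp_pos _

lemma contDiff_U : ContDiff ℝ 1 (U : E → ℝ) :=
  (contDiff_const.add (contDiff_norm_sq ℝ)).sqrt fun x => by positivity

lemma contDiff_wt : ContDiff ℝ 1 (wt : E → ℝ) := contDiff_U.neg.exp

lemma hasFDerivAt_U (x : E) : HasFDerivAt (U : E → ℝ) ((U x)⁻¹ • innerSL ℝ x) x := by
  have h := ((hasFDerivAt_id x).norm_sq.const_add 1).sqrt (by positivity)
  refine h.congr_fderiv ?_
  apply ContinuousLinearMap.ext
  intro v
  have := (U_pos x).ne'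
  simp only [U, id, ContinuousLinearMap.comp_id, smul_apply, smul_eq_mul,
    nsmul_eq_mul] at this ⊢
  field_simp
  simp

lemma norm_fderiv_U_le (x : E) : ‖(U x)⁻¹ • innerSL ℝ x‖ ≤ 1 := by
  rw [norm_smul, innerSL_apply_norm, norm_inv, Real.norm_of_nonneg (U_pos x).le]
  rw [inv_mul_le_one₀ (U_pos x)]
  exact norm_le_U x

lemma exp_neg_norm_le (x : E) : Real.exp (-‖x‖) ≤ Real.exp 1 * wt x := by
  rw [wt, ← Real.exp_add, Real.exp_le_exp]; linarith [U_le x]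

lemma wt_le (x : E) : wt x ≤ Real.exp (-‖x‖) := by
  rw [wt, Real.exp_le_exp]; linarith [norm_le_U x]

variable [FiniteDimensional ℝ E] [MeasurableSpace E] [BorelSpace E]
  (μ : Measure E) [μ.IsAddHaarMeasure]

lemma integrable_pow_exp (k : ℕ) :
    Integrable (fun x : E => (1 + ‖x‖) ^ k * Real.exp (-‖x‖)) μ := by
  set d := Module.finrank ℝ E
  have h := integrable_one_add_norm (μ := μ) (E := E) (r := ((d + 1 : ℕ) : ℝ)) (by
    push_cast; linarith)
  refine (h.const_mul (Real.exp 1 * (k + (d + 1)).factorial)).mono'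
    (by fun_prop) (ae_of_all _ fun x => ?_)
  have hx : 0 < 1 + ‖x‖ := by positivity
  -- The factorial bound `r ^ (k + d + 1) ≤ (k + d + 1)! * e ^ r` at `r = 1 + ‖x‖` leaves the
  -- integrable function `(1 + ‖x‖) ^ (-(d + 1))`.
  have h1 := Real.pow_div_factorial_le_exp _ hx.le (k + (d + 1))
  rw [Real.norm_of_nonneg (by positivity), Real.rpow_neg hx.le, Real.rpow_natCast]
  have e : Real.exp (-‖x‖) = Real.exp 1 / Real.exp (1 + ‖x‖) := by
    rw [← Real.exp_sub]; congr 1; ring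
  rw [e]
  have hf : (0:ℝ) < (k + (d + 1)).factorial := by positivity
  rw [div_le_iff₀ hf, pow_add] at h1
  have h2 := Real.exp_pos (1 + ‖x‖)
  have h3 : 0 < (1 + ‖x‖) ^ (d+1) := by positivity
  rw [← mul_div_assoc, ← div_eq_mul_inv, div_le_div_iff₀ h2 h3]
  nlinarith [mul_le_mul_of_nonneg_left h1 (Real.exp_pos 1).le]

/-- A polynomially bounded measurable function is integrable against `wt`. -/
lemma integrable_wt {h : E → ℝ} (hm : AEStronglyMeasurable h μ) (k : ℕ) (C : ℝ)
    (hb : ∀ x, |h x| ≤ C * (1 + ‖x‖) ^ k) : Integrable (fun x => h x * wt x) μ := by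
  refine ((integrable_pow_exp μ k).const_mul C).mono'
    (hm.mul contDiff_wt.continuous.aestronglyMeasurable) (ae_of_all _ fun x => ?_)
  rw [norm_mul, Real.norm_of_nonneg (wt_pos x).le, Real.norm_eq_abs, ← mul_assoc]
  exact mul_le_mul (hb x) (wt_le x) (wt_pos x).le ((abs_nonneg _).trans (hb x))

/-- Integration by parts against the Euler field `x ↦ x`, whose divergence is `dim E`. -/
lemma integral_fderiv_self {w : E → ℝ} (hw : ContDiff ℝ 1 w) (h0 : Integrable w μ)
    (h1 : Integrable (fun x => ‖x‖ * w x) μ)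
    (h2 : Integrable (fun x => ‖x‖ * ‖fderiv ℝ w x‖) μ) :
    ∫ x, fderiv ℝ w x x ∂μ = -(Module.finrank ℝ E * ∫ x, w x ∂μ) := by
  set b := stdOrthonormalBasis ℝ E
  have hc : Continuous (fderiv ℝ w) := hw.continuous_fderiv one_ne_zero
  have key : ∀ i, Integrable (fun x => inner ℝ (b i) x * fderiv ℝ w x (b i)) μ := fun i => by
    refine h2.mono' (by fun_prop) (ae_of_all _ fun x => ?_)
    rw [norm_mul]
    have a1 := norm_inner_le_norm (𝕜 := ℝ) (b i) x
    have a2 := (fderiv ℝ w x).le_opNorm (b i)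
    simp only [b.norm_eq_one, one_mul, mul_one] at a1 a2
    exact mul_le_mul a1 a2 (norm_nonneg _) (norm_nonneg _)
  have hd : ∀ i x, fderiv ℝ (fun x => inner ℝ (b i) x) x (b i) = (1:ℝ) := fun i x => by
    have : HasFDerivAt (fun x => inner ℝ (b i) x) (innerSL ℝ (b i)) x :=
      (innerSL ℝ (b i)).hasFDerivAt
    rw [this.fderiv]
    simp [b.norm_eq_one]
  have hi : ∀ i, ∫ x, inner ℝ (b i) x * fderiv ℝ w x (b i) ∂μ = - ∫ x, w x ∂μ := fun i => by
    rw [integral_mul_fderiv_eq_neg_fderiv_mul_of_integrable]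
    · simp [hd]
    · simpa [hd] using h0
    · exact key i
    · refine h1.norm.mono' (by have := hw.continuous; fun_prop) (ae_of_all _ fun x => ?_)
      rw [norm_mul, norm_mul, norm_norm]
      have a1 := norm_inner_le_norm (𝕜 := ℝ) (b i) x
      simp only [b.norm_eq_one, one_mul] at a1
      gcongr
    · exact fun x _ => (innerSL ℝ (b i)).differentiableAt
    · exact fun x _ => hw.differentiable one_ne_zero x
  have e : ∀ x, fderiv ℝ w x x = ∑ i, inner ℝ (b i) x * fderiv ℝ w x (b i) := fun x => by
    have h := congrArg (fderiv ℝ w x) (b.sum_repr' x)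
    rw [map_sum] at h
    rw [← h]
    simp
  simp_rw [e]
  rw [integral_finsetSum _ fun i _ => key i]
  simp [hi]

/-! ### Test functions and the Hardy inequality -/

/-- The class of test functions: bounded `C¹` functions with bounded derivative. -/
structure Reg (g : E → ℝ) : Prop where
  contDiff : ContDiff ℝ 1 g
  bdd : ∃ M, ∀ x, |g x| ≤ M
  gbdd : ∃ M, ∀ x, ‖fderiv ℝ g x‖ ≤ M

lemma Reg.integrable_U_sq {g : E → ℝ} (hg : Reg g) :
    Integrable (fun x => U x * g x ^ 2 * wt x) μ := by
  obtain ⟨M, hM⟩ := hg.bdd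
  have := hg.contDiff.continuous
  have := (contDiff_U (E := E)).continuous
  refine integrable_wt μ (by fun_prop) 1 (M ^ 2) fun x => ?_
  rw [abs_mul, abs_of_pos (U_pos x), abs_pow, mul_comm, pow_one]
  have := hM x
  have := U_le x
  have := U_pos x
  gcongr

lemma Reg.integrable_sq {g : E → ℝ} (hg : Reg g) :
    Integrable (fun x => g x ^ 2 * wt x) μ := by
  obtain ⟨M, hM⟩ := hg.bdd
  have := hg.contDiff.continuous
  refine integrable_wt μ (by fun_prop) 0 (M ^ 2) fun x => ?_
  rw [abs_pow, pow_zero, mul_one]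
  have := hM x
  gcongr

lemma Reg.integrable_grad {g : E → ℝ} (hg : Reg g) :
    Integrable (fun x => U x * ‖fderiv ℝ g x‖ ^ 2 * wt x) μ := by
  obtain ⟨M, hM⟩ := hg.gbdd
  have := hg.contDiff.continuous_fderiv one_ne_zero
  have := (contDiff_U (E := E)).continuous
  refine integrable_wt μ (by fun_prop) 1 (M ^ 2) fun x => ?_
  rw [abs_mul, abs_of_pos (U_pos x), abs_pow, mul_comm, pow_one, abs_norm]
  have := hM x
  have := U_le x
  have := U_pos x
  gcongr

lemma Reg.hasFDerivAt_w {g : E → ℝ} (hg : Reg g) (x : E) :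
    HasFDerivAt (fun x => g x ^ 2 * wt x)
      (wt x • ((2 * g x) • fderiv ℝ g x - g x ^ 2 • ((U x)⁻¹ • innerSL ℝ x))) x := by
  have h1 := (hg.contDiff.differentiable one_ne_zero x).hasFDerivAt
  have h2 : HasFDerivAt wt _ x := (hasFDerivAt_U x).neg.exp
  refine ((h1.pow 2).mul h2).congr_fderiv ?_
  apply ContinuousLinearMap.ext
  intro v
  simp [wt]
  ring

/-- The `W^{1,1}` control of `w = g² e^{-U}`: `|∇w| ≤ 2|g||∇g| e^{-U} + g² e^{-U}`, as `|∇U| ≤ 1`,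
and the first term is at most `(g² + |∇g|²) e^{-U}`. -/
lemma Reg.norm_fderiv_w_le {g : E → ℝ} (hg : Reg g) (x : E) :
    ‖fderiv ℝ (fun x => g x ^ 2 * wt x) x‖ ≤
      (2 * g x ^ 2 + ‖fderiv ℝ g x‖ ^ 2) * wt x := by
  rw [(hg.hasFDerivAt_w x).fderiv, norm_smul, Real.norm_of_nonneg (wt_pos x).le, mul_comm]
  refine mul_le_mul_of_nonneg_right ?_ (wt_pos x).le
  refine (norm_sub_le _ _).trans ?_
  rw [norm_smul, norm_smul (g x ^ 2)]
  have := norm_fderiv_U_le x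
  have h3 := mul_le_mul_of_nonneg_left this (sq_nonneg (g x))
  have e1 : ‖g x ^ 2‖ = g x ^ 2 := Real.norm_of_nonneg (sq_nonneg _)
  have e2 : ‖2 * g x‖ = 2 * |g x| := by simp
  rw [e1, e2]
  nlinarith [sq_nonneg (|g x| - ‖fderiv ℝ g x‖), sq_abs (g x)]

lemma Reg.contDiff_w {g : E → ℝ} (hg : Reg g) : ContDiff ℝ 1 (fun x => g x ^ 2 * wt x) :=
  (hg.contDiff.pow 2).mul contDiff_wt

lemma Reg.integrable_w_bound {g : E → ℝ} (hg : Reg g) :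
    Integrable (fun x => U x * ((2 * g x ^ 2 + ‖fderiv ℝ g x‖ ^ 2) * wt x)) μ := by
  refine (((hg.integrable_U_sq μ).const_mul 2).add (hg.integrable_grad μ)).congr
    (ae_of_all _ fun x => ?_)
  simp only [Pi.add_apply]
  ring

/-- Weighted Hardy-type inequality: one power of `U` on `g²` is paid for by the weighted Dirichlet
energy. With `w = g² e^{-U}`, integration by parts gives `∫ x · ∇w = -dim E ∫ w`, while
`x · ∇w = (2 g x · ∇g - g² (U - U⁻¹)) e^{-U}` contains the term `-U g² e^{-U}`. -/
lemma Reg.hardy {g : E → ℝ} (hg : Reg g) :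
    ∫ x, U x * g x ^ 2 * wt x ∂μ ≤
      2 * (Module.finrank ℝ E + 1) * ∫ x, g x ^ 2 * wt x ∂μ +
        4 * ∫ x, U x * ‖fderiv ℝ g x‖ ^ 2 * wt x ∂μ := by
  have hw := hg.contDiff_w
  have hcf := hw.continuous_fderiv one_ne_zero
  have hcw := hw.continuous
  have i1 : Integrable (fun x => ‖x‖ * ‖fderiv ℝ (fun x => g x ^ 2 * wt x) x‖) μ := by
    refine (hg.integrable_w_bound μ).mono' (by fun_prop) (ae_of_all _ fun x => ?_)
    rw [norm_mul, norm_norm, norm_norm]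
    exact mul_le_mul (norm_le_U x) (hg.norm_fderiv_w_le x) (norm_nonneg _) (U_pos x).le
  have i2 : Integrable (fun x => ‖x‖ * (g x ^ 2 * wt x)) μ := by
    refine (hg.integrable_U_sq μ).mono' (by fun_prop) (ae_of_all _ fun x => ?_)
    have := wt_pos x
    have := norm_le_U x
    rw [Real.norm_of_nonneg (by positivity), mul_assoc]
    gcongr
  have key := integral_fderiv_self μ hw (hg.integrable_sq μ) i2 i1
  have i3 : Integrable (fun x => fderiv ℝ (fun x => g x ^ 2 * wt x) x x) μ := by
    refine i1.mono' (hcf.clm_apply continuous_id).aestronglyMeasurable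
      (ae_of_all _ fun x => ?_)
    rw [mul_comm]
    exact (fderiv ℝ (fun x => g x ^ 2 * wt x) x).le_opNorm x
  have hp : ∀ x, U x * g x ^ 2 * wt x ≤ (2 * (g x ^ 2 * wt x) -
      2 * fderiv ℝ (fun x => g x ^ 2 * wt x) x x) +
      4 * (U x * ‖fderiv ℝ g x‖ ^ 2 * wt x) := fun x => by
    rw [(hg.hasFDerivAt_w x).fderiv]
    have hU := one_le_U x
    have hU0 := U_pos x
    have hsq := U_sq x
    have hx := norm_le_U x
    have hl := (fderiv ℝ g x).le_opNorm x
    rw [Real.norm_eq_abs] at hl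
    have hl2 : g x * fderiv ℝ g x x ≤ |g x| * (‖fderiv ℝ g x‖ * U x) := by
      refine (le_abs_self _).trans ?_
      rw [abs_mul]
      gcongr
      exact hl.trans (by gcongr)
    have e : (U x)⁻¹ * ‖x‖ ^ 2 = U x - (U x)⁻¹ := by
      field_simp; linarith
    have hi : (U x)⁻¹ ≤ 1 := inv_le_one_of_one_le₀ hU
    have e2 : (wt x • ((2 * g x) • fderiv ℝ g x - g x ^ 2 • ((U x)⁻¹ • innerSL ℝ x))) x =
        wt x * (2 * (g x * fderiv ℝ g x x) - g x ^ 2 * (U x - (U x)⁻¹)) := by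
      rw [← e]
      simp only [smul_apply, sub_apply, innerSL_apply_apply,
        smul_eq_mul, real_inner_self_eq_norm_sq]
      ring
    rw [e2]
    -- The cross term is split by `4 |g| |∇g| ≤ g² + 4 |∇g|²`.
    have : U x * g x ^ 2 ≤ 2 * g x ^ 2 - 2 * (2 * (g x * fderiv ℝ g x x) -
        g x ^ 2 * (U x - (U x)⁻¹)) + 4 * (U x * ‖fderiv ℝ g x‖ ^ 2) := by
      have := mul_nonneg hU0.le (sq_nonneg (|g x| - 2 * ‖fderiv ℝ g x‖))
      nlinarith [sq_abs (g x), mul_nonneg (sq_nonneg (g x)) (sub_nonneg.2 hi)]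
    nlinarith [mul_le_mul_of_nonneg_right this (wt_pos x).le]
  have j1 : Integrable (fun x => 2 * (g x ^ 2 * wt x) -
      2 * fderiv ℝ (fun x => g x ^ 2 * wt x) x x) μ :=
    ((hg.integrable_sq μ).const_mul 2).sub (i3.const_mul 2)
  have j2 := (hg.integrable_grad μ).const_mul 4
  refine (integral_mono (hg.integrable_U_sq μ) (j1.add j2) hp).trans_eq ?_
  rw [integral_add' j1 j2, integral_sub ((hg.integrable_sq μ).const_mul 2) (i3.const_mul 2),
    integral_const_mul, integral_const_mul, integral_const_mul, key]
  ring

/-! ### Poincaré inequality on balls -/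

/-- Cauchy–Schwarz for `f` along the segment from `y` to `x`. -/
lemma sq_sub_le_segment {f : E → ℝ} (hf : ContDiff ℝ 1 f) (x y : E) :
    ‖f x - f y‖ₑ ^ 2 ≤
      ‖x - y‖ₑ ^ 2 * ∫⁻ t in Icc (0:ℝ) 1, ‖fderiv ℝ f (t • x + (1 - t) • y)‖ₑ ^ 2 := by
  set a : ℝ → ℝ := fun t => fderiv ℝ f (t • x + (1 - t) • y) (x - y)
  have hcf := hf.continuous_fderiv one_ne_zero
  have hac : Continuous a := by fun_prop
  have hd : ∀ t : ℝ, HasDerivAt (fun t : ℝ => f (t • x + (1 - t) • y)) (a t) t := fun t => by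
    have h1 := (hf.differentiable one_ne_zero (t • x + (1 - t) • y)).hasFDerivAt
    have h2 : HasDerivAt (fun t : ℝ => t • x + (1 - t) • y) (x - y) t := by
      have := ((hasDerivAt_id t).smul_const x).add
        (((hasDerivAt_id t).const_sub 1).smul_const y)
      refine this.congr_deriv ?_
      simp [sub_eq_add_neg]
    exact h1.comp_hasDerivAt t h2
  have hI : ∫ t in (0:ℝ)..1, a t = f x - f y := by
    rw [intervalIntegral.integral_eq_sub_of_hasDerivAt (fun t _ => hd t)
      (hac.intervalIntegrable _ _)]
    simp
  have hsq : (f x - f y) ^ 2 ≤ ∫ t in (0:ℝ)..1, a t ^ 2 := by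
    -- Jensen's inequality, from the nonnegativity of the variance of `a` on `[0, 1]`.
    have h0 : 0 ≤ ∫ t in (0:ℝ)..1, (a t - (f x - f y)) ^ 2 :=
      intervalIntegral.integral_nonneg zero_le_one fun t _ => sq_nonneg _
    have e : ∀ t, (a t - (f x - f y)) ^ 2 =
        a t ^ 2 - (2 * (f x - f y)) * a t + (f x - f y) ^ 2 := fun t => by ring
    simp_rw [e] at h0
    rw [intervalIntegral.integral_add
      ((by fun_prop : Continuous _).intervalIntegrable _ _)
      ((by fun_prop : Continuous _).intervalIntegrable _ _),
      intervalIntegral.integral_sub ((by fun_prop : Continuous _).intervalIntegrable _ _)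
      ((by fun_prop : Continuous _).intervalIntegrable _ _),
      intervalIntegral.integral_const_mul, hI] at h0
    simp at h0
    nlinarith
  have e1 : ‖f x - f y‖ₑ ^ 2 = ENNReal.ofReal ((f x - f y) ^ 2) := by
    rw [← enorm_pow, Real.enorm_of_nonneg (sq_nonneg _)]
  rw [e1]
  refine (ENNReal.ofReal_le_ofReal hsq).trans ?_
  rw [intervalIntegral.integral_of_le zero_le_one, ← integral_Icc_eq_integral_Ioc,
    ofReal_integral_eq_lintegral_ofReal ((by fun_prop : Continuous _).integrableOn_Icc)
      (ae_of_all _ fun t => sq_nonneg _), ← lintegral_const_mul _ (by fun_prop)]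
  refine lintegral_mono fun t => ?_
  rw [← Real.enorm_of_nonneg (sq_nonneg _), enorm_pow, ← mul_pow]
  gcongr
  rw [mul_comm]
  exact (fderiv ℝ f (t • x + (1 - t) • y)).le_opENorm _

lemma lintegral_comp_affine_le {G : E → ENNReal} (hG : Measurable G) {a : ℝ} (ha : 1 / 2 ≤ a)
    (c : E) :
    ∫⁻ x, G (a • x + c) ∂μ ≤ 2 ^ Module.finrank ℝ E * ∫⁻ x, G x ∂μ := by
  have ha0 : 0 < a := by linarith
  have h1 : ∫⁻ x, G (a • x + c) ∂μ = ∫⁻ z, G (z + c) ∂(Measure.map (a • ·) μ) := by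
    rw [lintegral_map (by fun_prop) (by fun_prop)]
  rw [h1, Measure.map_addHaar_smul μ ha0.ne', lintegral_smul_measure,
    lintegral_add_right_eq_self]
  rw [smul_eq_mul]
  gcongr
  rw [abs_of_pos (by positivity), ← inv_pow]
  have : a⁻¹ ≤ 2 := by
    rw [inv_le_comm₀ ha0 two_pos]; linarith
  calc ENNReal.ofReal (a⁻¹ ^ Module.finrank ℝ E)
      ≤ ENNReal.ofReal (2 ^ Module.finrank ℝ E) := by gcongr
    _ = _ := by rw [ENNReal.ofReal_pow two_pos.le]; simp

/-- Averaging over segments of `B`. Of the coefficients `t` and `1 - t`, one is at least `1/2`, so a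
change of variables in the corresponding endpoint costs at most `2 ^ dim E`. -/
lemma double_le {G : E → ENNReal} (hG : Measurable G) (B : Set E) (t : ℝ) :
    ∫⁻ y in B, ∫⁻ x in B, G (t • x + (1 - t) • y) ∂μ ∂μ ≤
      2 ^ Module.finrank ℝ E * (∫⁻ x, G x ∂μ) * μ B := by
  have main : ∀ s : ℝ, 1 / 2 ≤ s →
      ∫⁻ y in B, ∫⁻ x in B, G (s • x + (1 - s) • y) ∂μ ∂μ ≤
      2 ^ Module.finrank ℝ E * (∫⁻ x, G x ∂μ) * μ B := fun s hs => by
    rw [← setLIntegral_const]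
    refine lintegral_mono fun y => ?_
    exact (setLIntegral_le_lintegral _ _).trans (lintegral_comp_affine_le μ hG hs _)
  rcases le_total (1 / 2) t with h | h
  · exact main t h
  · rw [lintegral_lintegral_swap (by fun_prop)]
    refine le_of_eq_of_le ?_ (main (1 - t) (by linarith))
    simp only [sub_sub_cancel, add_comm]

/-- Poincaré inequality on a ball: `∫∫ |f x - f y|²` is bounded by integrating along segments, which
stay in the ball, and `m` is a value `f y` at which the inner integral does not exceed its
average over `y`. -/
lemma poincare_ball {f : E → ℝ} (hf : ContDiff ℝ 1 f) {R : ℝ} (hR : 0 < R) :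
    ∃ m : ℝ, ∫⁻ x in Metric.ball 0 R, ‖f x - m‖ₑ ^ 2 ∂μ ≤
      ENNReal.ofReal ((2 * R) ^ 2 * 2 ^ Module.finrank ℝ E) *
        ∫⁻ x in Metric.ball 0 R, ‖fderiv ℝ f x‖ₑ ^ 2 ∂μ := by
  set B := Metric.ball (0:E) R
  have hB : MeasurableSet B := Metric.isOpen_ball.measurableSet
  have hB0 : μ B ≠ 0 := (Metric.measure_ball_pos μ _ hR).ne'
  have hBt : μ B ≠ ⊤ := measure_ball_lt_top.ne
  have hcf := hf.continuous_fderiv one_ne_zero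
  have hc := hf.continuous
  -- Cutting the gradient off outside `B` lets the integrals over segments be bounded by
  -- integrals over the whole space.
  set G : E → ENNReal := B.indicator fun x => ‖fderiv ℝ f x‖ₑ ^ 2
  have hG : Measurable G := Measurable.indicator (by fun_prop) hB
  obtain ⟨y, -, hy⟩ := exists_le_setLAverage (μ := μ) (s := B)
    (f := fun y => ∫⁻ x in B, ‖f x - f y‖ₑ ^ 2 ∂μ) hB0 hBt
    (Measurable.lintegral_prod_left (f := fun x y : E => ‖f x - f y‖ₑ ^ 2)
      (by fun_prop)).aemeasurable
  refine ⟨f y, hy.trans ?_⟩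
  rw [setLAverage_eq]
  refine ENNReal.div_le_of_le_mul ?_
  have step : ∀ y ∈ B, ∀ x ∈ B, ‖f x - f y‖ₑ ^ 2 ≤
      ENNReal.ofReal ((2 * R) ^ 2) * ∫⁻ t in Icc (0:ℝ) 1, G (t • x + (1 - t) • y) :=
    fun y hy x hx => by
    refine (sq_sub_le_segment hf x y).trans ?_
    refine mul_le_mul' ?_ (setLIntegral_mono' measurableSet_Icc fun t ht => ?_)
    · rw [ENNReal.ofReal_pow (by positivity), ← ofReal_norm]
      gcongr
      have := norm_sub_le x y
      rw [mem_ball_zero_iff] at hx hy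
      linarith
    · have : t • x + (1 - t) • y ∈ B :=
        convex_ball (0:E) R hx hy ht.1 (by linarith [ht.2]) (by ring)
      simp [G, this]
  calc ∫⁻ y in B, ∫⁻ x in B, ‖f x - f y‖ₑ ^ 2 ∂μ ∂μ
      ≤ ∫⁻ y in B, ∫⁻ x in B, ENNReal.ofReal ((2 * R) ^ 2) *
          (∫⁻ t in Icc (0:ℝ) 1, G (t • x + (1 - t) • y)) ∂μ ∂μ :=
        setLIntegral_mono' hB fun y hy => setLIntegral_mono' hB fun x hx => step y hy x hx
    _ = ENNReal.ofReal ((2 * R) ^ 2) * ∫⁻ t in Icc (0:ℝ) 1,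
          ∫⁻ y in B, ∫⁻ x in B, G (t • x + (1 - t) • y) ∂μ ∂μ := by
        have e1 : ∀ y, ∫⁻ x in B, ENNReal.ofReal ((2 * R) ^ 2) *
            (∫⁻ t in Icc (0:ℝ) 1, G (t • x + (1 - t) • y)) ∂μ =
            ENNReal.ofReal ((2 * R) ^ 2) * ∫⁻ t in Icc (0:ℝ) 1,
              ∫⁻ x in B, G (t • x + (1 - t) • y) ∂μ := fun y => by
          rw [lintegral_const_mul' _ _ ENNReal.ofReal_ne_top,
            lintegral_lintegral_swap (by fun_prop)]
        simp_rw [e1]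
        rw [lintegral_const_mul' _ _ ENNReal.ofReal_ne_top, lintegral_lintegral_swap]
        apply Measurable.aemeasurable
        exact Measurable.lintegral_prod_right'
          (f := fun q : (E × ℝ) × E => G (q.1.2 • q.2 + (1 - q.1.2) • q.1.1)) (by fun_prop)
    _ ≤ ENNReal.ofReal ((2 * R) ^ 2) * ∫⁻ t in Icc (0:ℝ) 1,
          2 ^ Module.finrank ℝ E * (∫⁻ x, G x ∂μ) * μ B := by
        gcongr with t
        exact double_le μ hG B t
    _ = _ := by
        rw [setLIntegral_const, lintegral_indicator hB,
          ENNReal.ofReal_mul (by positivity : (0:ℝ) ≤ (2 * R) ^ 2),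
          ENNReal.ofReal_pow two_pos.le]
        simp
        ring

/-! ### Sobolev embedding -/

lemma enorm_fderiv_mul_le {V : Type*} [NormedAddCommGroup V] [NormedSpace ℝ V] {a b : V → ℝ}
    (ha : ContDiff ℝ 1 a) (hb : ContDiff ℝ 1 b) (x : V) :
    ‖fderiv ℝ (fun x => a x * b x) x‖ₑ ≤
      ‖fderiv ℝ a x‖ₑ * ‖b x‖ₑ + ‖a x‖ₑ * ‖fderiv ℝ b x‖ₑ := by
  have h1 := ha.differentiable one_ne_zero x
  have h2 := hb.differentiable one_ne_zero x
  have h := enorm_add_le (a x • fderiv ℝ b x) (b x • fderiv ℝ a x)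
  rw [enorm_smul, enorm_smul, mul_comm ‖b x‖ₑ] at h
  rwa [fderiv_fun_mul h1 h2, add_comm (‖fderiv ℝ a x‖ₑ * _)]

/-- Sobolev embedding `W^{1,1} ⊆ L^{1+1/d}` for compactly supported functions. The
Gagliardo–Nirenberg–Sobolev inequality in dimension `d + 1`, whose exponent is `1 + 1/d`, is
applied to `u ⊗ φ` on `E × ℝ` with a fixed bump function `φ`. The additional dimension keeps the
exponent finite when `d = 1`. -/
lemma sobolev_compact (hd : 0 < Module.finrank ℝ E) :
    ∃ C : ENNReal, C ≠ ⊤ ∧ ∀ u : E → ℝ, ContDiff ℝ 1 u → HasCompactSupport u →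
      ∫⁻ x, ‖u x‖ₑ ^ (1 + (Module.finrank ℝ E : ℝ)⁻¹) ∂μ ≤
        C * (∫⁻ x, ‖fderiv ℝ u x‖ₑ ∂μ + ∫⁻ x, ‖u x‖ₑ ∂μ) ^
          (1 + (Module.finrank ℝ E : ℝ)⁻¹) := by
  set d := Module.finrank ℝ E with hdd
  set p : ℝ := 1 + (d : ℝ)⁻¹ with hp
  have hd' : (0:ℝ) < d := by exact_mod_cast hd
  have hp0 : 0 < p := by positivity
  have hconj : Real.HolderConjugate (Module.finrank ℝ (E × ℝ)) p := by
    rw [Real.holderConjugate_iff]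
    rw [Module.finrank_prod, Module.finrank_self, ← hdd]
    push_cast
    refine ⟨by linarith, ?_⟩
    rw [hp]
    field_simp
    ring
  let φ : ContDiffBump (0:ℝ) := ⟨1, 2, one_pos, one_lt_two⟩
  have hφ : ContDiff ℝ 1 φ := φ.contDiff
  have hφs : HasCompactSupport φ := φ.hasCompactSupport
  have hφc := hφ.continuous
  have hφc' := hφ.continuous_fderiv one_ne_zero
  set c : ENNReal := ∫⁻ y, ‖φ y‖ₑ ^ p with hc
  have hc0 : c ≠ 0 := by
    rw [hc, Ne, lintegral_eq_zero_iff (by fun_prop)]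
    intro h
    have h2 : (fun y => ‖φ y‖ₑ ^ p) = 0 := by
      refine (Continuous.ae_eq_iff_eq volume ?_ continuous_const).1 h
      exact ENNReal.continuous_rpow_const.comp hφc.enorm
    have h3 := congrFun h2 0
    have h4 : φ 0 = 1 := φ.one_of_mem_closedBall (by simp [φ])
    simp [h4] at h3
  set K : ENNReal := (∫⁻ y, ‖φ y‖ₑ) + ∫⁻ y, ‖fderiv ℝ φ y‖ₑ with hK
  have hKt : K ≠ ⊤ := by
    rw [hK, ENNReal.add_ne_top]
    exact ⟨(hφc.integrable_of_hasCompactSupport hφs).2.ne,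
      (hφc'.integrable_of_hasCompactSupport (hφs.fderiv (𝕜 := ℝ))).2.ne⟩
  set C0 := lintegralPowLePowLIntegralFDerivConst (μ.prod (volume : Measure ℝ)) p
  refine ⟨c⁻¹ * (C0 * K ^ p), ?_, fun u hu hus => ?_⟩
  · exact ENNReal.mul_ne_top (ENNReal.inv_ne_top.2 hc0)
      (ENNReal.mul_ne_top ENNReal.coe_ne_top (ENNReal.rpow_ne_top_of_nonneg hp0.le hKt))
  have huc := hu.continuous
  have huc' := hu.continuous_fderiv one_ne_zero
  have h1 : ContDiff ℝ 1 (fun q : E × ℝ => u q.1) := hu.comp contDiff_fst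
  have h2 : ContDiff ℝ 1 (fun q : E × ℝ => φ q.2) := hφ.comp contDiff_snd
  have hvs : HasCompactSupport (fun q : E × ℝ => u q.1 * φ q.2) := by
    refine HasCompactSupport.intro (hus.isCompact.prod hφs.isCompact) fun q hq => ?_
    rw [Set.mem_prod, not_and_or] at hq
    rcases hq with hq | hq
    · rw [image_eq_zero_of_notMem_tsupport hq, zero_mul]
    · rw [image_eq_zero_of_notMem_tsupport hq, mul_zero]
  have gns := lintegral_pow_le_pow_lintegral_fderiv (μ.prod (volume : Measure ℝ))
    (h1.mul h2) hvs hconj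
  have hL : ∫⁻ q : E × ℝ, ‖u q.1 * φ q.2‖ₑ ^ p ∂(μ.prod volume) =
      (∫⁻ x, ‖u x‖ₑ ^ p ∂μ) * c := by
    rw [hc, ← lintegral_prod_mul (by fun_prop) (by fun_prop)]
    refine lintegral_congr fun q => ?_
    rw [enorm_mul, ENNReal.mul_rpow_of_nonneg _ _ hp0.le]
  have hR : ∫⁻ q : E × ℝ, ‖fderiv ℝ (fun q : E × ℝ => u q.1 * φ q.2) q‖ₑ ∂(μ.prod volume) ≤
      K * (∫⁻ x, ‖fderiv ℝ u x‖ₑ ∂μ + ∫⁻ x, ‖u x‖ₑ ∂μ) := by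
    calc _ ≤ ∫⁻ q : E × ℝ, (‖fderiv ℝ u q.1‖ₑ * ‖φ q.2‖ₑ + ‖u q.1‖ₑ * ‖fderiv ℝ φ q.2‖ₑ)
            ∂(μ.prod volume) := by
          refine lintegral_mono fun q => (enorm_fderiv_mul_le h1 h2 q).trans ?_
          have d1 : fderiv ℝ (fun q : E × ℝ => u q.1) q =
              (fderiv ℝ u q.1).comp (ContinuousLinearMap.fst ℝ E ℝ) :=
            ((hu.differentiable one_ne_zero q.1).hasFDerivAt.comp q hasFDerivAt_fst).fderiv
          have d2 : fderiv ℝ (fun q : E × ℝ => φ q.2) q =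
              (fderiv ℝ φ q.2).comp (ContinuousLinearMap.snd ℝ E ℝ) :=
            ((hφ.differentiable one_ne_zero q.2).hasFDerivAt.comp q hasFDerivAt_snd).fderiv
          have e1 : ‖fderiv ℝ (fun q : E × ℝ => u q.1) q‖ₑ ≤ ‖fderiv ℝ u q.1‖ₑ := by
            rw [d1, enorm_le_iff_norm_le]
            refine (ContinuousLinearMap.opNorm_comp_le _ _).trans ?_
            exact mul_le_of_le_one_right (norm_nonneg _) (ContinuousLinearMap.norm_fst_le ..)
          have e2 : ‖fderiv ℝ (fun q : E × ℝ => φ q.2) q‖ₑ ≤ ‖fderiv ℝ φ q.2‖ₑ := by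
            rw [d2, enorm_le_iff_norm_le]
            refine (ContinuousLinearMap.opNorm_comp_le _ _).trans ?_
            exact mul_le_of_le_one_right (norm_nonneg _) (ContinuousLinearMap.norm_snd_le ..)
          gcongr
      _ = (∫⁻ x, ‖fderiv ℝ u x‖ₑ ∂μ) * (∫⁻ y, ‖φ y‖ₑ) +
            (∫⁻ x, ‖u x‖ₑ ∂μ) * ∫⁻ y, ‖fderiv ℝ φ y‖ₑ := by
          rw [lintegral_add_left (by fun_prop), lintegral_prod_mul
              (f := fun x => ‖fderiv ℝ u x‖ₑ) (g := fun y => ‖φ y‖ₑ) (by fun_prop) (by fun_prop),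
            lintegral_prod_mul (f := fun x => ‖u x‖ₑ) (g := fun y => ‖fderiv ℝ φ y‖ₑ)
              (by fun_prop) (by fun_prop)]
      _ ≤ _ := by
          rw [mul_add, mul_comm K, mul_comm K]
          gcongr
          · exact le_self_add
          · exact le_add_self
  have hct : c ≠ ⊤ := by
    have h := ((hφc.norm.rpow_const (fun _ => Or.inr hp0.le)).integrable_of_hasCompactSupport
      (μ := volume)
      (hφs.norm.comp_left (g := fun r : ℝ => r ^ p) (Real.zero_rpow hp0.ne'))).2.ne
    simpa only [Real.enorm_rpow_of_nonneg (norm_nonneg _) hp0.le, enorm_norm] using h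
  rw [mul_assoc, ← ENNReal.mul_le_iff_le_inv hc0 hct]
  rw [mul_comm, ← hL]
  refine gns.trans ?_
  rw [mul_assoc, ← ENNReal.mul_rpow_of_nonneg _ _ hp0.le]
  gcongr

/-- Sobolev embedding `W^{1,1} ⊆ L^{1+1/d}` without support condition, from `sobolev_compact` by
cutoff at scale `k → ∞` and Fatou's lemma. -/
lemma sobolev (hd : 0 < Module.finrank ℝ E) :
    ∃ C : ENNReal, C ≠ ⊤ ∧ ∀ u : E → ℝ, ContDiff ℝ 1 u →
      ∫⁻ x, ‖u x‖ₑ ^ (1 + (Module.finrank ℝ E : ℝ)⁻¹) ∂μ ≤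
        C * (∫⁻ x, ‖fderiv ℝ u x‖ₑ ∂μ + ∫⁻ x, ‖u x‖ₑ ∂μ) ^
          (1 + (Module.finrank ℝ E : ℝ)⁻¹) := by
  obtain ⟨C, hC, H⟩ := sobolev_compact μ hd
  set p : ℝ := 1 + (Module.finrank ℝ E : ℝ)⁻¹ with hp
  have hp0 : 0 < p := by positivity
  let χ : ContDiffBump (0:E) := ⟨1, 2, one_pos, one_lt_two⟩
  have hχ : ContDiff ℝ 1 χ := χ.contDiff
  obtain ⟨L, hL⟩ := (hχ.continuous_fderiv one_ne_zero).bounded_above_of_compact_support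
    (χ.hasCompactSupport.fderiv (𝕜 := ℝ))
  set K : ENNReal := 2 + ENNReal.ofReal L with hK
  have hKt : K ≠ ⊤ := by simp [hK]
  refine ⟨C * K ^ p, ENNReal.mul_ne_top hC (ENNReal.rpow_ne_top_of_nonneg hp0.le hKt),
    fun u hu => ?_⟩
  set D := ∫⁻ x, ‖fderiv ℝ u x‖ₑ ∂μ + ∫⁻ x, ‖u x‖ₑ ∂μ with hD
  have huc := hu.continuous
  have huc' := hu.continuous_fderiv one_ne_zero
  let r : ℕ → ℝ := fun k => ((k : ℝ) + 1)⁻¹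
  have hr0 : ∀ k, 0 < r k := fun k => by positivity
  have hr1 : ∀ k, r k ≤ 1 := fun k => inv_le_one_of_one_le₀ (by simp)
  let w : ℕ → E → ℝ := fun k x => χ (r k • x)
  have hw : ∀ k, ContDiff ℝ 1 (w k) := fun k => hχ.comp (contDiff_const_smul _)
  have hws : ∀ k, HasCompactSupport (w k) := fun k =>
    χ.hasCompactSupport.comp_smul (hr0 k).ne'
  have hw1 : ∀ k x, ‖w k x‖ₑ ≤ 1 := fun k x => by
    rw [← ofReal_norm, Real.norm_of_nonneg χ.nonneg, ENNReal.ofReal_le_one]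
    exact χ.le_one
  have hw2 : ∀ k x, ‖fderiv ℝ (w k) x‖ₑ ≤ ENNReal.ofReal L := fun k x => by
    have : fderiv ℝ (w k) x = r k • fderiv ℝ χ (r k • x) := fderiv_comp_smul ..
    rw [← ofReal_norm, this, norm_smul, Real.norm_of_nonneg (hr0 k).le]
    refine ENNReal.ofReal_le_ofReal ?_
    exact (mul_le_of_le_one_left (norm_nonneg _) (hr1 k)).trans (hL _)
  have hk : ∀ k, ∫⁻ x, ‖u x * w k x‖ₑ ^ p ∂μ ≤ C * K ^ p * D ^ p := fun k => by
    refine (H (fun x => u x * w k x) (hu.mul (hw k)) (hws k).mul_left).trans ?_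
    rw [mul_assoc, ← ENNReal.mul_rpow_of_nonneg _ _ hp0.le]
    gcongr
    calc _ ≤ (∫⁻ x, (‖fderiv ℝ u x‖ₑ + ‖u x‖ₑ * ENNReal.ofReal L) ∂μ) + ∫⁻ x, ‖u x‖ₑ ∂μ := by
          gcongr with x x
          · refine (enorm_fderiv_mul_le hu (hw k) x).trans ?_
            gcongr
            · exact mul_le_of_le_one_right' (hw1 k x)
            · exact hw2 k x
          · rw [enorm_mul]
            exact mul_le_of_le_one_right' (hw1 k x)
      _ = ∫⁻ x, ‖fderiv ℝ u x‖ₑ ∂μ + (1 + ENNReal.ofReal L) * ∫⁻ x, ‖u x‖ₑ ∂μ := by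
          rw [lintegral_add_left (by fun_prop), lintegral_mul_const _ (by fun_prop)]
          ring
      _ ≤ K * D := by
          rw [hD, mul_add]
          gcongr
          · exact le_mul_of_one_le_left' (by rw [hK]; exact le_add_right one_le_two)
          · rw [hK]; gcongr; exact one_le_two
  have hlim : ∀ x, Tendsto (fun k => ‖u x * w k x‖ₑ ^ p) atTop (nhds (‖u x‖ₑ ^ p)) := fun x => by
    refine tendsto_const_nhds.congr' ?_
    filter_upwards [eventually_ge_atTop ⌈‖x‖⌉₊] with k hk
    have : w k x = 1 := by
      refine χ.one_of_mem_closedBall ?_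
      rw [mem_closedBall_zero_iff, norm_smul, Real.norm_of_nonneg (hr0 k).le]
      have : ‖x‖ ≤ k := Nat.ceil_le.1 hk
      show (k + 1 : ℝ)⁻¹ * ‖x‖ ≤ 1
      rw [inv_mul_le_one₀ (by positivity)]
      linarith
    rw [this, mul_one]
  calc ∫⁻ x, ‖u x‖ₑ ^ p ∂μ
      = ∫⁻ x, liminf (fun k => ‖u x * w k x‖ₑ ^ p) atTop ∂μ :=
        lintegral_congr fun x => (hlim x).liminf_eq.symm
    _ ≤ liminf (fun k => ∫⁻ x, ‖u x * w k x‖ₑ ^ p ∂μ) atTop :=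
        lintegral_liminf_le fun k => by
          have := (hw k).continuous
          fun_prop
    _ ≤ C * K ^ p * D ^ p :=
        liminf_le_of_le (by isBoundedDefault) fun b hb => by
          obtain ⟨k, hk'⟩ := hb.exists
          exact hk'.trans (hk k)

/-! ### Weighted Poincaré inequality and logarithmic bound -/

lemma Reg.sub_const {f : E → ℝ} (hf : Reg f) (m : ℝ) : Reg (fun x => f x - m) where
  contDiff := hf.contDiff.sub contDiff_const
  bdd := by
    obtain ⟨M, hM⟩ := hf.bdd
    exact ⟨M + |m|, fun x => (abs_sub _ _).trans (by gcongr; exact hM x)⟩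
  gbdd := by simpa [fderiv_sub_const] using hf.gbdd

/-- Weighted Poincaré inequality: outside a large ball the Hardy inequality controls
`∫ (f - m)² e^{-U}` up to half of itself, and inside the ball the weight is comparable to `1`. -/
lemma poincare : ∃ C : ℝ, 0 ≤ C ∧ ∀ f : E → ℝ, Reg f → ∃ m : ℝ,
    ∫ x, (f x - m) ^ 2 * wt x ∂μ ≤ C * ∫ x, U x * ‖fderiv ℝ f x‖ ^ 2 * wt x ∂μ := by
  set d := Module.finrank ℝ E with hd
  -- With this radius the coefficient `2 (d + 1)` of `Reg.hardy`, divided by `R`, equals `1/2`.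
  set R : ℝ := 4 * (d + 1) with hR
  have hR0 : 0 < R := by positivity
  set A : ℝ := (2 * R) ^ 2 * 2 ^ d with hA
  have hA0 : 0 ≤ A := by positivity
  refine ⟨2 * (A * Real.exp (1 + R)) + 8 / R, by positivity, fun f hf => ?_⟩
  obtain ⟨m, hm⟩ := poincare_ball μ hf.contDiff hR0
  refine ⟨m, ?_⟩
  have hg := hf.sub_const m
  set D := ∫ x, U x * ‖fderiv ℝ f x‖ ^ 2 * wt x ∂μ with hD
  have hardy := hg.hardy μ
  simp only [fderiv_sub_const] at hardy
  rw [← hD, ← hd] at hardy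
  set B := Metric.ball (0:E) R with hBdef
  have hB : MeasurableSet B := Metric.isOpen_ball.measurableSet
  have hcf := hf.contDiff.continuous_fderiv one_ne_zero
  have hc := hf.contDiff.continuous
  have hInt : ∀ h : E → ℝ, Continuous h → IntegrableOn h B μ := fun h hh =>
    (hh.continuousOn.integrableOn_compact (isCompact_closedBall (0:E) R)).mono_set
      Metric.ball_subset_closedBall
  have hball : ∫ x in B, (f x - m) ^ 2 ∂μ ≤ A * ∫ x in B, ‖fderiv ℝ f x‖ ^ 2 ∂μ := by
    have e : ∀ h : E → ℝ, Continuous h →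
        ∫⁻ x in B, ‖h x‖ₑ ^ 2 ∂μ = ENNReal.ofReal (∫ x in B, h x ^ 2 ∂μ) := fun h hh => by
      rw [ofReal_integral_eq_lintegral_ofReal (hInt (fun x => h x ^ 2) (hh.pow 2))
        (ae_of_all _ fun x => sq_nonneg _)]
      refine lintegral_congr fun x => ?_
      rw [← enorm_pow, Real.enorm_of_nonneg (sq_nonneg _)]
    have e2 := e _ hcf.norm
    simp only [enorm_norm] at e2
    rw [e (fun x => f x - m) (by fun_prop), e2, ← ENNReal.ofReal_mul hA0] at hm
    exact (ENNReal.ofReal_le_ofReal_iff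
      (mul_nonneg hA0 (integral_nonneg fun x => by positivity))).1 hm
  have hgrad : ∫ x in B, ‖fderiv ℝ f x‖ ^ 2 ∂μ ≤ Real.exp (1 + R) * D := by
    rw [hD, ← integral_const_mul]
    refine (setIntegral_mono_on (hInt _ (by fun_prop))
      (((hf.integrable_grad μ).const_mul _).integrableOn) hB fun x hx => ?_).trans
      (setIntegral_le_integral ((hf.integrable_grad μ).const_mul _) (ae_of_all _ fun x => ?_))
    · have h1 : 1 ≤ Real.exp (1 + R) * wt x := by
        rw [wt, ← Real.exp_add, Real.one_le_exp_iff]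
        have := U_le x
        rw [hBdef, mem_ball_zero_iff] at hx
        linarith
      have h2 := one_le_U x
      have h3 := one_le_mul_of_one_le_of_one_le h1 h2
      nlinarith [sq_nonneg ‖fderiv ℝ f x‖]
    · have := U_pos x
      have := wt_pos x
      simp only [Pi.zero_apply]
      positivity
  have hsplit : ∫ x, (f x - m) ^ 2 * wt x ∂μ ≤ ∫ x in B, (f x - m) ^ 2 ∂μ +
      R⁻¹ * ∫ x, U x * (f x - m) ^ 2 * wt x ∂μ := by
    have i1 : Integrable (B.indicator fun x => (f x - m) ^ 2) μ :=
      (integrable_indicator_iff hB).2 (hInt _ (by fun_prop))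
    have i2 := (hg.integrable_U_sq μ).const_mul R⁻¹
    rw [← integral_const_mul, ← integral_indicator hB, ← integral_add i1 i2]
    refine integral_mono (hg.integrable_sq μ) (i1.add i2) fun x => ?_
    have hw := wt_pos x
    have hU := U_pos x
    by_cases hx : x ∈ B
    · rw [indicator_of_mem hx]
      have h1 : wt x ≤ 1 := by
        rw [wt, Real.exp_le_one_iff]; linarith
      have h2 : 0 ≤ R⁻¹ * (U x * (f x - m) ^ 2 * wt x) := by positivity
      nlinarith [sq_nonneg (f x - m)]
    · rw [indicator_of_notMem hx, zero_add]
      have h1 : 1 ≤ R⁻¹ * U x := by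
        rw [hBdef, mem_ball_zero_iff, not_lt] at hx
        rw [le_inv_mul_iff₀ hR0, mul_one]
        exact hx.trans (norm_le_U x)
      have h2 : 0 ≤ (f x - m) ^ 2 * wt x := by positivity
      calc (f x - m) ^ 2 * wt x ≤ (R⁻¹ * U x) * ((f x - m) ^ 2 * wt x) :=
            le_mul_of_one_le_left h2 h1
        _ = _ := by ring
  have h5 := mul_le_mul_of_nonneg_left hardy (inv_nonneg.2 hR0.le)
  have h6 : R⁻¹ * (2 * (d + 1)) = 1 / 2 := by rw [hR]; field_simp; norm_num
  have h7 := mul_le_mul_of_nonneg_left hgrad hA0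
  have h8 : R⁻¹ * (2 * (↑d + 1) * ∫ x, (f x - m) ^ 2 * wt x ∂μ + 4 * D) =
      1 / 2 * ∫ x, (f x - m) ^ 2 * wt x ∂μ + 4 * D / R := by
    rw [mul_add, ← mul_assoc, h6]; ring
  rw [h8] at h5
  have h9 : (2 * (A * Real.exp (1 + R)) + 8 / R) * D =
    2 * (A * (Real.exp (1 + R) * D)) + 2 * (4 * D / R) := by ring
  rw [h9]
  linarith

/-- With `w = g² e^{-U}` one has `log (1 + g²) ≤ log (1 + w) + U`. The term with `U` is bounded by the
Hardy inequality, and `w log (1 + w) ≤ d w^{1+1/d}` is bounded by the Sobolev embedding for `w`. -/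
lemma log_bound_one (hd : 0 < Module.finrank ℝ E) (K : ℝ) :
    ∃ C : ℝ, ∀ g : E → ℝ, Reg g → ∫ x, g x ^ 2 * wt x ∂μ ≤ K →
      ∫ x, U x * ‖fderiv ℝ g x‖ ^ 2 * wt x ∂μ ≤ 1 →
      Integrable (fun x => g x ^ 2 * Real.log (1 + g x ^ 2) * wt x) μ ∧
      ∫ x, g x ^ 2 * Real.log (1 + g x ^ 2) * wt x ∂μ ≤ C := by
  obtain ⟨S, hS, H⟩ := sobolev μ hd
  set d := Module.finrank ℝ E with hdd
  set p : ℝ := 1 + (d : ℝ)⁻¹ with hp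
  have hd' : (0:ℝ) < d := by exact_mod_cast hd
  have hp0 : 0 < p := by positivity
  set J : ℝ := 2 * (d + 1) * K + 4 with hJ
  refine ⟨J + d * (S.toReal * (2 * J + 1 + K) ^ p), fun g hg h1 h2 => ?_⟩
  have hU1 : ∫ x, U x * g x ^ 2 * wt x ∂μ ≤ J := by
    refine (hg.hardy μ).trans ?_
    rw [hJ, ← hdd]
    gcongr
    linarith
  have hU0 : 0 ≤ ∫ x, U x * g x ^ 2 * wt x ∂μ :=
    integral_nonneg fun x => by
      have := U_pos x
      have := wt_pos x
      simp only [Pi.zero_apply]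
      positivity
  have hK0 : 0 ≤ ∫ x, g x ^ 2 * wt x ∂μ :=
    integral_nonneg fun x => by
      have := wt_pos x
      simp only [Pi.zero_apply]
      positivity
  have hM0 : 0 ≤ 2 * J + 1 + K := by linarith
  have hc := hg.contDiff.continuous
  have hcw := hg.contDiff_w.continuous
  have hw0 : ∀ x, 0 ≤ g x ^ 2 * wt x := fun x => mul_nonneg (sq_nonneg _) (wt_pos x).le
  have hgrad : ∫⁻ x, ‖fderiv ℝ (fun x => g x ^ 2 * wt x) x‖ₑ ∂μ ≤ ENNReal.ofReal (2 * J + 1) := by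
    calc _ ≤ ∫⁻ x, ENNReal.ofReal (U x * ((2 * g x ^ 2 + ‖fderiv ℝ g x‖ ^ 2) * wt x)) ∂μ := by
          refine lintegral_mono fun x => ?_
          rw [← ofReal_norm]
          refine ENNReal.ofReal_le_ofReal ((hg.norm_fderiv_w_le x).trans ?_)
          have := wt_pos x
          exact le_mul_of_one_le_left (by positivity) (one_le_U x)
      _ = ENNReal.ofReal (∫ x, U x * ((2 * g x ^ 2 + ‖fderiv ℝ g x‖ ^ 2) * wt x) ∂μ) := by
          rw [ofReal_integral_eq_lintegral_ofReal (hg.integrable_w_bound μ)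
            (ae_of_all _ fun x => ?_)]
          have := wt_pos x
          have := U_pos x
          simp only [Pi.zero_apply]
          positivity
      _ ≤ _ := by
          refine ENNReal.ofReal_le_ofReal ?_
          have e : ∀ x, U x * ((2 * g x ^ 2 + ‖fderiv ℝ g x‖ ^ 2) * wt x) =
            2 * (U x * g x ^ 2 * wt x) + U x * ‖fderiv ℝ g x‖ ^ 2 * wt x := fun x => by ring
          simp_rw [e]
          rw [integral_add ((hg.integrable_U_sq μ).const_mul 2) (hg.integrable_grad μ),
            integral_const_mul]
          linarith
  have hInt : ∫⁻ x, ‖g x ^ 2 * wt x‖ₑ ∂μ ≤ ENNReal.ofReal K := by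
    have : ∫⁻ x, ‖g x ^ 2 * wt x‖ₑ ∂μ = ENNReal.ofReal (∫ x, g x ^ 2 * wt x ∂μ) := by
      rw [ofReal_integral_eq_lintegral_ofReal (hg.integrable_sq μ) (ae_of_all _ hw0)]
      exact lintegral_congr fun x => Real.enorm_of_nonneg (hw0 x)
    rw [this]
    exact ENNReal.ofReal_le_ofReal h1
  have hLp : ∫⁻ x, ‖(g x ^ 2 * wt x) ^ p‖ₑ ∂μ ≤
      ENNReal.ofReal (S.toReal * (2 * J + 1 + K) ^ p) := by
    simp_rw [fun x => Real.enorm_rpow_of_nonneg (hw0 x) hp0.le]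
    refine (H _ hg.contDiff_w).trans ?_
    rw [ENNReal.ofReal_mul ENNReal.toReal_nonneg, ENNReal.ofReal_toReal hS,
      ← ENNReal.ofReal_rpow_of_nonneg hM0 hp0.le,
      ENNReal.ofReal_add (p := 2 * J + 1) (by linarith) (by linarith)]
    gcongr
  have iLp : Integrable (fun x => (g x ^ 2 * wt x) ^ p) μ :=
    ⟨(hcw.rpow_const fun _ => Or.inr hp0.le).aestronglyMeasurable,
      lt_of_le_of_lt hLp ENNReal.ofReal_lt_top⟩
  have bLp : ∫ x, (g x ^ 2 * wt x) ^ p ∂μ ≤ S.toReal * (2 * J + 1 + K) ^ p := by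
    rw [← ENNReal.ofReal_le_ofReal_iff (by positivity),
      ofReal_integral_eq_lintegral_ofReal iLp
        (ae_of_all _ fun x => Real.rpow_nonneg (hw0 x) _)]
    refine le_of_eq_of_le (lintegral_congr fun x => ?_) hLp
    rw [Real.enorm_of_nonneg (Real.rpow_nonneg (hw0 x) _)]
  have hpt : ∀ x, g x ^ 2 * Real.log (1 + g x ^ 2) * wt x ≤
      U x * g x ^ 2 * wt x + d * (g x ^ 2 * wt x) ^ p := fun x => by
    set w := g x ^ 2 * wt x with hw
    have hwx : 0 ≤ w := hw0 x
    have a1 : Real.log (1 + g x ^ 2) ≤ Real.log (1 + w) + U x := by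
      rw [← Real.log_exp (U x), ← Real.log_mul (by positivity) (Real.exp_pos _).ne']
      refine Real.log_le_log (by positivity) ?_
      have e : w * Real.exp (U x) = g x ^ 2 := by
        rw [hw, wt, mul_assoc, ← Real.exp_add]; simp
      have : 1 ≤ Real.exp (U x) := Real.one_le_exp (U_pos x).le
      nlinarith
    have a2 : Real.log (1 + w) ≤ d * w ^ (d : ℝ)⁻¹ := by
      have b1 : Real.log (1 + w) = d * Real.log ((1 + w) ^ (d : ℝ)⁻¹) := by
        rw [Real.log_rpow (by positivity)]; field_simp
      rw [b1]
      gcongr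
      have b2 : (1 + w) ^ (d : ℝ)⁻¹ ≤ 1 ^ (d : ℝ)⁻¹ + w ^ (d : ℝ)⁻¹ :=
        Real.rpow_add_le_add_rpow zero_le_one hwx (by positivity)
          (inv_le_one_of_one_le₀ (by exact_mod_cast hd))
      rw [Real.one_rpow] at b2
      have b3 := Real.log_le_sub_one_of_pos (show 0 < (1 + w) ^ (d : ℝ)⁻¹ by positivity)
      linarith
    have a3 : w ^ p = w * w ^ (d : ℝ)⁻¹ := by
      rw [hp, Real.rpow_add_of_nonneg hwx zero_le_one (by positivity), Real.rpow_one]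
    rw [a3]
    calc g x ^ 2 * Real.log (1 + g x ^ 2) * wt x = w * Real.log (1 + g x ^ 2) := by rw [hw]; ring
      _ ≤ w * (d * w ^ (d : ℝ)⁻¹ + U x) := by gcongr; linarith
      _ = _ := by rw [hw]; ring
  have iR := (hg.integrable_U_sq μ).add (iLp.const_mul d)
  have iL : Integrable (fun x => g x ^ 2 * Real.log (1 + g x ^ 2) * wt x) μ := by
    refine iR.mono' ?_ (ae_of_all _ fun x => ?_)
    · have : Continuous fun x => Real.log (1 + g x ^ 2) :=
        Continuous.log (by fun_prop) fun x => (by positivity : (0:ℝ) < 1 + g x ^ 2).ne'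
      exact (((hc.pow 2).mul this).mul contDiff_wt.continuous).aestronglyMeasurable
    · have h3 := Real.log_nonneg (show 1 ≤ 1 + g x ^ 2 by nlinarith [sq_nonneg (g x)])
      rw [Real.norm_of_nonneg (mul_nonneg (mul_nonneg (sq_nonneg _) h3) (wt_pos x).le)]
      exact hpt x
  refine ⟨iL, (integral_mono iL iR hpt).trans ?_⟩
  rw [integral_add' (hg.integrable_U_sq μ) (iLp.const_mul d), integral_const_mul]
  gcongr

/-- The homogeneous form of `log_bound_one`, obtained by applying it to `g / √s`. -/
lemma log_bound (hd : 0 < Module.finrank ℝ E) (K : ℝ) :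
    ∃ C : ℝ, ∀ g : E → ℝ, Reg g → ∀ s : ℝ, 0 < s → ∫ x, g x ^ 2 * wt x ∂μ ≤ K * s →
      ∫ x, U x * ‖fderiv ℝ g x‖ ^ 2 * wt x ∂μ ≤ s →
      Integrable (fun x => g x ^ 2 * Real.log (1 + g x ^ 2 / s) * wt x) μ ∧
      ∫ x, g x ^ 2 * Real.log (1 + g x ^ 2 / s) * wt x ∂μ ≤ C * s := by
  obtain ⟨C, H⟩ := log_bound_one μ hd K
  refine ⟨C, fun g hg s hs h1 h2 => ?_⟩
  set c : ℝ := (√s)⁻¹ with hc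
  have hcs : c ^ 2 = s⁻¹ := by rw [hc, inv_pow, Real.sq_sqrt hs.le]
  have hfd : ∀ x, fderiv ℝ (fun x => c * g x) x = c • fderiv ℝ g x := fun x =>
    fderiv_const_mul (hg.contDiff.differentiable one_ne_zero x) c
  have hg' : Reg (fun x => c * g x) := by
    refine ⟨contDiff_const.mul hg.contDiff, ?_, ?_⟩
    · obtain ⟨M, hM⟩ := hg.bdd
      exact ⟨|c| * M, fun x => by rw [abs_mul]; gcongr; exact hM x⟩
    · obtain ⟨M, hM⟩ := hg.gbdd
      exact ⟨‖c‖ * M, fun x => by rw [hfd, norm_smul]; gcongr; exact hM x⟩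
  have e1 : ∀ x, (c * g x) ^ 2 * wt x = s⁻¹ * (g x ^ 2 * wt x) := fun x => by
    rw [mul_pow, hcs]; ring
  have e2 : ∀ x, U x * ‖fderiv ℝ (fun x => c * g x) x‖ ^ 2 * wt x =
      s⁻¹ * (U x * ‖fderiv ℝ g x‖ ^ 2 * wt x) := fun x => by
    rw [hfd, norm_smul, mul_pow, Real.norm_eq_abs, sq_abs, hcs]; ring
  have e3 : ∀ x, (c * g x) ^ 2 * Real.log (1 + (c * g x) ^ 2) * wt x =
      s⁻¹ * (g x ^ 2 * Real.log (1 + g x ^ 2 / s) * wt x) := fun x => by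
    rw [mul_pow, hcs, inv_mul_eq_div]; ring
  obtain ⟨i, b⟩ := H _ hg' (by
      simp_rw [e1]
      rw [integral_const_mul, inv_mul_le_iff₀ hs, mul_comm]; exact h1) (by
      simp_rw [e2]
      rw [integral_const_mul, inv_mul_le_iff₀ hs, mul_one]; exact h2)
  simp_rw [e3] at i b
  rw [integral_const_mul, inv_mul_le_iff₀ hs, mul_comm] at b
  exact ⟨(integrable_const_mul_iff (isUnit_iff_ne_zero.2 (inv_pos.2 hs).ne') _).1 i, b⟩

/-- The integrand `a log (a / t) - a + t` with `a = (m + g)²` and `t = m² + s`. It is quadratic in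
`a - t` when `g² ≤ t`, and otherwise `a ≤ 4 g²`, so that the logarithm is bounded by the one of
`g² / s`. -/
lemma pointwise_bound (m g s : ℝ) (hs : 0 < s) :
    (m + g) ^ 2 * Real.log ((m + g) ^ 2) - (m + g) ^ 2 * Real.log (m ^ 2 + s) - (m + g) ^ 2 +
      (m ^ 2 + s) ≤ 23 * g ^ 2 + 3 * s + 4 * (g ^ 2 * Real.log (1 + g ^ 2 / s)) := by
  set t := m ^ 2 + s with ht
  set a := (m + g) ^ 2 with ha
  have ht0 : 0 < t := by positivity
  have ha0 : 0 ≤ a := sq_nonneg _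
  have hL0 : 0 ≤ Real.log (1 + g ^ 2 / s) :=
    Real.log_nonneg (by have : 0 ≤ g ^ 2 / s := by positivity
                        linarith)
  rcases le_or_gt (g ^ 2) t with h | h
  · have h1 : a * Real.log a - a * Real.log t ≤ a * (a / t - 1) := by
      rcases ha0.eq_or_lt with h0 | h0
      · simp [← h0]
      · rw [← mul_sub, ← Real.log_div h0.ne' ht0.ne']
        gcongr
        exact Real.log_le_sub_one_of_pos (by positivity)
    have h2 : a * (a / t - 1) - a + t = (a - t) ^ 2 / t := by field_simp; ring
    have h3 : (a - t) ^ 2 / t ≤ 15 * g ^ 2 + 3 * s := by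
      rw [div_le_iff₀ ht0]
      have e : a - t = 2 * m * g + g ^ 2 - s := by rw [ha, ht]; ring
      rw [e]
      have k1 : (2 * m * g + g ^ 2 - s) ^ 2 ≤ 3 * (4 * (m ^ 2 * g ^ 2) + g ^ 2 * g ^ 2 + s * s) := by
        nlinarith [sq_nonneg (2 * m * g - g ^ 2), sq_nonneg (2 * m * g + s),
          sq_nonneg (g ^ 2 + s)]
      have k2 : m ^ 2 * g ^ 2 ≤ t * g ^ 2 := by gcongr; linarith
      have k3 : g ^ 2 * g ^ 2 ≤ t * g ^ 2 := by gcongr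
      have k4 : s * s ≤ t * s := by gcongr; nlinarith
      nlinarith
    have h4 : 0 ≤ g ^ 2 * Real.log (1 + g ^ 2 / s) := by positivity
    nlinarith [sq_nonneg g]
  · have hg0 : 0 < g ^ 2 := ht0.trans h
    have hst : s ≤ t := by rw [ht]; nlinarith
    have ha4 : a ≤ 4 * g ^ 2 := by
      rw [ha]; nlinarith [sq_nonneg (m - g)]
    have hL : Real.log (4 * g ^ 2) - Real.log s ≤ 3 + Real.log (1 + g ^ 2 / s) := by
      rw [← Real.log_div (by positivity) hs.ne', mul_div_assoc,
        Real.log_mul (by norm_num) (by positivity)]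
      have := Real.log_le_sub_one_of_pos (show (0:ℝ) < 4 by norm_num)
      have := Real.log_le_log (show 0 < g ^ 2 / s by positivity)
        (show g ^ 2 / s ≤ 1 + g ^ 2 / s by linarith)
      linarith
    have h1 : a * Real.log a - a * Real.log t ≤ 4 * g ^ 2 * (3 + Real.log (1 + g ^ 2 / s)) := by
      rcases ha0.eq_or_lt with h0 | h0
      · rw [← h0]; simp only [zero_mul, sub_zero]; positivity
      · rw [← mul_sub]
        have k1 := Real.log_le_log h0 ha4
        have k2 := Real.log_le_log hs hst
        calc a * (Real.log a - Real.log t) ≤ a * (3 + Real.log (1 + g ^ 2 / s)) := by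
              gcongr; linarith
          _ ≤ _ := by gcongr
    nlinarith

/-! ### Entropy -/

lemma phi_nonneg {A t : ℝ} (hA : 0 ≤ A) (ht : 0 < t) :
    0 ≤ A * Real.log A - A * Real.log t - A + t := by
  rcases hA.eq_or_lt with rfl | hA
  · simpa using ht.le
  · have h := Real.log_le_sub_one_of_pos (div_pos ht hA)
    rw [Real.log_div ht.ne' hA.ne'] at h
    have h2 := mul_le_mul_of_nonneg_left h hA.le
    have h3 : A * (t / A - 1) = t - A := by field_simp
    rw [h3] at h2
    linarith

/-- Half of the variational formula for the entropy: replacing `log ∫ h` by `log t` costs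
`A log A - A log t - A + t ≥ 0` with `A = ∫ h`. -/
lemma entropy_le {α : Type*} [MeasurableSpace α] (ν : Measure α) [IsProbabilityMeasure ν]
    {h : α → ℝ} (h0 : ∀ x, 0 ≤ h x) (h1 : Integrable h ν)
    (h2 : Integrable (fun x => h x * Real.log (h x)) ν) {t : ℝ} (ht : 0 < t) :
    entropy ν h ≤ ∫ x, (h x * Real.log (h x) - h x * Real.log t - h x + t) ∂ν := by
  have e : ∫ x, (h x * Real.log (h x) - h x * Real.log t - h x + t) ∂ν =
      ∫ x, h x * Real.log (h x) ∂ν - (∫ x, h x ∂ν) * Real.log t - ∫ x, h x ∂ν + t := by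
    have i3 : Integrable (fun x => h x * Real.log t) ν := h1.mul_const _
    have i4 : Integrable (fun x => h x * Real.log (h x) - h x * Real.log t) ν := h2.sub i3
    have i5 : Integrable (fun x => h x * Real.log (h x) - h x * Real.log t - h x) ν := i4.sub h1
    rw [integral_add i5 (integrable_const t), integral_sub i4 h1, integral_sub h2 i3,
      integral_mul_const]
    simp
  have := phi_nonneg (integral_nonneg (μ := ν) h0) ht
  rw [e, entropy]
  linarith

/-- The logarithmic Sobolev inequality before normalization: the integrand of `entropy_le` with
`h = f²` and `t = m² + s`, where `m` is the centring constant of the Poincaré inequality. -/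
lemma phi_bound (hd : 0 < Module.finrank ℝ E) : ∃ C : ℝ, ∀ f : E → ℝ, Reg f → ∃ m : ℝ,
    ∀ s : ℝ, 0 < s → ∫ x, U x * ‖fderiv ℝ f x‖ ^ 2 * wt x ∂μ ≤ s →
      ∫ x, (f x ^ 2 * Real.log (f x ^ 2) - f x ^ 2 * Real.log (m ^ 2 + s) - f x ^ 2 +
        (m ^ 2 + s)) * Real.exp (-‖x‖) ∂μ ≤ C * s := by
  obtain ⟨K, hK0, hK⟩ := poincare (E := E) μ
  obtain ⟨L, hL⟩ := log_bound (E := E) μ hd K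
  have iW : Integrable (wt : E → ℝ) μ := by
    simpa using integrable_wt (E := E) μ (h := fun _ => 1) aestronglyMeasurable_const 0 1
      (fun x => by simp)
  set W := ∫ x, wt x ∂μ with hW
  refine ⟨Real.exp 1 * (23 * K + 3 * W + 4 * L), fun f hf => ?_⟩
  obtain ⟨m, hm⟩ := hK f hf
  refine ⟨m, fun s hs hD => ?_⟩
  have hg := hf.sub_const m
  have hm' : ∫ x, (f x - m) ^ 2 * wt x ∂μ ≤ K * s := hm.trans (by gcongr)
  obtain ⟨iL, bL⟩ := hL _ hg s hs hm' (by simpa only [fderiv_sub_const] using hD)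
  have i1 := (hg.integrable_sq μ).const_mul 23
  have i2 := iW.const_mul (3 * s)
  have i3 := iL.const_mul 4
  have hpt : ∀ x, (f x ^ 2 * Real.log (f x ^ 2) - f x ^ 2 * Real.log (m ^ 2 + s) - f x ^ 2 +
        (m ^ 2 + s)) * Real.exp (-‖x‖) ≤ Real.exp 1 * (23 * ((f x - m) ^ 2 * wt x) +
        3 * s * wt x + 4 * ((f x - m) ^ 2 * Real.log (1 + (f x - m) ^ 2 / s) * wt x)) := fun x => by
    have a1 := phi_nonneg (sq_nonneg (f x)) (show 0 < m ^ 2 + s by positivity)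
    have a2 := pointwise_bound m (f x - m) s hs
    rw [add_sub_cancel] at a2
    calc _ ≤ _ * (Real.exp 1 * wt x) := mul_le_mul_of_nonneg_left (exp_neg_norm_le x) a1
      _ ≤ _ * (Real.exp 1 * wt x) :=
          mul_le_mul_of_nonneg_right a2 (mul_pos (Real.exp_pos 1) (wt_pos x)).le
      _ = _ := by ring
  refine (integral_mono_of_nonneg (ae_of_all _ fun x => ?_) (((i1.add i2).add i3).const_mul _)
    (ae_of_all _ hpt)).trans ?_
  · exact mul_nonneg (phi_nonneg (sq_nonneg (f x)) (by positivity)) (Real.exp_pos _).le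
  · rw [integral_const_mul, integral_add' (i1.add i2) i3, integral_add' i1 i2,
      integral_const_mul, integral_const_mul, integral_const_mul, mul_assoc (Real.exp 1)]
    refine mul_le_mul_of_nonneg_left ?_ (Real.exp_pos 1).le
    linarith

end

end WLS

/-- The exponential measure `dν = Z_n⁻¹ e^{−|x|} dx` on `ℝⁿ` satisfies the weighted
logarithmic Sobolev inequality `Ent_ν(f²) ≤ C ∫ |∇f|² (1+|x|) dν`. -/
theorem weighted_logSobolev_exponential (n : ℕ) (hn : 1 ≤ n)
    (Z : ℝ) (hZ : Z = ∫ x : EuclideanSpace ℝ (Fin n), Real.exp (-‖x‖))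
    (ν : Measure (EuclideanSpace ℝ (Fin n)))
    (hν : ν = volume.withDensity (fun x => ENNReal.ofReal (Z⁻¹ * Real.exp (-‖x‖)))) :
    ∃ C > (0:ℝ), ∀ f : EuclideanSpace ℝ (Fin n) → ℝ,
      ContDiff ℝ 1 f → (∃ M, ∀ x, |f x| ≤ M) → (∃ M, ∀ x, ‖gradient f x‖ ≤ M) →
      entropy ν (fun x => (f x) ^ 2)
        ≤ C * ∫ x, ‖gradient f x‖ ^ 2 * (1 + ‖x‖) ∂ν := by
  have iE (k : ℕ) := WLS.integrable_pow_exp (E := EuclideanSpace ℝ (Fin n)) volume k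
  have iE0 : Integrable (fun x : EuclideanSpace ℝ (Fin n) => Real.exp (-‖x‖)) := by
    simpa using iE 0
  have hZ0 : 0 < Z := by
    rw [hZ]; exact integral_exp_pos iE0
  have hρ : ∀ x : EuclideanSpace ℝ (Fin n), 0 ≤ Z⁻¹ * Real.exp (-‖x‖) := fun x => by positivity
  have hρm : Measurable fun x : EuclideanSpace ℝ (Fin n) =>
      ENNReal.ofReal (Z⁻¹ * Real.exp (-‖x‖)) := by fun_prop
  have hInt (h : EuclideanSpace ℝ (Fin n) → ℝ) :
      ∫ x, h x ∂ν = Z⁻¹ * ∫ x, h x * Real.exp (-‖x‖) := by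
    rw [hν, integral_withDensity_eq_integral_toReal_smul hρm
      (ae_of_all _ fun x => ENNReal.ofReal_lt_top), ← integral_const_mul]
    refine integral_congr_ae (ae_of_all _ fun x => ?_)
    simp only [ENNReal.toReal_ofReal (hρ x), smul_eq_mul]
    ring
  have hprob : IsProbabilityMeasure ν := by
    constructor
    rw [hν, withDensity_apply _ MeasurableSet.univ, Measure.restrict_univ,
      ← ofReal_integral_eq_lintegral_ofReal (iE0.const_mul _) (ae_of_all _ hρ),
      integral_const_mul, ← hZ, inv_mul_cancel₀ hZ0.ne', ENNReal.ofReal_one]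
  obtain ⟨C, hC⟩ := WLS.phi_bound (E := EuclideanSpace ℝ (Fin n)) volume
    (by rw [finrank_euclideanSpace_fin]; exact hn)
  refine ⟨|C| + 1, by positivity, fun f hf hb hgb => ?_⟩
  have hgrad : ∀ x, ‖gradient f x‖ = ‖fderiv ℝ f x‖ := fun x => by
    rw [gradient, LinearIsometryEquiv.norm_map]
  simp only [hgrad] at hgb ⊢
  have hR : WLS.Reg f := ⟨hf, hb, hgb⟩
  obtain ⟨m, hm⟩ := hC f hR
  have hc := hf.continuous
  have hcf := hf.continuous_fderiv one_ne_zero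
  set I := ∫ x, ‖fderiv ℝ f x‖ ^ 2 * (1 + ‖x‖) ∂ν with hI
  have hI0 : 0 ≤ I := integral_nonneg fun x => by positivity
  have hD : ∫ x, WLS.U x * ‖fderiv ℝ f x‖ ^ 2 * WLS.wt x ≤ Z * I := by
    rw [hI, hInt, mul_inv_cancel_left₀ hZ0.ne']
    refine integral_mono (hR.integrable_grad volume) ?_ fun x => ?_
    · obtain ⟨M, hM⟩ := hgb
      refine ((iE 1).const_mul (M ^ 2)).mono' (by fun_prop) (ae_of_all _ fun x => ?_)
      rw [Real.norm_of_nonneg (by positivity), pow_one, ← mul_assoc]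
      have := hM x
      gcongr
    · have := WLS.wt_pos x
      have := WLS.U_le x
      have := WLS.wt_le x
      have := WLS.U_pos x
      calc WLS.U x * ‖fderiv ℝ f x‖ ^ 2 * WLS.wt x
          ≤ (1 + ‖x‖) * ‖fderiv ℝ f x‖ ^ 2 * Real.exp (-‖x‖) := by gcongr
        _ = _ := by ring
  have hbi (φ : ℝ → ℝ) (hφ : Continuous φ) : Integrable (fun x => φ (f x)) ν := by
    obtain ⟨M, hM⟩ := hb
    obtain ⟨B, hB⟩ := (isCompact_Icc (a := -M) (b := M)).exists_bound_of_continuousOn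
      hφ.continuousOn
    exact (integrable_const B).mono' (hφ.comp hc).aestronglyMeasurable
      (ae_of_all _ fun x => hB _ (abs_le.1 (hM x)))
  have key : ∀ s, 0 < s → Z * I ≤ s → entropy ν (fun x => f x ^ 2) ≤ Z⁻¹ * (C * s) := by
    intro s hs hIs
    refine (WLS.entropy_le ν (fun x => sq_nonneg (f x)) (hbi (fun y => y ^ 2) (by fun_prop))
      (hbi (fun y => y ^ 2 * Real.log (y ^ 2)) (Real.continuous_mul_log.comp (continuous_pow 2)))
      (show 0 < m ^ 2 + s by positivity)).trans ?_
    rw [hInt]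
    exact mul_le_mul_of_nonneg_left (hm s hs (hD.trans hIs)) (inv_nonneg.2 hZ0.le)
  -- `key` needs `s > 0`, whereas `Z * I` vanishes for constant `f`; hence the limit `s ↓ Z * I`.
  refine le_of_forall_pos_le_add fun δ hδ => ?_
  have hC1 : 0 < |C| + 1 := by positivity
  have hε : 0 < Z * (δ / (|C| + 1)) := by positivity
  refine (key (Z * I + Z * (δ / (|C| + 1))) (by positivity) (by linarith)).trans ?_
  calc Z⁻¹ * (C * (Z * I + Z * (δ / (|C| + 1)))) = C * (I + δ / (|C| + 1)) := by
        field_simp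
    _ ≤ (|C| + 1) * (I + δ / (|C| + 1)) := by
        gcongr
        linarith [le_abs_self C]
    _ = _ := by field_simp
end

section
/- Let n ≥ 1 and a ∈ (0,1), and set W(x) = e^{a|x|} for x ∈ ℝ^n \ {0}. Then for every x ≠ 0, ΔW(x) − (x/|x|)·∇W(x) = a((n−1)/|x| + a − 1) e^{a|x|}; consequently, for every λ ∈ (0, a(1−a)) there exists R ≥ 1 such that ΔW(x) − (x/|x|)·∇W(x) ≤ −λ W(x) for all x with |x| ≥ R. -/
/-!
Write `r = ‖x‖` and `E = exp (a r)`. Away from the origin `∇r = x / r`, so the differential of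
`W = exp (a r)` at `x` is `(a E / r) ⟪x, ·⟫`. Differentiating once more in a fixed direction `v`
gives `D²W(x)[v, v] = (a E / r) ‖v‖² + (a² E / r² - a E / r³) ⟪x, v⟫²`. Summing over the standard
basis, with Parseval `∑ ⟪x, eᵢ⟫² = r²`, gives `ΔW = a E (n / r + a - 1 / r)`, while the drift term
is `⟪x / r, ∇W⟫ = a E`. For the inequality, divide by `E`: the claim is
`a (n - 1) / r ≤ a (1 - a) - λ`, whose right side is positive, so it holds for large `r`.
-/

open MeasureTheory Real Filter Set
open scoped RealInnerProductSpace

/-- The Laplacian of `f : ℝⁿ → ℝ`, as the trace of the second derivative. -/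
noncomputable def lap {n : ℕ} (f : EuclideanSpace ℝ (Fin n) → ℝ)
    (x : EuclideanSpace ℝ (Fin n)) : ℝ :=
  ∑ i : Fin n, iteratedFDeriv ℝ 2 f x ![EuclideanSpace.single i 1, EuclideanSpace.single i 1]

theorem hasFDerivAt_norm_of_ne {n : ℕ} {x : EuclideanSpace ℝ (Fin n)} (hx : x ≠ 0) :
    HasFDerivAt (fun y : EuclideanSpace ℝ (Fin n) => ‖y‖) (‖x‖⁻¹ • innerSL ℝ x) x := by
  have hx' : ‖x‖ ≠ 0 := norm_ne_zero_iff.mpr hx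
  have h := (hasStrictFDerivAt_norm_sq x).hasFDerivAt.sqrt (by positivity)
  simp only [Real.sqrt_sq (norm_nonneg _)] at h
  refine h.congr_fderiv ?_
  ext v
  simp
  field_simp

theorem hasFDerivAt_exp_norm {n : ℕ} (a : ℝ) {x : EuclideanSpace ℝ (Fin n)} (hx : x ≠ 0) :
    HasFDerivAt (fun y : EuclideanSpace ℝ (Fin n) => Real.exp (a * ‖y‖))
      ((a * Real.exp (a * ‖x‖) * ‖x‖⁻¹) • innerSL ℝ x) x := by
  refine ((hasFDerivAt_norm_of_ne hx).const_mul a).exp.congr_fderiv ?_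
  ext v
  simp
  ring

/-- The Hessian of `exp (a ‖·‖)` away from the origin, as a quadratic form. -/
theorem iteratedFDeriv_two_exp_norm {n : ℕ} (a : ℝ) {x : EuclideanSpace ℝ (Fin n)} (hx : x ≠ 0)
    (v : EuclideanSpace ℝ (Fin n)) :
    iteratedFDeriv ℝ 2 (fun y : EuclideanSpace ℝ (Fin n) => Real.exp (a * ‖y‖)) x ![v, v]
      = a * Real.exp (a * ‖x‖) * ‖x‖⁻¹ * ‖v‖ ^ 2
        + (a ^ 2 * Real.exp (a * ‖x‖) * ‖x‖⁻¹ ^ 2 - a * Real.exp (a * ‖x‖) * ‖x‖⁻¹ ^ 3)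
          * ⟪x, v⟫ ^ 2 := by
  have hx' : ‖x‖ ≠ 0 := norm_ne_zero_iff.mpr hx
  set W : EuclideanSpace ℝ (Fin n) → ℝ := fun y => Real.exp (a * ‖y‖) with hWdef
  have hC : ContDiffAt ℝ 2 W x := (contDiffAt_const.mul (contDiffAt_norm ℝ hx)).exp
  have hD : DifferentiableAt ℝ (fderiv ℝ W) x :=
    (hC.fderiv_right (m := 1) (by norm_num)).differentiableAt (by norm_num)
  -- `D²W(x)[v, v]` is the derivative along `v` of the scalar function `y ↦ DW(y) v`.
  have h1 : HasFDerivAt (fun y => fderiv ℝ W y v)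
      ((ContinuousLinearMap.apply ℝ ℝ v).comp (fderiv ℝ (fderiv ℝ W) x)) x :=
    (ContinuousLinearMap.apply ℝ ℝ v).hasFDerivAt.comp x hD.hasFDerivAt
  have h2 : (fun y => fderiv ℝ W y v) =ᶠ[nhds x]
      fun y => a * Real.exp (a * ‖y‖) * ‖y‖⁻¹ * ⟪y, v⟫ := by
    filter_upwards [isOpen_ne.mem_nhds hx] with y hy
    rw [(hasFDerivAt_exp_norm a hy).fderiv]
    simp
  have hinv := (hasDerivAt_inv hx').comp_hasFDerivAt x (hasFDerivAt_norm_of_ne hx)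
  have hin : HasFDerivAt (fun y : EuclideanSpace ℝ (Fin n) => ⟪y, v⟫) (innerSL ℝ v) x := by
    have he : (fun y : EuclideanSpace ℝ (Fin n) => ⟪y, v⟫) = innerSL ℝ v :=
      funext fun y => by rw [innerSL_apply_apply, real_inner_comm]
    rw [he]
    exact (innerSL ℝ v).hasFDerivAt
  have h3 := (((hasFDerivAt_exp_norm a hx).const_mul a).mul hinv).mul hin
  have h4 := congrArg (fun T : EuclideanSpace ℝ (Fin n) →L[ℝ] ℝ => T v)
    (h1.unique (h3.congr_of_eventuallyEq h2))
  rw [iteratedFDeriv_two_apply]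
  simp at h4 ⊢
  rw [h4]
  field_simp
  ring

theorem lap_exp_norm {n : ℕ} (a : ℝ) {x : EuclideanSpace ℝ (Fin n)} (hx : x ≠ 0) :
    lap (fun y : EuclideanSpace ℝ (Fin n) => Real.exp (a * ‖y‖)) x
      = a * (((n : ℝ) - 1) / ‖x‖ + a) * Real.exp (a * ‖x‖) := by
  have hx' : ‖x‖ ≠ 0 := norm_ne_zero_iff.mpr hx
  have hP : ∑ i : Fin n, ⟪x, EuclideanSpace.single i (1 : ℝ)⟫ ^ 2 = ‖x‖ ^ 2 := by
    simp [EuclideanSpace.norm_sq_eq, EuclideanSpace.inner_single_right]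
  simp only [lap, iteratedFDeriv_two_exp_norm a hx]
  rw [Finset.sum_add_distrib, ← Finset.mul_sum, ← Finset.mul_sum, hP]
  simp
  field_simp
  ring

theorem inner_gradient_exp_norm {n : ℕ} (a : ℝ) {x : EuclideanSpace ℝ (Fin n)} (hx : x ≠ 0) :
    ⟪(‖x‖⁻¹ : ℝ) • x, gradient (fun y : EuclideanSpace ℝ (Fin n) => Real.exp (a * ‖y‖)) x⟫
      = a * Real.exp (a * ‖x‖) := by
  have hx' : ‖x‖ ≠ 0 := norm_ne_zero_iff.mpr hx
  rw [real_inner_comm, gradient, InnerProductSpace.toDual_symm_apply,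
    (hasFDerivAt_exp_norm a hx).fderiv]
  simp
  field_simp

/-- Lyapunov computation for the exponential measure: with `W(x) = e^{a|x|}`, `0 < a < 1`,
one has `LW(x) = a((n−1)/|x| + a − 1)e^{a|x|}` for `x ≠ 0`, where `L = Δ − (x/|x|)·∇`;
consequently, for every `λ ∈ (0, a(1−a))` there is `R ≥ 1` with `LW ≤ −λW` on `{|x| ≥ R}`. -/
theorem lyapunov_exponential (n : ℕ) (hn : 1 ≤ n) (a : ℝ) (ha : a ∈ Set.Ioo (0:ℝ) 1)
    (W : EuclideanSpace ℝ (Fin n) → ℝ) (hW : ∀ x, W x = Real.exp (a * ‖x‖)) :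
    (∀ x : EuclideanSpace ℝ (Fin n), x ≠ 0 →
      lap W x - ⟪(‖x‖⁻¹ : ℝ) • x, gradient W x⟫
        = a * (((n : ℝ) - 1) / ‖x‖ + a - 1) * Real.exp (a * ‖x‖)) ∧
    (∀ lam ∈ Set.Ioo (0:ℝ) (a * (1 - a)), ∃ R : ℝ, 1 ≤ R ∧
      ∀ x : EuclideanSpace ℝ (Fin n), R ≤ ‖x‖ →
        lap W x - ⟪(‖x‖⁻¹ : ℝ) • x, gradient W x⟫ ≤ -lam * W x) := by
  obtain rfl : W = fun x => Real.exp (a * ‖x‖) := funext hW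
  have key : ∀ x : EuclideanSpace ℝ (Fin n), x ≠ 0 →
      lap (fun x => Real.exp (a * ‖x‖)) x
        - ⟪(‖x‖⁻¹ : ℝ) • x, gradient (fun x => Real.exp (a * ‖x‖)) x⟫
        = a * (((n : ℝ) - 1) / ‖x‖ + a - 1) * Real.exp (a * ‖x‖) := by
    intro x hx
    rw [lap_exp_norm a hx, inner_gradient_exp_norm a hx]
    ring
  refine ⟨key, fun lam hlam => ?_⟩
  have hd : 0 < a * (1 - a) - lam := sub_pos.mpr hlam.2
  refine ⟨max 1 (a * (n - 1) / (a * (1 - a) - lam)), le_max_left _ _, fun x hxR => ?_⟩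
  have hr : 0 < ‖x‖ := lt_of_lt_of_le one_pos ((le_max_left _ _).trans hxR)
  rw [key x (norm_pos_iff.mp hr)]
  have h1 := (le_max_right _ _).trans hxR
  rw [div_le_iff₀ hd, mul_comm ‖x‖, ← div_le_iff₀ hr] at h1
  refine mul_le_mul_of_nonneg_right ?_ (Real.exp_pos _).le
  have h2 : a * (((n : ℝ) - 1) / ‖x‖ + a - 1) = a * (n - 1) / ‖x‖ - a * (1 - a) := by ring
  linarith
end

section
/- Let V : ℝ^n → ℝ be a smooth function with V(x) → +∞ as |x| → ∞, and suppose there exists a ∈ (0,1) such that liminf_{|x|→∞} (a|∇V(x)|² − ΔV(x)) > 0. Then there exist constants A > 0, λ > 0, b ≥ 0, R > 0 and a smooth function W : ℝ^n → [1,∞) of the form W = e^{A(V − min V)} such that ΔW(x) − ∇V(x)·∇W(x) ≤ −λ W(x) + b·1_{B(0,R)}(x) for all x ∈ ℝ^n. -/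
/-! With `A = 1 - a` and `W = exp (A (V - m))`, the chain rule gives
`LW = A W (ΔV - (1 - A) |∇V|²) = A W (ΔV - a |∇V|²)` (`lap_exp_sub_inner`). Outside the ball of
radius `R₀` the bracket is at most `-B`, so `LW ≤ -A B W` there. On the compact closed ball the
continuous function `LW + A B W` is bounded above, which supplies `b`. The minimum `m` is attained
because `V` is continuous and tends to `+∞` at infinity.
-/

open MeasureTheory Real Filter Set
open scoped RealInnerProductSpace

/-- The squared norm of the gradient is the sum of the squared partial derivatives. -/
lemma sum_fderiv_sq {n : ℕ} (f : EuclideanSpace ℝ (Fin n) → ℝ) (x : EuclideanSpace ℝ (Fin n)) :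
    ∑ i : Fin n, fderiv ℝ f x (EuclideanSpace.single i 1) ^ 2 = ‖gradient f x‖ ^ 2 := by
  rw [EuclideanSpace.real_norm_sq_eq]
  refine Finset.sum_congr rfl fun i _ => ?_
  rw [← inner_gradient_left, EuclideanSpace.inner_single_right]
  simp

lemma continuous_lap {n : ℕ} {f : EuclideanSpace ℝ (Fin n) → ℝ}
    (hf : ContDiff ℝ (⊤ : ℕ∞) f) : Continuous (lap f) := by
  have h2 : Continuous (iteratedFDeriv ℝ 2 f) :=
    hf.continuous_iteratedFDeriv (WithTop.coe_le_coe.2 (le_top : (2 : ℕ∞) ≤ ⊤))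
  unfold lap
  fun_prop

lemma continuous_gradient {n : ℕ} {f : EuclideanSpace ℝ (Fin n) → ℝ}
    (hf : ContDiff ℝ (⊤ : ℕ∞) f) : Continuous (gradient f) := by
  have h1 : Continuous (fderiv ℝ f) := hf.continuous_fderiv (by simp)
  exact (InnerProductSpace.toDual ℝ (EuclideanSpace ℝ (Fin n))).symm.continuous.comp h1

lemma hasFDerivAt_exp_mul_sub {n : ℕ} {V : EuclideanSpace ℝ (Fin n) → ℝ}
    (hV : ContDiff ℝ (⊤ : ℕ∞) V) (A m : ℝ) (x : EuclideanSpace ℝ (Fin n)) :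
    HasFDerivAt (fun y => Real.exp (A * (V y - m)))
      ((A * Real.exp (A * (V x - m))) • fderiv ℝ V x) x := by
  have hd : HasFDerivAt V (fderiv ℝ V x) x :=
    (hV.differentiable (by simp) x).hasFDerivAt
  have h := ((hd.sub_const m).const_mul A).exp
  rwa [smul_smul, mul_comm] at h

/-- The generator `Δ - ∇V·∇` applied to `exp (A (V - m))`. -/
lemma lap_exp_sub_inner {n : ℕ} {V : EuclideanSpace ℝ (Fin n) → ℝ}
    (hV : ContDiff ℝ (⊤ : ℕ∞) V) (A m : ℝ) (x : EuclideanSpace ℝ (Fin n)) :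
    lap (fun y => Real.exp (A * (V y - m))) x
        - ⟪gradient V x, gradient (fun y => Real.exp (A * (V y - m))) x⟫
      = A * Real.exp (A * (V x - m)) * (lap V x - (1 - A) * ‖gradient V x‖ ^ 2) := by
  have hfd : fderiv ℝ (fun y => Real.exp (A * (V y - m)))
      = fun y => (A * Real.exp (A * (V y - m))) • fderiv ℝ V y :=
    funext fun y => (hasFDerivAt_exp_mul_sub hV A m y).fderiv
  have hd2 : HasFDerivAt (fderiv ℝ V) (fderiv ℝ (fderiv ℝ V) x) x :=
    ((hV.fderiv_right (m := 1) (WithTop.coe_le_coe.2 (le_top : (1 + 1 : ℕ∞) ≤ ⊤))).differentiable (by simp) x).hasFDerivAt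
  have hs : fderiv ℝ (fun y => (A * Real.exp (A * (V y - m))) • fderiv ℝ V y) x = _ :=
    (((hasFDerivAt_exp_mul_sub hV A m x).const_mul A).smul hd2).fderiv
  have hlap : lap (fun y => Real.exp (A * (V y - m))) x
      = A * Real.exp (A * (V x - m)) * (lap V x + A * ‖gradient V x‖ ^ 2) := by
    rw [← sum_fderiv_sq, lap, lap, Finset.mul_sum, ← Finset.sum_add_distrib, Finset.mul_sum]
    refine Finset.sum_congr rfl fun i _ => ?_
    rw [iteratedFDeriv_two_apply, iteratedFDeriv_two_apply, hfd, hs]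
    simp
    ring
  have hinner : ⟪gradient V x, gradient (fun y => Real.exp (A * (V y - m))) x⟫
      = A * Real.exp (A * (V x - m)) * ‖gradient V x‖ ^ 2 := by
    rw [real_inner_comm, inner_gradient_left, hfd, ← real_inner_self_eq_norm_sq,
      inner_gradient_left]
    simp
  rw [hlap, hinner]
  ring

/-- If `V → +∞` at infinity and `liminf_{|x|→∞}(a|∇V|² − ΔV) > 0` for some `a ∈ (0,1)`,
then `W = e^{A(V − min V)}` is, for a well-chosen `A > 0`, a Lyapunov function with linear
`φ` for the generator `L = Δ − ∇V·∇`: `LW ≤ −λW + b 1_{B(0,R)}`. -/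
theorem lyapunov_linear_of_liminf_condition {n : ℕ}
    (V : EuclideanSpace ℝ (Fin n) → ℝ) (hV_smooth : ContDiff ℝ (⊤ : ℕ∞) V)
    (hV_infty : Tendsto V (Filter.comap (fun x => ‖x‖) atTop) atTop)
    (a : ℝ) (ha : a ∈ Set.Ioo (0:ℝ) 1)
    (hliminf : ∃ B > (0:ℝ), ∃ R₀ > (0:ℝ), ∀ x : EuclideanSpace ℝ (Fin n),
      R₀ ≤ ‖x‖ → B ≤ a * ‖gradient V x‖ ^ 2 - lap V x) :
    ∃ A > (0:ℝ), ∃ lam > (0:ℝ), ∃ b ≥ (0:ℝ), ∃ R > (0:ℝ), ∃ m : ℝ,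
      (∀ x, m ≤ V x) ∧ (∃ x₀, V x₀ = m) ∧
      ∃ W : EuclideanSpace ℝ (Fin n) → ℝ,
        (∀ x, W x = Real.exp (A * (V x - m))) ∧
        ContDiff ℝ (⊤ : ℕ∞) W ∧ (∀ x, 1 ≤ W x) ∧
        (∀ x, lap W x - ⟪gradient V x, gradient W x⟫
            ≤ -lam * W x
              + b * (Metric.ball (0 : EuclideanSpace ℝ (Fin n)) R).indicator
                  (fun _ => (1:ℝ)) x) := by
  obtain ⟨B, hB, R₀, hR₀, hout⟩ := hliminf
  obtain ⟨x₀, hx₀⟩ : ∃ x₀, ∀ x, V x₀ ≤ V x := by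
    rw [comap_norm_atTop, Metric.cobounded_eq_cocompact] at hV_infty
    exact hV_smooth.continuous.exists_forall_le hV_infty
  have hA : 0 < 1 - a := by linarith [ha.2]
  have hcW : ContDiff ℝ (⊤ : ℕ∞) fun x => Real.exp ((1 - a) * (V x - V x₀)) := by fun_prop
  have hcont : Continuous fun x => (1 - a) * Real.exp ((1 - a) * (V x - V x₀))
      * (lap V x - (1 - (1 - a)) * ‖gradient V x‖ ^ 2)
      + (1 - a) * B * Real.exp ((1 - a) * (V x - V x₀)) := by
    have := continuous_lap hV_smooth
    have := continuous_gradient hV_smooth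
    have := hV_smooth.continuous
    fun_prop
  obtain ⟨C, hC⟩ := (isCompact_closedBall (0 : EuclideanSpace ℝ (Fin n)) R₀).bddAbove_image
    hcont.continuousOn
  refine ⟨1 - a, hA, (1 - a) * B, by positivity, max C 0, le_max_right _ _, R₀, hR₀, V x₀, hx₀,
    ⟨x₀, rfl⟩, _, fun x => rfl, hcW, fun x => ?_, fun x => ?_⟩
  · exact Real.one_le_exp (mul_nonneg hA.le (sub_nonneg.2 (hx₀ x)))
  · rw [lap_exp_sub_inner hV_smooth]
    by_cases hx : x ∈ Metric.ball (0 : EuclideanSpace ℝ (Fin n)) R₀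
    · rw [indicator_of_mem hx]
      have := hC (mem_image_of_mem _ (Metric.ball_subset_closedBall hx))
      linarith [le_max_left C 0]
    · rw [indicator_of_notMem hx]
      have h1 := hout x (by simpa using hx)
      have h2 : 0 < (1 - a) * Real.exp ((1 - a) * (V x - V x₀)) := by positivity
      nlinarith [mul_le_mul_of_nonneg_left h1 h2.le]
end

section
/- Let 1 < β ≤ 2 and let μ_β be the probability measure on ℝ^n with density dμ_β(x) = Z_β^{−1} e^{−|x|^β} dx, where |x| is the Euclidean norm and Z_β the normalizing constant. Then there exists a constant C > 0 such that for every bounded C¹ function f with bounded gradient, Ent_{μ_β}(f²) ≤ C ∫ |∇f(x)|² (1 + |x|^{2−β}) dμ_β(x). -/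
/-!
The inequality follows from a defective version of itself together with a weighted Poincaré
inequality. Write `μ = ρ dx` with `ρ = Z⁻¹ exp (-‖x‖ ^ β)` (`gibbs`, `gibbsDensity`), and
`E(f) = ∫ |∇f|² (1 + ‖x‖ ^ (2 - β)) dμ` (`energy`).

* Moments. Integrating `div (x f² ρ)` gives
  `β ∫ f² ‖x‖ ^ β dμ = n ∫ f² dμ + ∫ 2 f ⟨∇f, x⟩ dμ`. Splitting
  `‖x‖ = ‖x‖ ^ (β / 2) ‖x‖ ^ ((2 - β) / 2)` in the last term, Young's inequality yields
  `(β - 1) ∫ f² ‖x‖ ^ β dμ ≤ n ∫ f² dμ + E(f)` (`IsTest.moment_le`, `IsTest.moment_le_energy`).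
  This is where the weight `‖x‖ ^ (2 - β)` and the condition `1 < β` enter.
* Defective inequality. The `L¹` Sobolev inequality (`sobolev`) bounds the entropy of a probability
  density `u` by a multiple of `1 + ∫ |∇u|` (`integral_mul_log_le`). For `u = f² ρ`, the terms
  created by `log ρ` and `∇ρ` are moments of order at most `β`, so that
  `∫ f² log f² dμ ≤ K (1 + E(f))` whenever `∫ f² dμ = 1` (`defective_logSobolev`).
* Poincaré inequality. Outside a large ball, `(f - c)²` is controlled by the moment bound; inside,
  by the Poincaré inequality for Lebesgue measure (`local_poincare`), where `c` is the value of `f`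
  at a suitable point. Hence `v := ∫ (f - c)² dμ ≤ P E(f)` (`weighted_poincare`).
* Conclusion. A Rothaus-type inequality, `entropy_le_of_shift`, bounds the entropy of `f²` by
  `9 v (3 + ∫ k² log k² dμ)` with `k = (f - c) / √v`. Since `E(k) = E(f) / v`, the previous two
  steps bound this by a multiple of `v + E(f)`, hence of `E(f)`.
-/

open MeasureTheory Real Filter Set

section

open scoped ENNReal NNReal

/-! ### An L¹ Sobolev inequality -/

/-- In dimension one, `|u| ≤ ∫ |u'|`, transported along an isometry `ℝ ≃ EuclideanSpace ℝ (Fin 1)`.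
The Gagliardo-Nirenberg-Sobolev inequality of Mathlib does not cover this dimension. -/
lemma enorm_le_lintegral_fderiv_dim_one {u : EuclideanSpace ℝ (Fin 1) → ℝ} (hu : ContDiff ℝ 1 u)
    (hc : HasCompactSupport u) (x : EuclideanSpace ℝ (Fin 1)) :
    ‖u x‖ₑ ≤ eLpNorm (fderiv ℝ u) 1 volume := by
  let L : ℝ ≃ₗᵢ[ℝ] EuclideanSpace ℝ (Fin 1) := (OrthonormalBasis.singleton (Fin 1) ℝ).repr
  have hL : MeasurePreserving L volume volume :=
    (OrthonormalBasis.singleton (Fin 1) ℝ).measurePreserving_repr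
  have hU : ContDiff ℝ 1 (u ∘ L) := hu.comp L.contDiff
  have hUc : HasCompactSupport (u ∘ L) := hc.comp_homeomorph L.toHomeomorph
  have h1 := HasCompactSupport.enorm_le_lintegral_Ici_deriv hU hUc (L.symm x)
  simp only [Function.comp_apply, LinearIsometryEquiv.apply_symm_apply] at h1
  refine h1.trans ((setLIntegral_le_lintegral _ _).trans ?_)
  rw [eLpNorm_one_eq_lintegral_enorm, ← hL.lintegral_comp_emb L.toHomeomorph.measurableEmbedding]
  refine lintegral_mono fun t => ?_
  have h2 : HasDerivAt (u ∘ L) (fderiv ℝ u (L t) (L 1)) t := by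
    have ha := ((hu.differentiable one_ne_zero) (L t)).hasFDerivAt
    have hb : HasDerivAt L (L 1) t := by
      simpa using (L.toContinuousLinearEquiv : ℝ →L[ℝ] EuclideanSpace ℝ (Fin 1)).hasDerivAt (x := t)
    exact ha.comp_hasDerivAt t hb
  rw [h2.deriv, enorm_le_iff_norm_le]
  simpa using (fderiv ℝ u (L t)).le_opNorm (L 1)

/-- An `L¹` Sobolev inequality for compactly supported functions: `p = n / (n - 1)` if `2 ≤ n`,
and `p = 2` if `n = 1`. -/
lemma sobolev_compact (n : ℕ) (hn : 1 ≤ n) : ∃ p : ℝ, 1 < p ∧ ∃ C : ℝ≥0,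
    ∀ u : EuclideanSpace ℝ (Fin n) → ℝ, ContDiff ℝ 1 u → HasCompactSupport u →
      eLpNorm u (ENNReal.ofReal p) volume
        ≤ C * (eLpNorm (fderiv ℝ u) 1 volume + eLpNorm u 1 volume) := by
  obtain rfl | hn2 : n = 1 ∨ 2 ≤ n := by omega
  · refine ⟨2, by norm_num, 1, fun u hu hc => ?_⟩
    have h := enorm_le_lintegral_fderiv_dim_one hu hc
    set A := eLpNorm (fderiv ℝ u) 1 volume
    have key : eLpNorm u 2 volume ^ 2 ≤ (A + eLpNorm u 1 volume) ^ 2 := by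
      have e : eLpNorm u 2 volume ^ 2 = ∫⁻ x, ‖u x‖ₑ ^ 2 := by
        have := eLpNorm_nnreal_pow_eq_lintegral (f := u) (μ := volume) (p := 2) (by norm_num)
        simpa using this
      calc eLpNorm u 2 volume ^ 2 = ∫⁻ x, ‖u x‖ₑ ^ 2 := e
        _ ≤ ∫⁻ x, A * ‖u x‖ₑ := by
          refine lintegral_mono fun x => ?_
          rw [sq]; gcongr; exact h x
        _ = A * eLpNorm u 1 volume := by
          rw [lintegral_const_mul _ hu.continuous.measurable.enorm, eLpNorm_one_eq_lintegral_enorm]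
        _ ≤ (A + eLpNorm u 1 volume) * (A + eLpNorm u 1 volume) := by
          gcongr
          · exact le_self_add
          · exact le_add_self
        _ = _ := (sq _).symm
    simpa using (ENNReal.pow_le_pow_left_iff two_ne_zero).1 key
  · have h1 : 1 < (n : ℝ) := by exact_mod_cast hn2
    let p : ℝ≥0 := Real.toNNReal (n / (n - 1))
    have hp0 : 0 ≤ (n : ℝ) / (n - 1) := div_nonneg (by linarith) (by linarith)
    have hp : NNReal.HolderConjugate (Module.finrank ℝ (EuclideanSpace ℝ (Fin n))) p := by
      rw [NNReal.holderConjugate_iff]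
      simp only [finrank_euclideanSpace, Fintype.card_fin, p]
      refine ⟨by exact_mod_cast hn2, ?_⟩
      rw [← NNReal.coe_inj]
      push_cast
      rw [Real.coe_toNNReal _ hp0]
      field_simp
      ring
    refine ⟨n / (n - 1), ?_, eLpNormLESNormFDerivOneConst
      (volume : Measure (EuclideanSpace ℝ (Fin n))) p, fun u hu hc => ?_⟩
    · rw [lt_div_iff₀ (by linarith)]; linarith
    · refine (eLpNorm_le_eLpNorm_fderiv_one volume hu hc hp).trans ?_
      gcongr
      exact le_self_add

/-- The compact support is removed with the cutoffs `χ (x / (k + 1))` and Fatou's lemma. -/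
lemma sobolev (n : ℕ) (hn : 1 ≤ n) : ∃ p : ℝ, 1 < p ∧ ∃ C : ℝ≥0,
    ∀ u : EuclideanSpace ℝ (Fin n) → ℝ, ContDiff ℝ 1 u →
      eLpNorm u (ENNReal.ofReal p) volume
        ≤ C * (eLpNorm (fderiv ℝ u) 1 volume + eLpNorm u 1 volume) := by
  obtain ⟨p, hp, C, h⟩ := sobolev_compact n hn
  let χ : ContDiffBump (0 : EuclideanSpace ℝ (Fin n)) := ⟨1, 2, by norm_num, by norm_num⟩
  have hχ : ContDiff ℝ 1 χ := χ.contDiff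
  obtain ⟨M, hM⟩ : ∃ M, ∀ x, ‖fderiv ℝ χ x‖ ≤ M :=
    (χ.hasCompactSupport.fderiv ℝ).exists_bound_of_continuous (hχ.continuous_fderiv one_ne_zero)
  have hM0 : 0 ≤ M := (norm_nonneg _).trans (hM 0)
  refine ⟨p, hp, C * (1 + M.toNNReal), fun u hu => ?_⟩
  let c : ℕ → ℝ := fun k => ((k : ℝ) + 1)⁻¹
  have hc0 : ∀ k, 0 < c k := fun k => by positivity
  have hc1 : ∀ k, c k ≤ 1 := fun k => inv_le_one_of_one_le₀ (by simp)
  let v : ℕ → EuclideanSpace ℝ (Fin n) → ℝ := fun k x => χ (c k • x) * u x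
  have hv : ∀ k, ContDiff ℝ 1 (v k) := fun k => (hχ.comp (contDiff_const_smul _)).mul hu
  have hvc : ∀ k, HasCompactSupport (v k) := fun k =>
    (χ.hasCompactSupport.comp_smul (hc0 k).ne').mul_right
  have hlim : ∀ x, Tendsto (fun k => v k x) atTop (nhds (u x)) := by
    intro x
    have h1 : Tendsto c atTop (nhds 0) := by
      simpa [c, one_div] using tendsto_one_div_add_atTop_nhds_zero_nat (𝕜 := ℝ)
    have h2 : Tendsto (fun k => χ (c k • x)) atTop (nhds (χ 0)) := by
      refine (hχ.continuous.tendsto 0).comp ?_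
      simpa using h1.smul_const x
    have h3 : χ (0 : EuclideanSpace ℝ (Fin n)) = 1 := χ.one_of_mem_closedBall (by simp [χ])
    simpa [v, h3] using h2.mul_const (u x)
  have hbound : ∀ k, eLpNorm (v k) (ENNReal.ofReal p) volume ≤
      ((C * (1 + M.toNNReal) : ℝ≥0) : ℝ≥0∞) *
        (eLpNorm (fderiv ℝ u) 1 volume + eLpNorm u 1 volume) := by
    intro k
    refine (h (v k) (hv k) (hvc k)).trans ?_
    have hval : eLpNorm (v k) 1 volume ≤ eLpNorm u 1 volume := by
      refine eLpNorm_mono fun x => ?_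
      rw [norm_mul]
      refine mul_le_of_le_one_left (norm_nonneg _) ?_
      rw [Real.norm_eq_abs, abs_of_nonneg χ.nonneg]
      exact χ.le_one
    have hder : eLpNorm (fderiv ℝ (v k)) 1 volume ≤
        eLpNorm (fderiv ℝ u) 1 volume + M.toNNReal * eLpNorm u 1 volume := by
      simp only [eLpNorm_one_eq_lintegral_enorm]
      rw [← lintegral_const_mul _ hu.continuous.measurable.enorm,
        ← lintegral_add_left ((hu.continuous_fderiv one_ne_zero).measurable.enorm)]
      refine lintegral_mono fun x => ?_
      have hd : HasFDerivAt (v k) (χ (c k • x) • fderiv ℝ u x +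
          u x • ((fderiv ℝ χ (c k • x)).comp
            (c k • ContinuousLinearMap.id ℝ (EuclideanSpace ℝ (Fin n))))) x := by
        refine HasFDerivAt.mul (c := fun x => χ (c k • x)) ?_
          ((hu.differentiable one_ne_zero) x).hasFDerivAt
        exact ((hχ.differentiable one_ne_zero) (c k • x)).hasFDerivAt.comp x
          ((hasFDerivAt_id x).const_smul (c k))
      rw [hd.fderiv]
      have hnorm : ‖χ (c k • x) • fderiv ℝ u x + u x • ((fderiv ℝ χ (c k • x)).comp
          (c k • ContinuousLinearMap.id ℝ (EuclideanSpace ℝ (Fin n))))‖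
          ≤ ‖fderiv ℝ u x‖ + M * ‖u x‖ := by
        refine (norm_add_le _ _).trans (add_le_add ?_ ?_)
        · rw [norm_smul]
          refine mul_le_of_le_one_left (norm_nonneg _) ?_
          rw [Real.norm_eq_abs, abs_of_nonneg χ.nonneg]
          exact χ.le_one
        · rw [norm_smul, mul_comm]
          gcongr
          rw [ContinuousLinearMap.comp_smul, ContinuousLinearMap.comp_id, norm_smul,
            Real.norm_of_nonneg (hc0 k).le]
          exact (mul_le_of_le_one_left (norm_nonneg _) (hc1 k)).trans (hM _)
      rw [← ofReal_norm, ← ofReal_norm, ← ofReal_norm, ← ENNReal.ofReal.eq_def,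
        ← ENNReal.ofReal_mul hM0, ← ENNReal.ofReal_add (norm_nonneg _) (by positivity)]
      exact ENNReal.ofReal_le_ofReal hnorm
    calc (C : ℝ≥0∞) * (eLpNorm (fderiv ℝ (v k)) 1 volume + eLpNorm (v k) 1 volume)
        ≤ C * ((eLpNorm (fderiv ℝ u) 1 volume + M.toNNReal * eLpNorm u 1 volume)
            + eLpNorm u 1 volume) := by gcongr
      _ ≤ C * ((1 + M.toNNReal) * (eLpNorm (fderiv ℝ u) 1 volume + eLpNorm u 1 volume)) := by
        gcongr
        calc _ ≤ (eLpNorm (fderiv ℝ u) 1 volume + M.toNNReal * eLpNorm u 1 volume)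
            + eLpNorm u 1 volume + M.toNNReal * eLpNorm (fderiv ℝ u) 1 volume := le_self_add
          _ = _ := by ring
      _ = _ := by push_cast; ring
  refine (Lp.eLpNorm_lim_le_liminf_eLpNorm
    (fun k => (hv k).continuous.aestronglyMeasurable) u (ae_of_all _ hlim)).trans ?_
  exact liminf_le_of_frequently_le' (Frequently.of_forall hbound)

/-! ### Poincaré inequality on a ball -/

variable {n : ℕ}

/-- A dilation by a factor at least `1 / 2` increases an integral by at most `2 ^ n`. -/
lemma lintegral_comp_add_smul_le (z : EuclideanSpace ℝ (Fin n)) {s : ℝ} (hs : 1 / 2 ≤ s)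
    {G : EuclideanSpace ℝ (Fin n) → ℝ≥0∞} (hG : Measurable G) :
    ∫⁻ x, G (z + s • x) ≤ 2 ^ n * ∫⁻ x, G x := by
  have hs0 : 0 < s := by linarith
  have h1 : ∫⁻ x, G (z + s • x) = ∫⁻ y, G (z + y) ∂(Measure.map (s • ·) volume) :=
    (lintegral_map (hG.comp (measurable_const_add z)) (measurable_const_smul s)).symm
  rw [h1, Measure.map_addHaar_smul _ hs0.ne', lintegral_smul_measure,
    lintegral_add_left_eq_self G z, smul_eq_mul]
  gcongr
  rw [abs_of_pos (by positivity), finrank_euclideanSpace, Fintype.card_fin]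
  refine (ENNReal.ofReal_le_ofReal (q := 2 ^ n) ?_).trans (by simp [ENNReal.ofReal_pow])
  rw [← inv_pow]
  gcongr
  rw [inv_le_comm₀ hs0 two_pos]
  linarith

/-- Cauchy-Schwarz along a segment. -/
lemma sq_sub_le_lintegral_segment {f : EuclideanSpace ℝ (Fin n) → ℝ} (hf : ContDiff ℝ 1 f)
    (x y : EuclideanSpace ℝ (Fin n)) :
    ENNReal.ofReal ((f x - f y) ^ 2) ≤ ENNReal.ofReal (‖x - y‖ ^ 2) *
      ∫⁻ t in Ioc (0 : ℝ) 1, ENNReal.ofReal (‖fderiv ℝ f ((1 - t) • y + t • x)‖ ^ 2) := by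
  let ℓ : ℝ → EuclideanSpace ℝ (Fin n) := fun t => (1 - t) • y + t • x
  have hℓc : Continuous ℓ := by fun_prop
  have hD : Continuous (fderiv ℝ f) := hf.continuous_fderiv one_ne_zero
  have hℓ : ∀ t, HasDerivAt ℓ (x - y) t := by
    intro t
    have := (((hasDerivAt_id t).const_sub 1).smul_const y).add ((hasDerivAt_id t).smul_const x)
    have e : x - y = (-1 : ℝ) • y + (1 : ℝ) • x := by module
    rw [e]
    exact this
  let φ : ℝ → ℝ := fun t => fderiv ℝ f (ℓ t) (x - y)
  have hφc : Continuous φ := (hD.comp hℓc).clm_apply continuous_const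
  have hder : ∀ t, HasDerivAt (f ∘ ℓ) (φ t) t := fun t =>
    ((hf.differentiable one_ne_zero) (ℓ t)).hasFDerivAt.comp_hasDerivAt t (hℓ t)
  have hint : ∫ t in (0 : ℝ)..1, φ t = f x - f y := by
    rw [intervalIntegral.integral_eq_sub_of_hasDerivAt (fun t _ => hder t)
      (hφc.intervalIntegrable _ _)]
    simp [ℓ]
  set a := f x - f y with ha
  -- Jensen's inequality, from the nonnegativity of the variance of `φ`.
  have hsq : a ^ 2 ≤ ∫ t in (0 : ℝ)..1, φ t ^ 2 := by
    have h0 : 0 ≤ ∫ t in (0 : ℝ)..1, (φ t - a) ^ 2 :=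
      intervalIntegral.integral_nonneg zero_le_one fun t _ => sq_nonneg _
    have h1 : ∫ t in (0 : ℝ)..1, (φ t - a) ^ 2
        = (∫ t in (0 : ℝ)..1, φ t ^ 2) - 2 * a * (∫ t in (0 : ℝ)..1, φ t) + a ^ 2 := by
      have : ∀ t, (φ t - a) ^ 2 = φ t ^ 2 - 2 * a * φ t + a ^ 2 := fun t => by ring
      simp_rw [this]
      rw [intervalIntegral.integral_add, intervalIntegral.integral_sub,
        intervalIntegral.integral_const_mul]
      · simp
      all_goals exact Continuous.intervalIntegrable (by fun_prop) _ _
    rw [h1, hint] at h0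
    nlinarith
  have hle : a ^ 2 ≤ ∫ t in Ioc (0 : ℝ) 1, ‖x - y‖ ^ 2 * ‖fderiv ℝ f (ℓ t)‖ ^ 2 := by
    rw [← intervalIntegral.integral_of_le zero_le_one]
    refine hsq.trans (intervalIntegral.integral_mono zero_le_one
      (Continuous.intervalIntegrable (by fun_prop) _ _)
      (Continuous.intervalIntegrable (by fun_prop) _ _) fun t => ?_)
    have := (fderiv ℝ f (ℓ t)).le_opNorm (x - y)
    have h2 : φ t ^ 2 = ‖fderiv ℝ f (ℓ t) (x - y)‖ ^ 2 := by simp [φ]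
    simp only [h2, ← mul_pow]
    rw [mul_comm]
    gcongr
  refine (ENNReal.ofReal_le_ofReal hle).trans ?_
  rw [ofReal_integral_eq_lintegral_ofReal]
  · rw [← lintegral_const_mul _ (by fun_prop)]
    refine lintegral_mono fun t => ?_
    simp only [ℓ]
    rw [ENNReal.ofReal_mul (by positivity)]
  · exact (Continuous.integrableOn_Icc (by fun_prop)).mono_set Ioc_subset_Icc_self
  · exact ae_of_all _ fun t => by positivity

/-- Poincaré inequality on a ball, with the value at some point in place of the mean. -/
lemma local_poincare (n : ℕ) {R : ℝ} (hR : 0 < R) : ∃ C : ℝ≥0,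
    ∀ f : EuclideanSpace ℝ (Fin n) → ℝ, ContDiff ℝ 1 f → ∃ y : EuclideanSpace ℝ (Fin n),
      ∫⁻ x in Metric.ball 0 R, ENNReal.ofReal ((f x - f y) ^ 2)
        ≤ C * ∫⁻ x in Metric.ball 0 R, ENNReal.ofReal (‖fderiv ℝ f x‖ ^ 2) := by
  refine ⟨(2 * R).toNNReal ^ 2 * 2 ^ n, fun f hf => ?_⟩
  set B : Set (EuclideanSpace ℝ (Fin n)) := Metric.ball 0 R with hB
  have hBm : MeasurableSet B := Metric.isOpen_ball.measurableSet
  have hB0 : volume B ≠ 0 := (Metric.isOpen_ball.measure_pos _ ⟨0, by simp [hR]⟩).ne'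
  have hBt : volume B ≠ ∞ := measure_ball_lt_top.ne
  have hD : Continuous (fderiv ℝ f) := hf.continuous_fderiv one_ne_zero
  let F : EuclideanSpace ℝ (Fin n) → ℝ≥0∞ := fun x => ENNReal.ofReal (‖fderiv ℝ f x‖ ^ 2)
  have hF : Measurable F := by fun_prop
  let I := ∫⁻ x in B, F x
  have hconv : ∀ x ∈ B, ∀ y ∈ B, ∀ t ∈ Ioc (0 : ℝ) 1, (1 - t) • y + t • x ∈ B :=
    fun x hx y hy t ht => (convex_ball 0 R) hy hx (by linarith [ht.2]) ht.1.le (by ring)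
  have hGm : Measurable (B.indicator F) := hF.indicator hBm
  -- Change of variables in the endpoint whose coefficient `s` is at least `1 / 2`.
  have aux : ∀ s : ℝ, 1 / 2 ≤ s → s ≤ 1 → ∀ z ∈ B,
      ∫⁻ x in B, F ((1 - s) • z + s • x) ≤ 2 ^ n * I := by
    intro s hs hs1 z hz
    calc ∫⁻ x in B, F ((1 - s) • z + s • x)
        ≤ ∫⁻ x in B, B.indicator F ((1 - s) • z + s • x) := by
          refine setLIntegral_mono' hBm fun x hx => ?_
          rw [indicator_of_mem (hconv x hx z hz s ⟨by linarith, hs1⟩)]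
      _ ≤ ∫⁻ x, B.indicator F ((1 - s) • z + s • x) := setLIntegral_le_lintegral _ _
      _ ≤ 2 ^ n * ∫⁻ x, B.indicator F x := lintegral_comp_add_smul_le _ hs hGm
      _ = 2 ^ n * I := by rw [lintegral_indicator hBm]
  have hslice : ∀ t ∈ Ioc (0 : ℝ) 1,
      ∫⁻ y in B, ∫⁻ x in B, F ((1 - t) • y + t • x) ≤ 2 ^ n * I * volume B := by
    intro t ht
    have hconst : ∫⁻ _ in B, 2 ^ n * I = 2 ^ n * I * volume B := by
      rw [setLIntegral_const]
    rcases le_total (1 / 2) t with h | h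
    · rw [← hconst]
      exact setLIntegral_mono' hBm fun y hy => aux t h ht.2 y hy
    · rw [lintegral_lintegral_swap (by fun_prop), ← hconst]
      refine setLIntegral_mono' hBm fun x hx => ?_
      have := aux (1 - t) (by linarith) (by linarith [ht.1]) x hx
      simpa [add_comm] using this
  have hpt : ∀ y ∈ B, ∫⁻ x in B, ENNReal.ofReal ((f x - f y) ^ 2) ≤
      ENNReal.ofReal ((2 * R) ^ 2) *
        ∫⁻ x in B, ∫⁻ t in Ioc (0 : ℝ) 1, F ((1 - t) • y + t • x) := by
    intro y hy
    rw [← lintegral_const_mul _ (by fun_prop)]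
    refine setLIntegral_mono' hBm fun x hx => ?_
    refine (sq_sub_le_lintegral_segment hf x y).trans ?_
    gcongr
    rw [hB, mem_ball_zero_iff] at hx hy
    linarith [norm_sub_le x y]
  have htot : ∫⁻ y in B, ∫⁻ x in B, ENNReal.ofReal ((f x - f y) ^ 2) ≤
      ENNReal.ofReal ((2 * R) ^ 2) * (2 ^ n * I * volume B) := by
    calc _ ≤ ∫⁻ y in B, ENNReal.ofReal ((2 * R) ^ 2) *
          ∫⁻ x in B, ∫⁻ t in Ioc (0 : ℝ) 1, F ((1 - t) • y + t • x) :=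
          setLIntegral_mono' hBm hpt
      _ = ENNReal.ofReal ((2 * R) ^ 2) *
          ∫⁻ y in B, ∫⁻ x in B, ∫⁻ t in Ioc (0 : ℝ) 1, F ((1 - t) • y + t • x) := by
          rw [lintegral_const_mul' _ _ ENNReal.ofReal_ne_top]
      _ = ENNReal.ofReal ((2 * R) ^ 2) *
          ∫⁻ y in B, ∫⁻ t in Ioc (0 : ℝ) 1, ∫⁻ x in B, F ((1 - t) • y + t • x) := by
          congr 1
          refine lintegral_congr fun y => ?_
          rw [lintegral_lintegral_swap (by fun_prop)]
      _ = ENNReal.ofReal ((2 * R) ^ 2) *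
          ∫⁻ t in Ioc (0 : ℝ) 1, ∫⁻ y in B, ∫⁻ x in B, F ((1 - t) • y + t • x) := by
          congr 1
          rw [lintegral_lintegral_swap]
          refine (Measurable.lintegral_prod_right'
            (f := fun q : (EuclideanSpace ℝ (Fin n) × ℝ) × EuclideanSpace ℝ (Fin n) =>
              F ((1 - q.1.2) • q.1.1 + q.1.2 • q.2)) (by fun_prop)).aemeasurable
      _ ≤ ENNReal.ofReal ((2 * R) ^ 2) *
          ∫⁻ t in Ioc (0 : ℝ) 1, (2 ^ n * I * volume B) := by
          gcongr 1
          exact setLIntegral_mono' measurableSet_Ioc hslice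
      _ = _ := by simp
  -- Some `y` does at least as well as the average over `B`.
  obtain ⟨y, -, hy⟩ := exists_le_setLAverage (f := fun y =>
    ∫⁻ x in B, ENNReal.ofReal ((f x - f y) ^ 2)) hB0 hBt
    (by
      have hfm : Measurable f := hf.continuous.measurable
      refine (Measurable.lintegral_prod_right' (f := fun q : EuclideanSpace ℝ (Fin n) ×
        EuclideanSpace ℝ (Fin n) => ENNReal.ofReal ((f q.2 - f q.1) ^ 2)) ?_).aemeasurable
      fun_prop)
  refine ⟨y, hy.trans ?_⟩
  rw [setLAverage_eq]
  refine (ENNReal.div_le_div_right htot _).trans ?_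
  rw [← mul_assoc, ENNReal.mul_div_cancel_right hB0 hBt]
  refine le_of_eq ?_
  rw [← mul_assoc, ENNReal.ofReal_pow (by positivity)]
  push_cast
  rfl

/-! ### Entropy of a shifted square -/

lemma mul_log_le_sq (q : ℝ) (hq : 0 ≤ q) : q * log q - q + 1 ≤ (q - 1) ^ 2 := by
  rcases hq.eq_or_lt with rfl | h
  · simp
  · nlinarith [Real.log_le_sub_one_of_pos h]

/-- For a reference value `b` of size at most `1` and a large perturbation `s`, the function
`φ(y) = y² log y² - y² + 1` grows like `s² log (1 + s²)`. -/
lemma phi_le_of_one_le {b s : ℝ} (hb : b ^ 2 ≤ 1) (hs : 1 ≤ s ^ 2) :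
    (b + s) ^ 2 * log ((b + s) ^ 2) - (b + s) ^ 2 + 1 ≤ 9 * (s ^ 2 + s ^ 2 * log (1 + s ^ 2)) := by
  have hq : (b + s) ^ 2 ≤ 4 * s ^ 2 := by nlinarith [sq_nonneg (b - s)]
  have hlog : 0 ≤ log (1 + s ^ 2) := Real.log_nonneg (by nlinarith)
  rcases le_total ((b + s) ^ 2) 1 with h | h
  · have := mul_log_le_sq _ (sq_nonneg (b + s))
    nlinarith [mul_nonneg (sq_nonneg s) hlog, sq_nonneg (b + s)]
  · have h1 : log ((b + s) ^ 2) ≤ 2 + log (1 + s ^ 2) := by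
      calc log ((b + s) ^ 2) ≤ log (4 * (1 + s ^ 2)) := Real.log_le_log (by linarith) (by linarith)
        _ = log 4 + log (1 + s ^ 2) := Real.log_mul (by norm_num) (by positivity)
        _ ≤ _ := by
          have : log 4 = 2 * log 2 := by
            rw [show (4 : ℝ) = 2 ^ 2 by norm_num, Real.log_pow]; norm_num
          have h2 := Real.log_le_sub_one_of_pos (two_pos : (0 : ℝ) < 2)
          linarith
    have h3 : (b + s) ^ 2 * log ((b + s) ^ 2) ≤ 4 * s ^ 2 * (2 + log (1 + s ^ 2)) :=
      mul_le_mul hq h1 (Real.log_nonneg h) (by positivity)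
    nlinarith [mul_nonneg (sq_nonneg s) hlog]

lemma phi_le_nine {b s : ℝ} (hb : b ^ 2 ≤ 1) (hs : s ^ 2 ≤ 1) :
    (b + s) ^ 2 * log ((b + s) ^ 2) - (b + s) ^ 2 + 1 ≤ 9 := by
  have := mul_log_le_sq _ (sq_nonneg (b + s))
  have hq : (b + s) ^ 2 ≤ 4 := by nlinarith [sq_nonneg (b - s)]
  nlinarith [sq_nonneg (b + s)]

/-- The function `φ(y) = y² log y² - y² + 1` vanishes to second order at `y = ±1`. -/
lemma phi_le_nine_mul_sq {b s : ℝ} (hb : b ^ 2 = 1) (hs : s ^ 2 ≤ 1) :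
    (b + s) ^ 2 * log ((b + s) ^ 2) - (b + s) ^ 2 + 1 ≤ 9 * s ^ 2 := by
  have := mul_log_le_sq _ (sq_nonneg (b + s))
  have e : ((b + s) ^ 2 - 1) ^ 2 = s ^ 2 * (2 * b + s) ^ 2 := by
    have : (b + s) ^ 2 - 1 = s * (2 * b + s) := by linear_combination hb
    rw [this]; ring
  have h9 : (2 * b + s) ^ 2 ≤ 9 := by nlinarith [sq_nonneg (b - s)]
  nlinarith [mul_le_mul_of_nonneg_left h9 (sq_nonneg s)]

/-- With `q = h ^ 2 / v`, a multiple of `q log q` controls the entropy integrand of `(c + h) ^ 2`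
relative to a reference value `t` of the mean, where `t = max (c ^ 2) v`. -/
lemma exists_sq_mul_log_le (c : ℝ) {v : ℝ} (hv : 0 < v) : ∃ t > 0, ∀ h : ℝ,
    (c + h) ^ 2 * log ((c + h) ^ 2) ≤ (c + h) ^ 2 * (1 + log t) - t
      + 9 * v * (2 + h ^ 2 / v + h ^ 2 / v * log (h ^ 2 / v)) := by
  -- It suffices to bound `φ((c + h) / √t)` where `φ(y) = y² log y² - y² + 1`.
  suffices H : ∃ τ > 0, ∀ h : ℝ,
      τ ^ 2 * ((c / τ + h / τ) ^ 2 * log ((c / τ + h / τ) ^ 2) - (c / τ + h / τ) ^ 2 + 1)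
        ≤ 9 * v * (1 + h ^ 2 / v + h ^ 2 / v * log (1 + h ^ 2 / v)) by
    obtain ⟨τ, hτ, H⟩ := H
    refine ⟨τ ^ 2, by positivity, fun h => ?_⟩
    have h1 := H h
    have h2 : h ^ 2 / v * log (1 + h ^ 2 / v) ≤ h ^ 2 / v * log (h ^ 2 / v) + 1 := by
      set q := h ^ 2 / v with hq
      have hq0 : 0 ≤ q := by positivity
      rcases hq0.eq_or_lt with h0 | h0
      · simp [← h0]
      · have : log (1 + q) - log q ≤ (1 + q) / q - 1 := by
          rw [← Real.log_div (by positivity) h0.ne']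
          exact Real.log_le_sub_one_of_pos (by positivity)
        have h3 : (1 + q) / q - 1 = 1 / q := by field_simp; ring
        rw [h3] at this
        have := mul_le_mul_of_nonneg_left this hq0
        rw [mul_one_div_cancel h0.ne'] at this
        linarith
    have h3 : τ ^ 2 * ((c / τ + h / τ) ^ 2 * log ((c / τ + h / τ) ^ 2))
        = (c + h) ^ 2 * log ((c + h) ^ 2) - (c + h) ^ 2 * log (τ ^ 2) := by
      rcases eq_or_ne (c + h) 0 with h0 | h0
      · have : c / τ + h / τ = 0 := by rw [← add_div, h0, zero_div]
        simp [this, h0]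
      · rw [← add_div, div_pow, Real.log_div (by positivity) (by positivity)]
        field_simp
    have h4 : τ ^ 2 * (c / τ + h / τ) ^ 2 = (c + h) ^ 2 := by field_simp
    have h5 := mul_le_mul_of_nonneg_left h2 (by positivity : 0 ≤ 9 * v)
    linarith
  have hpos : ∀ q : ℝ, 0 ≤ q → 0 ≤ q * log (1 + q) := fun q hq =>
    mul_nonneg hq (Real.log_nonneg (by linarith))
  rcases le_total (c ^ 2) v with hcv | hcv
  · refine ⟨√v, by positivity, fun h => ?_⟩
    have hb : (c / √v) ^ 2 ≤ 1 := by
      rw [div_pow, Real.sq_sqrt hv.le, div_le_one hv]; exact hcv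
    have hsq : (h / √v) ^ 2 = h ^ 2 / v := by rw [div_pow, Real.sq_sqrt hv.le]
    have hp := hpos (h ^ 2 / v) (by positivity)
    have hq0 : 0 ≤ h ^ 2 / v := by positivity
    rw [Real.sq_sqrt hv.le, mul_comm 9 v, mul_assoc v 9]
    refine mul_le_mul_of_nonneg_left ?_ hv.le
    rcases le_total ((h / √v) ^ 2) 1 with hs | hs
    · have := phi_le_nine hb hs
      linarith
    · have := phi_le_of_one_le hb hs
      rw [hsq] at this
      linarith
  · have hc : c ≠ 0 := by
      rintro rfl
      norm_num at hcv
      linarith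
    have hc2 : 0 < c ^ 2 := by positivity
    refine ⟨|c|, abs_pos.2 hc, fun h => ?_⟩
    have hb : (c / |c|) ^ 2 = 1 := by rw [div_pow, sq_abs, div_self hc2.ne']
    have hsq : (h / |c|) ^ 2 = h ^ 2 / c ^ 2 := by rw [div_pow, sq_abs]
    have hp := hpos (h ^ 2 / v) (by positivity)
    have hle : h ^ 2 / c ^ 2 ≤ h ^ 2 / v := by gcongr
    have hq0 : 0 ≤ h ^ 2 / c ^ 2 := by positivity
    have hlog : log (1 + h ^ 2 / c ^ 2) ≤ log (1 + h ^ 2 / v) :=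
      Real.log_le_log (by positivity) (by linarith)
    have hφ : (c / |c| + h / |c|) ^ 2 * log ((c / |c| + h / |c|) ^ 2)
        - (c / |c| + h / |c|) ^ 2 + 1
        ≤ 9 * (h ^ 2 / c ^ 2 + h ^ 2 / c ^ 2 * log (1 + h ^ 2 / c ^ 2)) := by
      rw [← hsq]
      rcases le_total ((h / |c|) ^ 2) 1 with hs | hs
      · refine (phi_le_nine_mul_sq hb hs).trans ?_
        have := hpos ((h / |c|) ^ 2) (by positivity)
        linarith
      · exact phi_le_of_one_le hb.le hs
    rw [sq_abs]
    calc _ ≤ c ^ 2 * (9 * (h ^ 2 / c ^ 2 + h ^ 2 / c ^ 2 * log (1 + h ^ 2 / c ^ 2))) :=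
          mul_le_mul_of_nonneg_left hφ hc2.le
      _ ≤ c ^ 2 * (9 * (h ^ 2 / c ^ 2 + h ^ 2 / c ^ 2 * log (1 + h ^ 2 / v))) := by gcongr
      _ = 9 * (h ^ 2 + h ^ 2 * log (1 + h ^ 2 / v)) := by field_simp
      _ = 9 * v * (h ^ 2 / v + h ^ 2 / v * log (1 + h ^ 2 / v)) := by field_simp
      _ ≤ _ := by
        refine mul_le_mul_of_nonneg_left ?_ (by positivity)
        linarith

/-- A Rothaus-type inequality: the entropy of `f ^ 2` is controlled by the variance-like quantity
`v = ∫ (f - c) ^ 2` and the entropy of the normalized square `(f - c) ^ 2 / v`. -/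
lemma entropy_le_of_shift {E : Type*} [TopologicalSpace E] [MeasurableSpace E] [BorelSpace E]
    (μ : Measure E) [IsProbabilityMeasure μ] {f : E → ℝ} (hf : Continuous f)
    {M : ℝ} (hM : ∀ x, |f x| ≤ M) (c : ℝ) {v : ℝ} (hv : 0 < v) (hvdef : v = ∫ x, (f x - c) ^ 2 ∂μ) :
    entropy μ (fun x => f x ^ 2) ≤
      9 * v * (3 + ∫ x, (f x - c) ^ 2 / v * log ((f x - c) ^ 2 / v) ∂μ) := by
  obtain ⟨t, ht, H⟩ := exists_sq_mul_log_le c hv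
  -- Continuous functions of the bounded function `f` are integrable.
  have hint : ∀ g : ℝ → ℝ, Continuous g → Integrable (fun x => g (f x)) μ := by
    intro g hg
    obtain ⟨K, hK⟩ := (isCompact_Icc (a := -M) (b := M)).exists_bound_of_continuousOn hg.continuousOn
    exact Integrable.of_bound (hg.comp hf).measurable.aestronglyMeasurable K
      (ae_of_all _ fun x => hK _ (abs_le.1 (hM x)))
  have hlogc : Continuous fun q : ℝ => q * log q := Real.continuous_mul_log
  have i1 := hint (fun y => y ^ 2 * log (y ^ 2)) (hlogc.comp (continuous_pow 2))
  have i2 := hint (fun y => y ^ 2) (by fun_prop)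
  have i3 := hint (fun y => (y - c) ^ 2 / v) (by fun_prop)
  have i4 := hint (fun y => (y - c) ^ 2 / v * log ((y - c) ^ 2 / v))
    (hlogc.comp (f := fun y : ℝ => (y - c) ^ 2 / v) (by fun_prop))
  set m := ∫ x, f x ^ 2 ∂μ with hm
  have hm0 : 0 ≤ m := integral_nonneg fun x => sq_nonneg _
  have h3 : ∫ x, (f x - c) ^ 2 / v ∂μ = 1 := by
    rw [integral_div, ← hvdef, div_self hv.ne']
  have j1 : Integrable (fun x => f x ^ 2 * (1 + log t)) μ := i2.mul_const _
  have j2 : Integrable (fun x => f x ^ 2 * (1 + log t) - t) μ := j1.sub (integrable_const _)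
  have j3 : Integrable (fun x => 2 + (f x - c) ^ 2 / v) μ := (integrable_const _).add i3
  have j4 : Integrable (fun x => 9 * v * (2 + (f x - c) ^ 2 / v
      + (f x - c) ^ 2 / v * log ((f x - c) ^ 2 / v))) μ := (j3.add i4).const_mul _
  have main : ∫ x, f x ^ 2 * log (f x ^ 2) ∂μ ≤ m * (1 + log t) - t
      + 9 * v * (2 + 1 + ∫ x, (f x - c) ^ 2 / v * log ((f x - c) ^ 2 / v) ∂μ) := by
    have e : ∫ x, (f x ^ 2 * (1 + log t) - t + 9 * v * (2 + (f x - c) ^ 2 / v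
        + (f x - c) ^ 2 / v * log ((f x - c) ^ 2 / v))) ∂μ = m * (1 + log t) - t
      + 9 * v * (2 + 1 + ∫ x, (f x - c) ^ 2 / v * log ((f x - c) ^ 2 / v) ∂μ) := by
      rw [integral_add j2 j4, integral_sub j1 (integrable_const _), integral_mul_const,
        integral_const_mul, integral_add j3 i4, integral_add (integrable_const _) i3, h3]
      simp [← hm]
    rw [← e]
    refine integral_mono i1 (j2.add j4) fun x => ?_
    have := H (f x - c)
    simpa using this
  -- `t ↦ m (1 + log t) - t` is maximal at `t = m`, where it equals `m log m`; hence the reference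
  -- value `t` may be replaced by the mean.
  have hmt : m * (1 + log t) - t - m * log m ≤ 0 := by
    rcases hm0.eq_or_lt with h0 | h0
    · simp [← h0, ht.le]
    · have h := Real.log_le_sub_one_of_pos (div_pos ht h0)
      rw [Real.log_div ht.ne' h0.ne'] at h
      have h' := mul_le_mul_of_nonneg_left h h0.le
      have : m * (t / m - 1) = t - m := by field_simp
      linarith
  unfold entropy
  rw [← hm]
  linarith

/-! ### The measures with density proportional to `exp (-‖x‖ ^ β)` -/

lemma sub_one_le_rpow {r β : ℝ} (hr : 0 ≤ r) (hβ : 1 ≤ β) : r - 1 ≤ r ^ β := by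
  rcases le_total r 1 with h | h
  · exact (by linarith : r - 1 ≤ 0).trans (Real.rpow_nonneg hr _)
  · have := Real.rpow_le_rpow_of_exponent_le h hβ
    rw [Real.rpow_one] at this
    linarith

lemma rpow_le_one_add_rpow {r a b : ℝ} (hr : 0 ≤ r) (ha : 0 ≤ a) (hab : a ≤ b) :
    r ^ a ≤ 1 + r ^ b := by
  rcases le_total r 1 with h | h
  · exact (Real.rpow_le_one hr h ha).trans (by linarith [Real.rpow_nonneg hr b])
  · linarith [Real.rpow_le_rpow_of_exponent_le h hab]

lemma rpow_le_one_add_sq {r a : ℝ} (hr : 0 ≤ r) (ha : 0 ≤ a) (ha2 : a ≤ 2) :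
    r ^ a ≤ 1 + r ^ 2 := by
  have := rpow_le_one_add_rpow hr ha ha2
  rwa [Real.rpow_two] at this

/-- Since `‖x‖ ^ β ≥ ‖x‖ - 1`, comparison with `(1 + ‖x‖) ^ (-(n + 1))` suffices. -/
lemma integrable_one_add_sq_mul_exp (n : ℕ) {β : ℝ} (hβ : 1 < β) :
    Integrable (fun x : EuclideanSpace ℝ (Fin n) => (1 + ‖x‖ ^ 2) * exp (-‖x‖ ^ β)) := by
  have hcont : Continuous fun x : EuclideanSpace ℝ (Fin n) => (1 + ‖x‖ ^ 2) * exp (-‖x‖ ^ β) := by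
    have := (contDiff_norm_rpow (E := EuclideanSpace ℝ (Fin n)) hβ).continuous
    fun_prop
  have hi : Integrable (fun x : EuclideanSpace ℝ (Fin n) => (1 + ‖x‖) ^ (-((n : ℝ) + 1))) :=
    integrable_one_add_norm (by simp)
  refine (hi.const_mul (exp 2 * (n + 3).factorial)).mono' hcont.aestronglyMeasurable
    (ae_of_all _ fun x => ?_)
  set s := 1 + ‖x‖ with hs
  have hs0 : 0 < s := by positivity
  rw [Real.norm_of_nonneg (by positivity)]
  have h1 : exp (-‖x‖ ^ β) ≤ exp 2 * exp (-s) := by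
    rw [← Real.exp_add]
    exact Real.exp_le_exp.2 (by linarith [sub_one_le_rpow (norm_nonneg x) hβ.le])
  have h2 : 1 + ‖x‖ ^ 2 ≤ s ^ 2 := by nlinarith [norm_nonneg x]
  have h3 : s ^ (n + 3) * exp (-s) ≤ (n + 3).factorial := by
    have := Real.pow_div_factorial_le_exp s hs0.le (n + 3)
    rw [div_le_iff₀ (by positivity)] at this
    rw [Real.exp_neg, ← div_eq_mul_inv, div_le_iff₀ (Real.exp_pos _)]
    linarith
  have h4 : s ^ (-((n : ℝ) + 1)) = (s ^ (n + 1))⁻¹ := by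
    rw [Real.rpow_neg hs0.le]
    norm_cast
  calc (1 + ‖x‖ ^ 2) * exp (-‖x‖ ^ β) ≤ s ^ 2 * (exp 2 * exp (-s)) := by gcongr
    _ = exp 2 * (s ^ (n + 3) * exp (-s)) * (s ^ (n + 1))⁻¹ := by field_simp; ring
    _ ≤ exp 2 * (n + 3).factorial * (s ^ (n + 1))⁻¹ := by gcongr
    _ = _ := by rw [h4]

/-- The normalizing constant `∫ exp (-‖x‖ ^ β)`. -/
noncomputable def partitionFn (n : ℕ) (β : ℝ) : ℝ :=
  ∫ x : EuclideanSpace ℝ (Fin n), exp (-‖x‖ ^ β)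

/-- The probability density proportional to `exp (-‖x‖ ^ β)`. -/
noncomputable def gibbsDensity (n : ℕ) (β : ℝ) (x : EuclideanSpace ℝ (Fin n)) : ℝ :=
  (partitionFn n β)⁻¹ * exp (-‖x‖ ^ β)

/-- The probability measure with density `gibbsDensity n β` with respect to Lebesgue measure. -/
noncomputable def gibbs (n : ℕ) (β : ℝ) : Measure (EuclideanSpace ℝ (Fin n)) :=
  volume.withDensity fun x => ENNReal.ofReal (gibbsDensity n β x)

variable {β : ℝ}

lemma integrable_exp_neg_norm_rpow (hβ : 1 < β) :
    Integrable (fun x : EuclideanSpace ℝ (Fin n) => exp (-‖x‖ ^ β)) := by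
  have hc := (contDiff_norm_rpow (E := EuclideanSpace ℝ (Fin n)) hβ).continuous
  refine (integrable_one_add_sq_mul_exp n hβ).mono'
     (Continuous.aestronglyMeasurable (by fun_prop)) (ae_of_all _ fun x => ?_)
  rw [Real.norm_of_nonneg (by positivity)]
  exact le_mul_of_one_le_left (by positivity) (by nlinarith [norm_nonneg x])

lemma partitionFn_pos (hβ : 1 < β) : 0 < partitionFn n β :=
  integral_exp_pos (integrable_exp_neg_norm_rpow hβ)

lemma gibbsDensity_pos (hβ : 1 < β) (x : EuclideanSpace ℝ (Fin n)) : 0 < gibbsDensity n β x :=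
  mul_pos (inv_pos.2 (partitionFn_pos hβ)) (exp_pos _)

lemma contDiff_gibbsDensity (hβ : 1 < β) : ContDiff ℝ 1 (gibbsDensity n β) :=
  contDiff_const.mul (contDiff_norm_rpow hβ).neg.exp

lemma hasFDerivAt_gibbsDensity (hβ : 1 < β) (x : EuclideanSpace ℝ (Fin n)) :
    HasFDerivAt (gibbsDensity n β)
      (-(gibbsDensity n β x * (β * ‖x‖ ^ (β - 2))) • innerSL ℝ x) x := by
  have := ((hasFDerivAt_norm_rpow x hβ).fun_neg.exp).const_mul (partitionFn n β)⁻¹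
  refine this.congr_fderiv ?_
  ext v
  simp [gibbsDensity]
  ring

lemma integral_gibbs (hβ : 1 < β) (g : EuclideanSpace ℝ (Fin n) → ℝ) :
    ∫ x, g x ∂(gibbs n β) = ∫ x, gibbsDensity n β x * g x := by
  rw [gibbs, integral_withDensity_eq_integral_toReal_smul
    (contDiff_gibbsDensity hβ).continuous.measurable.ennreal_ofReal
    (ae_of_all _ fun _ => ENNReal.ofReal_lt_top)]
  simp_rw [ENNReal.toReal_ofReal (gibbsDensity_pos hβ _).le, smul_eq_mul]

lemma integrable_gibbs_iff (hβ : 1 < β) (g : EuclideanSpace ℝ (Fin n) → ℝ) :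
    Integrable g (gibbs n β) ↔ Integrable fun x => gibbsDensity n β x * g x := by
  rw [gibbs, integrable_withDensity_iff_integrable_smul'
    (contDiff_gibbsDensity hβ).continuous.measurable.ennreal_ofReal
    (ae_of_all _ fun _ => ENNReal.ofReal_lt_top)]
  simp_rw [ENNReal.toReal_ofReal (gibbsDensity_pos hβ _).le, smul_eq_mul]

lemma isProbabilityMeasure_gibbs (hβ : 1 < β) : IsProbabilityMeasure (gibbs n β) := by
  constructor
  have hi : Integrable (gibbsDensity n β) := (integrable_exp_neg_norm_rpow hβ).const_mul _
  rw [gibbs, withDensity_apply _ MeasurableSet.univ, Measure.restrict_univ,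
    ← ofReal_integral_eq_lintegral_ofReal hi (ae_of_all _ fun x => (gibbsDensity_pos hβ x).le)]
  simp only [gibbsDensity]
  rw [integral_const_mul, ← partitionFn, inv_mul_cancel₀ (partitionFn_pos hβ).ne',
    ENNReal.ofReal_one]

/-- Continuous functions of at most quadratic growth are integrable. -/
lemma integrable_gibbs_of_le (hβ : 1 < β) {g : EuclideanSpace ℝ (Fin n) → ℝ} (hg : Continuous g)
    {K : ℝ} (hK : ∀ x, |g x| ≤ K * (1 + ‖x‖ ^ 2)) : Integrable g (gibbs n β) := by
  rw [integrable_gibbs_iff hβ]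
  have hc := (contDiff_gibbsDensity (n := n) hβ).continuous
  refine ((integrable_one_add_sq_mul_exp n hβ).const_mul (K * (partitionFn n β)⁻¹)).mono'
    (by fun_prop) (ae_of_all _ fun x => ?_)
  rw [norm_mul, Real.norm_of_nonneg (gibbsDensity_pos hβ x).le, Real.norm_eq_abs]
  calc gibbsDensity n β x * |g x| ≤ gibbsDensity n β x * (K * (1 + ‖x‖ ^ 2)) :=
        mul_le_mul_of_nonneg_left (hK x) (gibbsDensity_pos hβ x).le
    _ = _ := by rw [gibbsDensity]; ring

lemma hasFDerivAt_sq_mul_gibbsDensity (hβ : 1 < β) {h : EuclideanSpace ℝ (Fin n) → ℝ}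
    (hh : ContDiff ℝ 1 h) (x : EuclideanSpace ℝ (Fin n)) :
    HasFDerivAt (fun y => gibbsDensity n β y * h y ^ 2)
      (gibbsDensity n β x • ((2 * h x) • fderiv ℝ h x
        - (h x ^ 2 * (β * ‖x‖ ^ (β - 2))) • innerSL ℝ x)) x := by
  have h1 := ((hh.differentiable one_ne_zero) x).hasFDerivAt.pow 2
  have := (hasFDerivAt_gibbsDensity hβ x).mul h1
  refine this.congr_fderiv ?_
  ext v
  simp
  ring

lemma norm_fderiv_sq_mul_gibbsDensity_le (hβ : 1 < β) {h : EuclideanSpace ℝ (Fin n) → ℝ}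
    (hh : ContDiff ℝ 1 h) (x : EuclideanSpace ℝ (Fin n)) :
    ‖fderiv ℝ (fun y => gibbsDensity n β y * h y ^ 2) x‖ ≤ gibbsDensity n β x *
      (2 * |h x| * ‖fderiv ℝ h x‖ + h x ^ 2 * (β * ‖x‖ ^ (β - 1))) := by
  rw [(hasFDerivAt_sq_mul_gibbsDensity hβ hh x).fderiv, norm_smul,
    Real.norm_of_nonneg (gibbsDensity_pos hβ x).le]
  refine mul_le_mul_of_nonneg_left ((norm_sub_le _ _).trans ?_) (gibbsDensity_pos hβ x).le
  rw [norm_smul, norm_smul, innerSL_apply_norm, norm_mul, Real.norm_eq_abs, Real.norm_eq_abs,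
    abs_two, Real.norm_of_nonneg (by positivity), mul_assoc (h x ^ 2), mul_assoc β,
    ← Real.rpow_add_one' (norm_nonneg x) (by linarith)]
  ring_nf
  rfl

/-- Integration by parts against the dilation field: `∫ div (G x) = 0`. -/
lemma integral_fderiv_self {G : EuclideanSpace ℝ (Fin n) → ℝ} (hG : ContDiff ℝ 1 G)
    (h1 : Integrable G) (h2 : Integrable fun x => ‖x‖ * G x)
    (h3 : Integrable fun x => ‖x‖ * ‖fderiv ℝ G x‖) :
    ∫ x, fderiv ℝ G x x = -(n * ∫ x, G x) := by
  have hGc := hG.continuous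
  have hD : Continuous (fderiv ℝ G) := hG.continuous_fderiv one_ne_zero
  let e : Fin n → EuclideanSpace ℝ (Fin n) := fun i => EuclideanSpace.single i 1
  have he : ∀ i, ‖e i‖ = 1 := fun i => by simp [e]
  have hcoord : ∀ (i : Fin n) (x : EuclideanSpace ℝ (Fin n)), |x i| ≤ ‖x‖ := fun i x => by
    simpa using PiLp.norm_apply_le x i
  have hsum : ∀ x : EuclideanSpace ℝ (Fin n), fderiv ℝ G x x = ∑ i, x i * fderiv ℝ G x (e i) := by
    intro x
    have hx : x = ∑ i, x i • e i := by
      ext j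
      simp [e, Finset.sum_apply, Pi.single_apply]
    calc fderiv ℝ G x x = fderiv ℝ G x (∑ i, x i • e i) := by rw [← hx]
      _ = _ := by simp only [map_sum, map_smul, smul_eq_mul]
  have hint : ∀ i, Integrable fun x : EuclideanSpace ℝ (Fin n) => x i * fderiv ℝ G x (e i) := by
    intro i
    refine h3.mono' (by fun_prop) (ae_of_all _ fun x => ?_)
    rw [norm_mul]
    refine mul_le_mul (hcoord i x) ?_ (norm_nonneg _) (norm_nonneg _)
    simpa [he] using (fderiv ℝ G x).le_opNorm (e i)
  have hcd : ∀ (i : Fin n) (x : EuclideanSpace ℝ (Fin n)),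
      HasFDerivAt (fun y : EuclideanSpace ℝ (Fin n) => y i)
        (EuclideanSpace.proj i : EuclideanSpace ℝ (Fin n) →L[ℝ] ℝ) x := fun i x =>
    (EuclideanSpace.proj i : EuclideanSpace ℝ (Fin n) →L[ℝ] ℝ).hasFDerivAt
  have hone : ∀ (i : Fin n) (x : EuclideanSpace ℝ (Fin n)),
      fderiv ℝ (fun y : EuclideanSpace ℝ (Fin n) => y i) x (e i) = 1 := fun i x => by
    rw [(hcd i x).fderiv]; simp [e]
  have hibp : ∀ i, ∫ x : EuclideanSpace ℝ (Fin n), x i * fderiv ℝ G x (e i) = -∫ x, G x := by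
    intro i
    rw [integral_mul_fderiv_eq_neg_fderiv_mul_of_integrable]
    · simp_rw [hone, one_mul]
    · simpa only [hone, one_mul] using h1
    · exact hint i
    · refine h2.norm.mono' (by fun_prop) (ae_of_all _ fun x => ?_)
      rw [norm_mul, norm_mul, norm_norm]
      exact mul_le_mul_of_nonneg_right (hcoord i x) (norm_nonneg _)
    · exact fun x _ => (hcd i x).differentiableAt
    · exact fun x _ => (hG.differentiable one_ne_zero) x
  simp_rw [hsum]
  rw [integral_finsetSum _ fun i _ => hint i]
  simp [hibp]

/-! ### Test functions and the moment bound -/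

/-- The test functions: `C¹`, with the function and its derivative bounded by the same `M`. The
derivative is the Fréchet derivative, whose norm is that of the gradient. -/
structure IsTest (n : ℕ) (M : ℝ) (f : EuclideanSpace ℝ (Fin n) → ℝ) : Prop where
  contDiff : ContDiff ℝ 1 f
  abs_le : ∀ x, |f x| ≤ M
  norm_fderiv_le : ∀ x, ‖fderiv ℝ f x‖ ≤ M

namespace IsTest
variable {M : ℝ} {f : EuclideanSpace ℝ (Fin n) → ℝ}

lemma continuous (hf : IsTest n M f) : Continuous f := hf.contDiff.continuous

lemma continuous_fderiv (hf : IsTest n M f) : Continuous (fderiv ℝ f) :=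
  hf.contDiff.continuous_fderiv one_ne_zero

lemma nonneg (hf : IsTest n M f) : 0 ≤ M := (abs_nonneg _).trans (hf.abs_le 0)

lemma sq_le (hf : IsTest n M f) (x : EuclideanSpace ℝ (Fin n)) : f x ^ 2 ≤ M ^ 2 := by
  have := hf.abs_le x
  rw [← sq_abs]
  gcongr

lemma norm_fderiv_sq_le (hf : IsTest n M f) (x : EuclideanSpace ℝ (Fin n)) :
    ‖fderiv ℝ f x‖ ^ 2 ≤ M ^ 2 := by
  have := hf.norm_fderiv_le x
  gcongr

lemma sub_const (hf : IsTest n M f) (c : ℝ) : IsTest n (M + |c|) fun x => f x - c where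
  contDiff := hf.contDiff.sub contDiff_const
  abs_le x := (abs_sub _ _).trans (add_le_add (hf.abs_le x) le_rfl)
  norm_fderiv_le x := by
    rw [fderiv_sub_const]
    exact (hf.norm_fderiv_le x).trans (by linarith [abs_nonneg c])

lemma const_mul (hf : IsTest n M f) (a : ℝ) : IsTest n (|a| * M) fun x => a * f x where
  contDiff := contDiff_const.mul hf.contDiff
  abs_le x := by
    rw [abs_mul]
    exact mul_le_mul_of_nonneg_left (hf.abs_le x) (abs_nonneg a)
  norm_fderiv_le x := by
    rw [fderiv_const_mul ((hf.contDiff.differentiable one_ne_zero) x), norm_smul, Real.norm_eq_abs]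
    exact mul_le_mul_of_nonneg_left (hf.norm_fderiv_le x) (abs_nonneg a)

lemma integrable_sq_mul_rpow (hβ : 1 < β) (hf : IsTest n M f) {a : ℝ} (ha : 0 ≤ a) (ha2 : a ≤ 2) :
    Integrable (fun x => f x ^ 2 * ‖x‖ ^ a) (gibbs n β) := by
  have hc := hf.continuous
  refine integrable_gibbs_of_le hβ (K := M ^ 2)
    ((hc.pow 2).mul (continuous_norm.rpow_const fun _ => Or.inr ha)) fun x => ?_
  rw [abs_of_nonneg (by positivity)]
  exact mul_le_mul (hf.sq_le x) (rpow_le_one_add_sq (norm_nonneg x) ha ha2) (by positivity)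
    (by positivity)

lemma integrable_fderiv_sq_mul_rpow (hβ : 1 < β) (hf : IsTest n M f) {a : ℝ} (ha : 0 ≤ a)
    (ha2 : a ≤ 2) : Integrable (fun x => ‖fderiv ℝ f x‖ ^ 2 * ‖x‖ ^ a) (gibbs n β) := by
  have hc := hf.continuous_fderiv
  refine integrable_gibbs_of_le hβ (K := M ^ 2)
    ((hc.norm.pow 2).mul (continuous_norm.rpow_const fun _ => Or.inr ha)) fun x => ?_
  rw [abs_of_nonneg (by positivity)]
  exact mul_le_mul (hf.norm_fderiv_sq_le x) (rpow_le_one_add_sq (norm_nonneg x) ha ha2)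
    (by positivity) (by positivity)

lemma integrable_sq (hβ : 1 < β) (hf : IsTest n M f) :
    Integrable (fun x => f x ^ 2) (gibbs n β) := by
  simpa using hf.integrable_sq_mul_rpow hβ le_rfl zero_le_two

lemma integrable_fderiv_sq (hβ : 1 < β) (hf : IsTest n M f) :
    Integrable (fun x => ‖fderiv ℝ f x‖ ^ 2) (gibbs n β) := by
  simpa using hf.integrable_fderiv_sq_mul_rpow hβ le_rfl zero_le_two

/-- Integrating by parts against the field `x` bounds the moment `∫ f² |x|^β`; the weight
`|x|^(2-β)` is what Young's inequality leaves on the gradient. -/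
lemma moment_le (hβ : 1 < β) (hβ2 : β ≤ 2) (hf : IsTest n M f) :
    (β - 1) * ∫ x, f x ^ 2 * ‖x‖ ^ β ∂(gibbs n β) ≤
      n * ∫ x, f x ^ 2 ∂(gibbs n β)
        + ∫ x, ‖fderiv ℝ f x‖ ^ 2 * ‖x‖ ^ (2 - β) ∂(gibbs n β) := by
  have hM := hf.nonneg
  have hρ := contDiff_gibbsDensity (n := n) hβ
  have hc := hf.continuous
  have hD := hf.continuous_fderiv
  have i1 := hf.integrable_sq_mul_rpow hβ (by linarith : 0 ≤ β) hβ2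
  have i2 := hf.integrable_sq hβ
  have i3 := hf.integrable_fderiv_sq_mul_rpow hβ (by linarith : 0 ≤ 2 - β) (by linarith)
  let G : EuclideanSpace ℝ (Fin n) → ℝ := fun y => gibbsDensity n β y * f y ^ 2
  have hG : ContDiff ℝ 1 G := hρ.mul (hf.contDiff.pow 2)
  have hGD : Continuous (fderiv ℝ G) := hG.continuous_fderiv one_ne_zero
  have hGx : ∀ x, fderiv ℝ G x x = gibbsDensity n β x *
      (2 * f x * fderiv ℝ f x x - β * (f x ^ 2 * ‖x‖ ^ β)) := by
    intro x
    have hx : ‖x‖ ^ (β - 2) * ‖x‖ ^ 2 = ‖x‖ ^ β := by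
      rw [← Real.rpow_two, ← Real.rpow_add' (norm_nonneg x) (by linarith)]
      ring_nf
    rw [(hasFDerivAt_sq_mul_gibbsDensity hβ hf.contDiff x).fderiv, ← hx]
    simp
    left
    ring
  have i4 : Integrable (fun x => 2 * f x * fderiv ℝ f x x) (gibbs n β) := by
    refine integrable_gibbs_of_le hβ (K := 2 * M * M) (by fun_prop) fun x => ?_
    rw [abs_mul, abs_mul, abs_two]
    have h1 : |fderiv ℝ f x x| ≤ M * (1 + ‖x‖ ^ 2) := by
      refine ((fderiv ℝ f x).le_opNorm x).trans ?_
      exact mul_le_mul (hf.norm_fderiv_le x) (by nlinarith [sq_nonneg (‖x‖ - 1)])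
        (norm_nonneg _) hM
    calc 2 * |f x| * |fderiv ℝ f x x| ≤ 2 * M * (M * (1 + ‖x‖ ^ 2)) := by
          have := hf.abs_le x
          gcongr
      _ = _ := by ring
  have hdiv : ∫ x, fderiv ℝ G x x = -(n * ∫ x, G x) := by
    refine integral_fderiv_self hG ((integrable_gibbs_iff hβ _).1 i2) ?_ ?_
    · have : Integrable (fun x => ‖x‖ * f x ^ 2) (gibbs n β) := by
        simpa [mul_comm] using hf.integrable_sq_mul_rpow hβ zero_le_one one_le_two
      refine ((integrable_gibbs_iff hβ _).1 this).congr (ae_of_all _ fun x => ?_)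
      simp only [G]; ring
    · have : Integrable (fun x => 2 * M * M * ‖x‖ ^ (1 : ℝ) + β * (M ^ 2 * ‖x‖ ^ β)) (gibbs n β) := by
        have hone : IsTest n 1 fun _ => 1 :=
          ⟨contDiff_const, fun x => by simp, fun x => by simp⟩
        have e1 := hone.integrable_sq_mul_rpow hβ zero_le_one one_le_two
        have e2 := hone.integrable_sq_mul_rpow hβ (by linarith : 0 ≤ β) hβ2
        simp only [one_pow, one_mul] at e1 e2
        exact (e1.const_mul _).add ((e2.const_mul _).const_mul _)
      refine ((integrable_gibbs_iff hβ _).1 this).mono' (by fun_prop) (ae_of_all _ fun x => ?_)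
      rw [norm_mul, norm_norm, norm_norm]
      have h0 := norm_fderiv_sq_mul_gibbsDensity_le hβ hf.contDiff x
      have h1 := hf.abs_le x
      have h2 := hf.norm_fderiv_le x
      have h3 := hf.sq_le x
      have hp := (gibbsDensity_pos hβ x).le
      have hx : ‖x‖ ^ (β - 1) * ‖x‖ = ‖x‖ ^ β := by
        rw [← Real.rpow_add_one' (norm_nonneg x) (by linarith)]
        ring_nf
      calc ‖x‖ * ‖fderiv ℝ G x‖ ≤ ‖x‖ * (gibbsDensity n β x *
            (2 * |f x| * ‖fderiv ℝ f x‖ + f x ^ 2 * (β * ‖x‖ ^ (β - 1)))) := by gcongr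
        _ ≤ ‖x‖ * (gibbsDensity n β x *
            (2 * M * M + M ^ 2 * (β * ‖x‖ ^ (β - 1)))) := by gcongr
        _ = _ := by rw [← hx, Real.rpow_one]; ring
  have hkey : β * ∫ x, f x ^ 2 * ‖x‖ ^ β ∂(gibbs n β) =
      n * (∫ x, f x ^ 2 ∂(gibbs n β)) + ∫ x, 2 * f x * fderiv ℝ f x x ∂(gibbs n β) := by
    simp_rw [hGx] at hdiv
    rw [← integral_gibbs hβ, ← integral_gibbs hβ, integral_sub i4 (i1.const_mul _),
      integral_const_mul] at hdiv
    linarith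
  have hyoung : ∫ x, 2 * f x * fderiv ℝ f x x ∂(gibbs n β) ≤
      (∫ x, f x ^ 2 * ‖x‖ ^ β ∂(gibbs n β))
        + ∫ x, ‖fderiv ℝ f x‖ ^ 2 * ‖x‖ ^ (2 - β) ∂(gibbs n β) := by
    rw [← integral_add i1 i3]
    refine integral_mono i4 (i1.add i3) fun x => ?_
    have hx : ‖x‖ ^ (β / 2) * ‖x‖ ^ ((2 - β) / 2) = ‖x‖ := by
      rw [← Real.rpow_add' (norm_nonneg x) (by ring_nf; norm_num)]
      ring_nf
      exact Real.rpow_one _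
    have hx1 : ‖x‖ ^ β = (‖x‖ ^ (β / 2)) ^ 2 := by
      rw [← Real.rpow_mul_natCast (norm_nonneg x)]; norm_num
    have hx2 : ‖x‖ ^ (2 - β) = (‖x‖ ^ ((2 - β) / 2)) ^ 2 := by
      rw [← Real.rpow_mul_natCast (norm_nonneg x)]; norm_num
    have h1 : |fderiv ℝ f x x| ≤ ‖fderiv ℝ f x‖ * ‖x‖ := (fderiv ℝ f x).le_opNorm x
    calc 2 * f x * fderiv ℝ f x x ≤ 2 * (|f x| * |fderiv ℝ f x x|) := by
          rw [mul_assoc, ← abs_mul]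
          linarith [le_abs_self (f x * fderiv ℝ f x x)]
      _ ≤ 2 * (|f x| * (‖fderiv ℝ f x‖ * ‖x‖)) := by gcongr
      _ = 2 * (|f x| * ‖x‖ ^ (β / 2)) * (‖fderiv ℝ f x‖ * ‖x‖ ^ ((2 - β) / 2)) := by
          nth_rw 1 [← hx]; ring
      _ ≤ (|f x| * ‖x‖ ^ (β / 2)) ^ 2 + (‖fderiv ℝ f x‖ * ‖x‖ ^ ((2 - β) / 2)) ^ 2 :=
          two_mul_le_add_sq _ _
      _ = _ := by rw [mul_pow, mul_pow, sq_abs, hx1, hx2]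
  linarith

end IsTest

/-! ### Defective logarithmic Sobolev inequality -/

/-- The Euclidean Sobolev inequality gives a linear bound on the entropy of a probability density
by the `L¹` norm of its gradient. -/
lemma integral_mul_log_le (n : ℕ) (hn : 1 ≤ n) : ∃ K : ℝ, 0 ≤ K ∧
    ∀ u : EuclideanSpace ℝ (Fin n) → ℝ, ContDiff ℝ 1 u → (∀ x, 0 ≤ u x) → Integrable u →
      Integrable (fderiv ℝ u) → Integrable (fun x => u x * log (u x)) → ∫ x, u x = 1 →
      ∫ x, u x * log (u x) ≤ K * (1 + ∫ x, ‖fderiv ℝ u x‖) := by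
  obtain ⟨p, hp, C, hC⟩ := sobolev n hn
  have hp1 : 0 < p - 1 := by linarith
  refine ⟨(C + 1) * (1 + 1 / (p - 1)), by positivity, fun u hu hu0 hui hDi hent h1 => ?_⟩
  set A := ∫ x, ‖fderiv ℝ u x‖ with hA
  have hA0 : 0 ≤ A := integral_nonneg fun x => norm_nonneg _
  -- `C + 1` keeps `S` positive when the Sobolev constant vanishes.
  set S : ℝ := (C + 1) * (1 + A) with hS
  have hS0 : 0 < S := by positivity
  have hnorm : eLpNorm u (ENNReal.ofReal p) volume ≤ ENNReal.ofReal S := by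
    refine (hC u hu).trans ?_
    have e1 : eLpNorm (fderiv ℝ u) 1 volume = ENNReal.ofReal A := by
      rw [eLpNorm_one_eq_lintegral_enorm, hA, ofReal_integral_norm_eq_lintegral_enorm hDi]
    have e2 : eLpNorm u 1 volume = ENNReal.ofReal 1 := by
      rw [eLpNorm_one_eq_lintegral_enorm, ← ofReal_integral_norm_eq_lintegral_enorm hui, ← h1]
      simp_rw [Real.norm_of_nonneg (hu0 _)]
    rw [e1, e2, ← ENNReal.ofReal_add hA0 zero_le_one, ← ENNReal.ofReal_coe_nnreal,
      ← ENNReal.ofReal_mul C.coe_nonneg]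
    refine ENNReal.ofReal_le_ofReal ?_
    rw [hS]
    nlinarith
  have hmem : MemLp u (ENNReal.ofReal p) volume :=
    ⟨hu.continuous.aestronglyMeasurable, hnorm.trans_lt ENNReal.ofReal_lt_top⟩
  have hp0 : ENNReal.ofReal p ≠ 0 := by simpa using by linarith
  have hpi : Integrable fun x => u x ^ p := by
    have := hmem.integrable_norm_rpow hp0 ENNReal.ofReal_ne_top
    simpa [ENNReal.toReal_ofReal (by linarith : 0 ≤ p), abs_of_nonneg (hu0 _)] using this
  have hpS : ∫ x, u x ^ p ≤ S ^ p := by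
    have h := hmem.eLpNorm_eq_integral_rpow_norm hp0 ENNReal.ofReal_ne_top
    rw [ENNReal.toReal_ofReal (by linarith : 0 ≤ p)] at h
    simp_rw [Real.norm_of_nonneg (hu0 _)] at h
    rw [h, ENNReal.ofReal_le_ofReal_iff hS0.le] at hnorm
    have hI : 0 ≤ ∫ x, u x ^ p := integral_nonneg fun x => Real.rpow_nonneg (hu0 x) _
    calc ∫ x, u x ^ p = ((∫ x, u x ^ p) ^ p⁻¹) ^ p := by
          rw [← Real.rpow_mul hI, inv_mul_cancel₀ (by linarith), Real.rpow_one]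
      _ ≤ S ^ p := Real.rpow_le_rpow (Real.rpow_nonneg hI _) hnorm (by linarith)
  -- `log s ≤ s ^ (p - 1) / (p - 1)` at `s = u / S`
  have hpt : ∀ x, u x * log (u x) ≤ S ^ (1 - p) / (p - 1) * u x ^ p + log S * u x := by
    intro x
    rcases (hu0 x).eq_or_lt with h0 | h0
    · rw [← h0]
      have := Real.zero_rpow (by linarith : p ≠ 0)
      simp [this]
    · have hl := Real.log_le_rpow_div (div_pos h0 hS0).le hp1
      rw [Real.log_div h0.ne' hS0.ne', Real.div_rpow h0.le hS0.le] at hl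
      have h2 := mul_le_mul_of_nonneg_left hl h0.le
      have h3 : u x ^ p = u x ^ (p - 1) * u x := by
        rw [← Real.rpow_add_one h0.ne']; ring_nf
      have h4 : S ^ (1 - p) = (S ^ (p - 1))⁻¹ := by
        rw [← Real.rpow_neg hS0.le]; ring_nf
      have h5 : u x * (u x ^ (p - 1) / S ^ (p - 1) / (p - 1))
          = S ^ (1 - p) / (p - 1) * u x ^ p := by
        rw [h3, h4]; field_simp
      linarith
  calc ∫ x, u x * log (u x)
      ≤ ∫ x, (S ^ (1 - p) / (p - 1) * u x ^ p + log S * u x) :=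
        integral_mono hent ((hpi.const_mul _).add (hui.const_mul _)) hpt
    _ = S ^ (1 - p) / (p - 1) * (∫ x, u x ^ p) + log S := by
        rw [integral_add (hpi.const_mul _) (hui.const_mul _), integral_const_mul,
          integral_const_mul, h1, mul_one]
    _ ≤ S ^ (1 - p) / (p - 1) * S ^ p + S := by
        gcongr
        linarith [Real.log_le_sub_one_of_pos hS0]
    _ = S / (p - 1) + S := by
        have : S ^ (1 - p) * S ^ p = S := by
          rw [← Real.rpow_add hS0]; simp
        rw [div_mul_eq_mul_div, this]
    _ = _ := by rw [hS]; ring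

/-- The weighted Dirichlet energy `∫ |∇f|² (1 + |x|^(2-β)) dμ_β`. -/
noncomputable def energy (n : ℕ) (β : ℝ) (f : EuclideanSpace ℝ (Fin n) → ℝ) : ℝ :=
  ∫ x, ‖fderiv ℝ f x‖ ^ 2 * (1 + ‖x‖ ^ (2 - β)) ∂(gibbs n β)

lemma energy_nonneg (f : EuclideanSpace ℝ (Fin n) → ℝ) : 0 ≤ energy n β f :=
  integral_nonneg fun x => by positivity

namespace IsTest
variable {M : ℝ} {f : EuclideanSpace ℝ (Fin n) → ℝ}

lemma energy_eq (hβ : 1 < β) (hβ2 : β ≤ 2) (hf : IsTest n M f) :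
    energy n β f = (∫ x, ‖fderiv ℝ f x‖ ^ 2 ∂(gibbs n β))
      + ∫ x, ‖fderiv ℝ f x‖ ^ 2 * ‖x‖ ^ (2 - β) ∂(gibbs n β) := by
  rw [energy, ← integral_add (hf.integrable_fderiv_sq hβ)
    (hf.integrable_fderiv_sq_mul_rpow hβ (by linarith) (by linarith))]
  simp_rw [mul_add, mul_one]

lemma integral_fderiv_sq_le_energy (hβ : 1 < β) (hβ2 : β ≤ 2) (hf : IsTest n M f) :
    ∫ x, ‖fderiv ℝ f x‖ ^ 2 ∂(gibbs n β) ≤ energy n β f := by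
  rw [hf.energy_eq hβ hβ2]
  exact le_add_of_nonneg_right (integral_nonneg fun x => by positivity)

lemma moment_le_energy (hβ : 1 < β) (hβ2 : β ≤ 2) (hf : IsTest n M f) :
    (β - 1) * ∫ x, f x ^ 2 * ‖x‖ ^ β ∂(gibbs n β) ≤
      n * ∫ x, f x ^ 2 ∂(gibbs n β) + energy n β f := by
  refine (hf.moment_le hβ hβ2).trans ?_
  rw [hf.energy_eq hβ hβ2]
  have : 0 ≤ ∫ x, ‖fderiv ℝ f x‖ ^ 2 ∂(gibbs n β) := integral_nonneg fun x => by positivity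
  linarith

lemma integrable_sq_mul_log_sq (hβ : 1 < β) (hf : IsTest n M f) :
    Integrable (fun x => f x ^ 2 * log (f x ^ 2)) (gibbs n β) := by
  obtain ⟨L, hL⟩ := (isCompact_Icc (a := (0 : ℝ)) (b := M ^ 2)).exists_bound_of_continuousOn
    Real.continuous_mul_log.continuousOn
  have hc := hf.continuous
  refine integrable_gibbs_of_le hβ (K := L)
    (Real.continuous_mul_log.comp (hc.pow 2)) fun x => ?_
  have h := hL (f x ^ 2) ⟨sq_nonneg _, hf.sq_le x⟩
  have h0 := (norm_nonneg _).trans h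
  exact h.trans (le_mul_of_one_le_right h0 (by nlinarith [norm_nonneg x]))

end IsTest

/-- A defective logarithmic Sobolev inequality: apply the Euclidean entropy bound to the density
`f² ρ`, and absorb the moment of order `β` produced by `log ρ` and `∇ρ` with
`IsTest.moment_le`. -/
lemma defective_logSobolev (n : ℕ) (hn : 1 ≤ n) {β : ℝ} (hβ : 1 < β) (hβ2 : β ≤ 2) :
    ∃ K : ℝ, 0 ≤ K ∧ ∀ M f, IsTest n M f → ∫ x, f x ^ 2 ∂(gibbs n β) = 1 →
      ∫ x, f x ^ 2 * log (f x ^ 2) ∂(gibbs n β) ≤ K * (1 + energy n β f) := by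
  obtain ⟨K, hK0, hK⟩ := integral_mul_log_le n hn
  have hβ1 : 0 < β - 1 := by linarith
  refine ⟨4 * K + |log (partitionFn n β)| + (2 * K + 1) * ((n + 1) / (β - 1)), by positivity,
    fun M f hf h1 => ?_⟩
  have hE := energy_nonneg (β := β) f
  have hmom := hf.moment_le_energy hβ hβ2
  have hE0 := hf.integral_fderiv_sq_le_energy hβ hβ2
  have i0 := hf.integrable_sq hβ
  have i1 := hf.integrable_sq_mul_rpow hβ (by linarith : 0 ≤ β) hβ2
  have i2 := hf.integrable_fderiv_sq hβ
  have i3 := hf.integrable_sq_mul_log_sq hβ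
  have hρ := contDiff_gibbsDensity (n := n) hβ
  have hp := gibbsDensity_pos (n := n) hβ
  have hZ := partitionFn_pos (n := n) hβ
  set m := ∫ x, f x ^ 2 * ‖x‖ ^ β ∂(gibbs n β)
  set u : EuclideanSpace ℝ (Fin n) → ℝ := fun y => gibbsDensity n β y * f y ^ 2
  have hu : ContDiff ℝ 1 u := hρ.mul (hf.contDiff.pow 2)
  have hulog : ∀ x, u x * log (u x) = gibbsDensity n β x *
      (f x ^ 2 * log (f x ^ 2) - (log (partitionFn n β) * f x ^ 2 + f x ^ 2 * ‖x‖ ^ β)) := by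
    intro x
    by_cases h0 : f x = 0
    · simp [u, h0]
    · have h2 : f x ^ 2 ≠ 0 := pow_ne_zero 2 h0
      have : log (gibbsDensity n β x) = - log (partitionFn n β) - ‖x‖ ^ β := by
        rw [gibbsDensity, Real.log_mul (inv_ne_zero hZ.ne') (exp_pos _).ne', Real.log_inv,
          Real.log_exp]
        ring
      simp only [u]
      rw [Real.log_mul (hp x).ne' h2, this]
      ring
  have i4 : Integrable (fun x => log (partitionFn n β) * f x ^ 2 + f x ^ 2 * ‖x‖ ^ β)
      (gibbs n β) := (i0.const_mul _).add i1
  have i5 := i3.sub i4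
  have hDu : ∀ x, ‖fderiv ℝ u x‖ ≤ gibbsDensity n β x *
      (3 * f x ^ 2 + ‖fderiv ℝ f x‖ ^ 2 + 2 * (f x ^ 2 * ‖x‖ ^ β)) := by
    intro x
    refine (norm_fderiv_sq_mul_gibbsDensity_le hβ hf.contDiff x).trans
      (mul_le_mul_of_nonneg_left ?_ (hp x).le)
    have e1 : 2 * |f x| * ‖fderiv ℝ f x‖ ≤ f x ^ 2 + ‖fderiv ℝ f x‖ ^ 2 := by
      rw [← sq_abs (f x)]
      exact two_mul_le_add_sq _ _
    have e2 : β * ‖x‖ ^ (β - 1) ≤ 2 * (1 + ‖x‖ ^ β) :=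
      mul_le_mul hβ2 (rpow_le_one_add_rpow (norm_nonneg x) hβ1.le (by linarith)) (by positivity)
        zero_le_two
    nlinarith [mul_le_mul_of_nonneg_left e2 (sq_nonneg (f x))]
  have i8 : Integrable (fun x => 3 * f x ^ 2 + ‖fderiv ℝ f x‖ ^ 2) (gibbs n β) :=
    (i0.const_mul _).add i2
  have i6 : Integrable (fun x => 3 * f x ^ 2 + ‖fderiv ℝ f x‖ ^ 2 + 2 * (f x ^ 2 * ‖x‖ ^ β))
      (gibbs n β) := i8.add (i1.const_mul _)
  have i7 := (integrable_gibbs_iff hβ _).1 i6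
  have hDi : Integrable (fderiv ℝ u) :=
    i7.mono' (hu.continuous_fderiv one_ne_zero).aestronglyMeasurable (ae_of_all _ hDu)
  have hDI : ∫ x, ‖fderiv ℝ u x‖ ≤ 3 + energy n β f + 2 * m := by
    calc ∫ x, ‖fderiv ℝ u x‖ ≤ _ := integral_mono hDi.norm i7 hDu
      _ = 3 + (∫ x, ‖fderiv ℝ f x‖ ^ 2 ∂(gibbs n β)) + 2 * m := by
        rw [← integral_gibbs hβ, integral_add i8 (i1.const_mul _),
          integral_add (i0.const_mul _) i2, integral_const_mul, integral_const_mul, h1, mul_one]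
      _ ≤ _ := by linarith
  have hmain := hK u hu (fun x => mul_nonneg (hp x).le (sq_nonneg _))
    ((integrable_gibbs_iff hβ _).1 i0) hDi
    (((integrable_gibbs_iff hβ _).1 i5).congr (ae_of_all _ fun x => (hulog x).symm))
    (by rw [← h1, integral_gibbs hβ])
  simp_rw [hulog] at hmain
  rw [← integral_gibbs hβ, integral_sub i3 i4, integral_add (i0.const_mul _) i1,
    integral_const_mul, h1] at hmain
  have hm : m ≤ (n + 1) / (β - 1) * (1 + energy n β f) := by
    rw [div_mul_eq_mul_div, le_div_iff₀ hβ1]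
    rw [h1] at hmom
    have : 0 ≤ (n : ℝ) * energy n β f := by positivity
    linarith
  have h3 := mul_le_mul_of_nonneg_left hDI hK0
  have h4 := mul_le_mul_of_nonneg_left hm (by positivity : 0 ≤ 2 * K + 1)
  have h5 := le_abs_self (log (partitionFn n β))
  have h6 := mul_nonneg (abs_nonneg (log (partitionFn n β))) hE
  have h7 := mul_nonneg hK0 hE
  nlinarith

/-! ### Weighted Poincaré inequality -/

/-- A weighted Poincaré inequality: the moment bound controls `h = f - c` outside a large ball,
and the Poincaré inequality on that ball, where the density is bounded above and below, controls
the rest. -/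
lemma weighted_poincare (n : ℕ) {β : ℝ} (hβ : 1 < β) (hβ2 : β ≤ 2) :
    ∃ C : ℝ, 0 ≤ C ∧ ∀ M f, IsTest n M f → ∃ c, ∫ x, (f x - c) ^ 2 ∂(gibbs n β) ≤
      C * energy n β f := by
  have hβ1 : 0 < β - 1 := by linarith
  -- Outside the ball `{‖x‖ ^ β < T}` one has `h² ≤ T⁻¹ h² ‖x‖ ^ β`; this `T` makes the factor of
  -- `∫ h²` in the resulting moment bound at most `1 / 2`.
  set T : ℝ := 2 * (n + 1) / (β - 1)
  have hT : 0 < T := by positivity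
  set R : ℝ := T ^ β⁻¹
  have hR : 0 < R := Real.rpow_pos_of_pos hT _
  have hRT : R ^ β = T := Real.rpow_inv_rpow hT.le (by linarith)
  have hZ := partitionFn_pos (n := n) hβ
  have hp := gibbsDensity_pos (n := n) hβ
  obtain ⟨C, hC⟩ := local_poincare n hR
  refine ⟨2 * (exp T * C) + 1, by positivity, fun M f hf => ?_⟩
  obtain ⟨y, hy⟩ := hC f hf.contDiff
  refine ⟨f y, ?_⟩
  set B := Metric.ball (0 : EuclideanSpace ℝ (Fin n)) R
  have hB : MeasurableSet B := measurableSet_ball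
  have hh := hf.sub_const (f y)
  have hE : energy n β (fun x => f x - f y) = energy n β f := by
    simp only [energy, fderiv_sub_const]
  have hmom := hh.moment_le_energy hβ hβ2
  rw [hE] at hmom
  have i0 := hh.integrable_sq hβ
  have i1 := hh.integrable_sq_mul_rpow hβ (by linarith : 0 ≤ β) hβ2
  have i2 := hf.integrable_fderiv_sq hβ
  have hE0 := hf.integral_fderiv_sq_le_energy hβ hβ2
  have hfc := hf.continuous
  have hDc := hf.continuous_fderiv
  have hball : IntegrableOn (fun x => (f x - f y) ^ 2) B :=
    ((Continuous.continuousOn (by fun_prop)).integrableOn_compact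
      (isCompact_closedBall 0 R)).mono_set Metric.ball_subset_closedBall
  have hballD : IntegrableOn (fun x => ‖fderiv ℝ f x‖ ^ 2) B :=
    ((Continuous.continuousOn (by fun_prop)).integrableOn_compact
      (isCompact_closedBall 0 R)).mono_set Metric.ball_subset_closedBall
  have hloc : ∫ x in B, (f x - f y) ^ 2 ≤ C * ∫ x in B, ‖fderiv ℝ f x‖ ^ 2 := by
    rw [← ofReal_integral_eq_lintegral_ofReal hball (ae_of_all _ fun x => sq_nonneg _),
      ← ofReal_integral_eq_lintegral_ofReal hballD (ae_of_all _ fun x => sq_nonneg _),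
      ← ENNReal.ofReal_coe_nnreal, ← ENNReal.ofReal_mul C.coe_nonneg] at hy
    refine (ENNReal.ofReal_le_ofReal_iff ?_).1 hy
    exact mul_nonneg C.coe_nonneg (integral_nonneg fun x => sq_nonneg _)
  have hup : ∀ x, gibbsDensity n β x ≤ (partitionFn n β)⁻¹ := fun x =>
    mul_le_of_le_one_right (inv_pos.2 hZ).le
      (Real.exp_le_one_iff.2 (by have := Real.rpow_nonneg (norm_nonneg x) β; linarith))
  have hlow : ∀ x ∈ B, (partitionFn n β)⁻¹ ≤ exp T * gibbsDensity n β x := by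
    intro x hx
    have hx' : ‖x‖ ≤ R := (mem_ball_zero_iff.1 hx).le
    have : ‖x‖ ^ β ≤ T := hRT ▸ Real.rpow_le_rpow (norm_nonneg x) hx' (by linarith)
    rw [gibbsDensity, mul_left_comm, ← Real.exp_add]
    exact le_mul_of_one_le_right (inv_pos.2 hZ).le (Real.one_le_exp (by linarith))
  have hin : ∫ x in B, gibbsDensity n β x * (f x - f y) ^ 2 ≤ exp T * C * energy n β f := by
    calc ∫ x in B, gibbsDensity n β x * (f x - f y) ^ 2
        ≤ ∫ x in B, (partitionFn n β)⁻¹ * (f x - f y) ^ 2 :=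
          setIntegral_mono ((integrable_gibbs_iff hβ _).1 i0).integrableOn (hball.const_mul _)
            fun x => mul_le_mul_of_nonneg_right (hup x) (sq_nonneg _)
      _ = (partitionFn n β)⁻¹ * ∫ x in B, (f x - f y) ^ 2 := integral_const_mul _ _
      _ ≤ (partitionFn n β)⁻¹ * (C * ∫ x in B, ‖fderiv ℝ f x‖ ^ 2) := by gcongr
      _ = C * ∫ x in B, (partitionFn n β)⁻¹ * ‖fderiv ℝ f x‖ ^ 2 := by
          rw [integral_const_mul]; ring
      _ ≤ C * ∫ x in B, exp T * (gibbsDensity n β x * ‖fderiv ℝ f x‖ ^ 2) := by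
          refine mul_le_mul_of_nonneg_left ?_ C.coe_nonneg
          refine setIntegral_mono_on (hballD.const_mul _)
            (((integrable_gibbs_iff hβ _).1 i2).integrableOn.const_mul _) hB fun x hx => ?_
          rw [← mul_assoc]
          exact mul_le_mul_of_nonneg_right (hlow x hx) (sq_nonneg _)
      _ = exp T * C * ∫ x in B, gibbsDensity n β x * ‖fderiv ℝ f x‖ ^ 2 := by
          rw [integral_const_mul]; ring
      _ ≤ exp T * C * ∫ x, gibbsDensity n β x * ‖fderiv ℝ f x‖ ^ 2 := by
          refine mul_le_mul_of_nonneg_left ?_ (by positivity)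
          exact setIntegral_le_integral ((integrable_gibbs_iff hβ _).1 i2)
            (ae_of_all _ fun x => mul_nonneg (hp x).le (sq_nonneg _))
      _ ≤ _ := by
          rw [← integral_gibbs hβ]
          gcongr
  have hout : ∫ x in Bᶜ, gibbsDensity n β x * (f x - f y) ^ 2 ≤
      T⁻¹ * ∫ x, (f x - f y) ^ 2 * ‖x‖ ^ β ∂(gibbs n β) := by
    have j1 := ((integrable_gibbs_iff hβ _).1 i1).const_mul T⁻¹
    calc ∫ x in Bᶜ, gibbsDensity n β x * (f x - f y) ^ 2
        ≤ ∫ x in Bᶜ, T⁻¹ * (gibbsDensity n β x * ((f x - f y) ^ 2 * ‖x‖ ^ β)) := by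
          refine setIntegral_mono_on ((integrable_gibbs_iff hβ _).1 i0).integrableOn
            j1.integrableOn hB.compl fun x hx => ?_
          have hx' : R ≤ ‖x‖ := by simpa [B] using hx
          have : T ≤ ‖x‖ ^ β := hRT ▸ Real.rpow_le_rpow hR.le hx' (by linarith)
          rw [inv_mul_eq_div, le_div_iff₀ hT, mul_assoc]
          have := hp x
          gcongr
      _ ≤ ∫ x, T⁻¹ * (gibbsDensity n β x * ((f x - f y) ^ 2 * ‖x‖ ^ β)) :=
          setIntegral_le_integral j1 (ae_of_all _ fun x => by
            have := hp x
            simp only [Pi.zero_apply]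
            positivity)
      _ = _ := by rw [integral_const_mul, ← integral_gibbs hβ]
  have hsum : ∫ x, (f x - f y) ^ 2 ∂(gibbs n β) =
      (∫ x in B, gibbsDensity n β x * (f x - f y) ^ 2)
        + ∫ x in Bᶜ, gibbsDensity n β x * (f x - f y) ^ 2 := by
    rw [integral_gibbs hβ, integral_add_compl hB ((integrable_gibbs_iff hβ _).1 i0)]
  set v := ∫ x, (f x - f y) ^ 2 ∂(gibbs n β)
  set m := ∫ x, (f x - f y) ^ 2 * ‖x‖ ^ β ∂(gibbs n β)
  have hv : 0 ≤ v := integral_nonneg fun x => sq_nonneg _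
  have hE' := energy_nonneg (β := β) f
  have hTm : T⁻¹ * m ≤ v / 2 + energy n β f / 2 := by
    have : T⁻¹ * m = ((β - 1) * m) / (2 * (n + 1)) := by
      simp only [T]; field_simp
    rw [this, div_le_iff₀ (by positivity)]
    have : 0 ≤ (n : ℝ) * energy n β f := by positivity
    nlinarith
  linarith

end

/-! ### Tightening the defective inequality -/

/-- Weighted logarithmic Sobolev inequality for `dμ_β = Z_β⁻¹ e^{−|x|^β} dx`, `1 < β ≤ 2`:
`Ent_{μ_β}(f²) ≤ C ∫ |∇f|² (1+|x|^{2−β}) dμ_β`. -/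
theorem weighted_logSobolev_exp_beta (n : ℕ) (hn : 1 ≤ n)
    (β : ℝ) (hβ : β ∈ Set.Ioc (1:ℝ) 2)
    (Z : ℝ) (hZ : Z = ∫ x : EuclideanSpace ℝ (Fin n), Real.exp (-‖x‖ ^ β))
    (μ : Measure (EuclideanSpace ℝ (Fin n)))
    (hμ : μ = volume.withDensity (fun x => ENNReal.ofReal (Z⁻¹ * Real.exp (-‖x‖ ^ β)))) :
    ∃ C > (0:ℝ), ∀ f : EuclideanSpace ℝ (Fin n) → ℝ,
      ContDiff ℝ 1 f → (∃ M, ∀ x, |f x| ≤ M) → (∃ M, ∀ x, ‖gradient f x‖ ≤ M) →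
      entropy μ (fun x => (f x) ^ 2)
        ≤ C * ∫ x, ‖gradient f x‖ ^ 2 * (1 + ‖x‖ ^ (2 - β)) ∂μ := by
  obtain ⟨hβ1, hβ2⟩ := hβ
  have hμ' : μ = gibbs n β := by
    rw [hμ, hZ]; rfl
  obtain ⟨P, hP0, hP⟩ := weighted_poincare n hβ1 hβ2
  obtain ⟨K, hK0, hK⟩ := defective_logSobolev n hn hβ1 hβ2
  refine ⟨9 * (3 * P + K * P + K) + 1, by positivity, ?_⟩
  rintro f hf ⟨M₁, hM₁⟩ ⟨M₂, hM₂⟩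
  have hgrad : ∀ x, ‖gradient f x‖ = ‖fderiv ℝ f x‖ := fun x =>
    LinearIsometryEquiv.norm_map _ _
  have hT : IsTest n (max M₁ M₂) f :=
    ⟨hf, fun x => (hM₁ x).trans (le_max_left _ _),
      fun x => (hgrad x ▸ hM₂ x).trans (le_max_right _ _)⟩
  simp_rw [hgrad]
  rw [hμ']
  change _ ≤ _ * energy n β f
  have := isProbabilityMeasure_gibbs (n := n) hβ1
  have hE := energy_nonneg (β := β) f
  obtain ⟨c, hc⟩ := hP _ f hT
  have hTc := hT.sub_const c
  set v := ∫ x, (f x - c) ^ 2 ∂(gibbs n β) with hvdef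
  have hv0 : 0 ≤ v := integral_nonneg fun x => sq_nonneg _
  -- If `v = 0` then `f = c` almost everywhere and the entropy vanishes.
  rcases hv0.eq_or_lt with hv | hv
  · have hae : (fun x => f x ^ 2) =ᵐ[gibbs n β] fun _ => c ^ 2 := by
      have := (integral_eq_zero_iff_of_nonneg (fun x => sq_nonneg (f x - c))
        (hTc.integrable_sq hβ1)).1 hv.symm
      filter_upwards [this] with x hx
      have : f x - c = 0 := by simpa using hx
      rw [sub_eq_zero.1 this]
    have h0 : entropy (gibbs n β) (fun x => f x ^ 2) = 0 := by
      have hlog : (fun x => f x ^ 2 * log (f x ^ 2)) =ᵐ[gibbs n β]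
          fun _ => c ^ 2 * log (c ^ 2) := by
        filter_upwards [hae] with x hx
        rw [hx]
      rw [entropy, integral_congr_ae hlog, integral_congr_ae hae]
      simp
    rw [h0]
    positivity
  · have hs : 0 < √v := Real.sqrt_pos.2 hv
    -- The defective inequality is applied to the normalized function `(f - c) / √v`.
    have hk := hTc.const_mul (√v)⁻¹
    have hksq : ∀ x, ((√v)⁻¹ * (f x - c)) ^ 2 = (f x - c) ^ 2 / v := fun x => by
      rw [mul_pow, inv_pow, Real.sq_sqrt hv.le, inv_mul_eq_div]
    have hkE : energy n β (fun x => (√v)⁻¹ * (f x - c)) = energy n β f / v := by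
      have hd : ∀ x, ‖fderiv ℝ (fun x => (√v)⁻¹ * (f x - c)) x‖ ^ 2
          = v⁻¹ * ‖fderiv ℝ f x‖ ^ 2 := fun x => by
        rw [fderiv_const_mul ((hTc.contDiff.differentiable one_ne_zero) x), fderiv_sub_const,
          norm_smul, mul_pow, norm_inv, inv_pow, Real.norm_of_nonneg hs.le, Real.sq_sqrt hv.le]
      simp only [energy, hd, mul_assoc]
      rw [integral_const_mul, inv_mul_eq_div]
    have hk1 : ∫ x, ((√v)⁻¹ * (f x - c)) ^ 2 ∂(gibbs n β) = 1 := by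
      simp_rw [hksq]
      rw [integral_div, ← hvdef, div_self hv.ne']
    have hdef := hK _ _ hk hk1
    simp_rw [hksq, hkE] at hdef
    have hshift := entropy_le_of_shift (gibbs n β) hf.continuous hT.abs_le c hv hvdef
    have hcancel : v * (energy n β f / v) = energy n β f := mul_div_cancel₀ _ hv.ne'
    calc entropy (gibbs n β) (fun x => f x ^ 2)
        ≤ 9 * v * (3 + K * (1 + energy n β f / v)) := hshift.trans (by gcongr)
      _ = 9 * ((3 + K) * v + K * (v * (energy n β f / v))) := by ring
      _ ≤ 9 * ((3 + K) * (P * energy n β f) + K * energy n β f) := by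
          rw [hcancel]; gcongr
      _ ≤ _ := by nlinarith
end

section
/- Let n ≥ 1, 1 < β ≤ 2, a ∈ (0,1), and let W : ℝ^n → [1,∞) be a smooth function with W(x) = e^{a|x|^β} for all |x| ≥ 1. Then there exist constants c > 0, b ≥ 0 and R ≥ 1 such that for every x ∈ ℝ^n, ΔW(x) − β|x|^{β−2} x·∇W(x) ≤ −c|x|^{2(β−1)} W(x) + b·1_{B(0,R)}(x). -/
/-!
For `r = ‖x‖ > 1` the function `W` is the explicit radial function `e^{a r^β}`, and a direct
computation (`lap_of_eq_exp`, `drift_of_eq_exp`) gives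
`LW = (a β (n + β - 2) r^{β-2} - a (1 - a) β² r^{2(β-1)}) W`.
The second term dominates the first by a factor of order `r^β`, so for `r ≥ R` half of it absorbs
the first and the other half is the required `-c r^{2(β-1)} W`. On the ball of radius `R` only
boundedness is needed: `ΔW`, `∇W` and `W` are continuous, and the singularity of `‖x‖^{β-2}` at the
origin is cancelled by the factor `x` in `x·∇W` (`neg_drift_le`).
-/

open MeasureTheory Real Filter Set
open scoped RealInnerProductSpace

/-- Away from the origin `x ↦ ‖x‖ ^ p` is differentiable for every real exponent `p`. -/
theorem hasFDerivAt_norm_rpow_of_ne {E : Type*} [NormedAddCommGroup E] [InnerProductSpace ℝ E]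
    (p : ℝ) {x : E} (hx : x ≠ 0) :
    HasFDerivAt (fun y : E => ‖y‖ ^ p) ((p * ‖x‖ ^ (p - 2)) • innerSL ℝ x) x := by
  apply HasStrictFDerivAt.hasFDerivAt
  convert! (hasStrictFDerivAt_norm_sq x).rpow_const (p := p / 2) (by simp [hx]) using 0
  simp_rw [← Real.rpow_natCast_mul (norm_nonneg _), ← Nat.cast_smul_eq_nsmul ℝ, smul_smul]
  ring_nf

theorem hasFDerivAt_exp_norm_rpow {E : Type*} [NormedAddCommGroup E] [InnerProductSpace ℝ E]
    (a β : ℝ) {x : E} (hx : x ≠ 0) :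
    HasFDerivAt (fun y : E => Real.exp (a * ‖y‖ ^ β))
      ((a * β * ‖x‖ ^ (β - 2) * Real.exp (a * ‖x‖ ^ β)) • innerSL ℝ x) x := by
  have h := ((hasFDerivAt_norm_rpow_of_ne β hx).const_mul a).exp
  refine h.congr_fderiv ?_
  rw [smul_smul, smul_smul]
  congr 1; ring

section Exterior

variable {n : ℕ} {β a : ℝ} {W : EuclideanSpace ℝ (Fin n) → ℝ}

theorem fderiv_of_eq_exp
    (hW_eq : ∀ x : EuclideanSpace ℝ (Fin n), 1 ≤ ‖x‖ → W x = Real.exp (a * ‖x‖ ^ β))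
    {x : EuclideanSpace ℝ (Fin n)} (hx : 1 < ‖x‖) :
    fderiv ℝ W x = (a * β * ‖x‖ ^ (β - 2) * Real.exp (a * ‖x‖ ^ β)) • innerSL ℝ x := by
  have hx0 : x ≠ 0 := norm_pos_iff.mp (by linarith)
  refine ((hasFDerivAt_exp_norm_rpow a β hx0).congr_of_eventuallyEq ?_).fderiv
  filter_upwards [(isOpen_lt continuous_const continuous_norm).mem_nhds hx] with y hy
  exact hW_eq y (le_of_lt hy)

theorem fderiv_fderiv_of_eq_exp
    (hW_smooth : ContDiff ℝ (⊤ : ℕ∞) W)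
    (hW_eq : ∀ x : EuclideanSpace ℝ (Fin n), 1 ≤ ‖x‖ → W x = Real.exp (a * ‖x‖ ^ β))
    {x : EuclideanSpace ℝ (Fin n)} (hx : 1 < ‖x‖) (v : EuclideanSpace ℝ (Fin n)) :
    fderiv ℝ (fderiv ℝ W) x v v =
      a * β * Real.exp (a * ‖x‖ ^ β) * (‖x‖ ^ (β - 2) * ⟪v, v⟫
        + ((β - 2) * ‖x‖ ^ (β - 2 - 2) + a * β * (‖x‖ ^ (β - 2)) ^ 2) * ⟪x, v⟫ ^ 2) := by
  have hx0 : x ≠ 0 := norm_pos_iff.mp (by linarith)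
  have hd : DifferentiableAt ℝ (fderiv ℝ W) x :=
    ((hW_smooth.fderiv_right (m := 1) (by norm_cast)).differentiable (by norm_num)) x
  have h1 : HasFDerivAt (fun y => fderiv ℝ W y v)
      ((ContinuousLinearMap.apply ℝ ℝ v).comp (fderiv ℝ (fderiv ℝ W) x)) x :=
    (ContinuousLinearMap.apply ℝ ℝ v).hasFDerivAt.comp x hd.hasFDerivAt
  have h2 := ((((hasFDerivAt_norm_rpow_of_ne (β - 2) hx0).const_mul (a * β)).mul
    (hasFDerivAt_exp_norm_rpow a β hx0)).mul
      ((innerSL ℝ v).hasFDerivAt (x := x)))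
  have h3 := h2.congr_of_eventuallyEq (f₁ := fun y => fderiv ℝ W y v) (by
    filter_upwards [(isOpen_lt continuous_const continuous_norm).mem_nhds hx] with y hy
    rw [fderiv_of_eq_exp hW_eq hy]
    simp [real_inner_comm])
  have h4 := congrArg (fun L => L v) (h1.unique h3)
  simp only [ContinuousLinearMap.comp_apply, ContinuousLinearMap.apply_apply,
    add_apply, smul_apply, smul_eq_mul,
    innerSL_apply_apply, Pi.mul_apply] at h4
  rw [h4, real_inner_comm x v]
  ring

/-- With `r = ‖x‖ > 1` and `W = e^{a r^β}`,
`ΔW = a β (n + β - 2) r^{β-2} W + (a β)² r^{2(β-1)} W`. -/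
theorem lap_of_eq_exp
    (hW_smooth : ContDiff ℝ (⊤ : ℕ∞) W)
    (hW_eq : ∀ x : EuclideanSpace ℝ (Fin n), 1 ≤ ‖x‖ → W x = Real.exp (a * ‖x‖ ^ β))
    {x : EuclideanSpace ℝ (Fin n)} (hx : 1 < ‖x‖) :
    lap W x = a * β * W x * ((n + β - 2) * ‖x‖ ^ (β - 2) + a * β * ‖x‖ ^ (2 * (β - 1))) := by
  have hpos : 0 < ‖x‖ := by linarith
  have e1 : ‖x‖ ^ (β - 2 - 2) * ‖x‖ ^ 2 = ‖x‖ ^ (β - 2) := by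
    rw [← Real.rpow_natCast, ← Real.rpow_add hpos]; congr 1; push_cast; ring
  have e2 : (‖x‖ ^ (β - 2)) ^ 2 * ‖x‖ ^ 2 = ‖x‖ ^ (2 * (β - 1)) := by
    rw [← Real.rpow_natCast, ← Real.rpow_natCast, ← Real.rpow_mul hpos.le, ← Real.rpow_add hpos]
    congr 1; push_cast; ring
  have hs : ∑ i : Fin n, (x i) ^ 2 = ‖x‖ ^ 2 := (EuclideanSpace.real_norm_sq_eq x).symm
  unfold lap
  simp only [iteratedFDeriv_two_apply, Matrix.cons_val_zero, Matrix.cons_val_one]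
  simp_rw [fderiv_fderiv_of_eq_exp hW_smooth hW_eq hx]
  simp only [EuclideanSpace.inner_single_right, PiLp.single_apply, if_true, map_one,
    mul_one, one_mul, conj_trivial]
  rw [← Finset.mul_sum, Finset.sum_add_distrib, ← Finset.mul_sum, hs, hW_eq x hx.le]
  simp only [Finset.sum_const, Finset.card_univ, Fintype.card_fin, nsmul_eq_mul]
  linear_combination a * β * Real.exp (a * ‖x‖ ^ β) * ((β - 2) * e1 + a * β * e2)

/-- With `r = ‖x‖ > 1` and `W = e^{a r^β}`, `β r^{β-2} x·∇W = a β² r^{2(β-1)} W`. -/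
theorem drift_of_eq_exp
    (hW_eq : ∀ x : EuclideanSpace ℝ (Fin n), 1 ≤ ‖x‖ → W x = Real.exp (a * ‖x‖ ^ β))
    {x : EuclideanSpace ℝ (Fin n)} (hx : 1 < ‖x‖) :
    β * ‖x‖ ^ (β - 2) * ⟪x, gradient W x⟫ = a * β ^ 2 * ‖x‖ ^ (2 * (β - 1)) * W x := by
  have hpos : 0 < ‖x‖ := by linarith
  have e2 : (‖x‖ ^ (β - 2)) ^ 2 * ‖x‖ ^ 2 = ‖x‖ ^ (2 * (β - 1)) := by
    rw [← Real.rpow_natCast, ← Real.rpow_natCast, ← Real.rpow_mul hpos.le, ← Real.rpow_add hpos]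
    congr 1; push_cast; ring
  rw [real_inner_comm, inner_gradient_left, fderiv_of_eq_exp hW_eq hx, hW_eq x hx.le]
  simp only [smul_apply, smul_eq_mul, innerSL_apply_apply,
    real_inner_self_eq_norm_sq]
  linear_combination a * β ^ 2 * Real.exp (a * ‖x‖ ^ β) * e2

end Exterior

/-- The factor `‖x‖ ^ (β - 2)` is singular at the origin when `β < 2`, but the drift term is
bounded on balls because `‖x‖ ^ (β - 2) * ‖x‖ = ‖x‖ ^ (β - 1)` with `β - 1 > 0`. -/
theorem neg_drift_le {n : ℕ} {β R : ℝ} (hβ : 1 < β) (W : EuclideanSpace ℝ (Fin n) → ℝ)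
    {x : EuclideanSpace ℝ (Fin n)} (hxR : ‖x‖ ≤ R) :
    -(β * ‖x‖ ^ (β - 2) * ⟪x, gradient W x⟫) ≤ β * R ^ (β - 1) * ‖fderiv ℝ W x‖ := by
  rcases eq_or_ne x 0 with rfl | hx
  · have : 0 ≤ R := by simpa using hxR
    simp only [inner_zero_left, mul_zero, neg_zero]
    positivity
  have hpos : 0 < ‖x‖ := norm_pos_iff.mpr hx
  have hin : -⟪x, gradient W x⟫ ≤ ‖fderiv ℝ W x‖ * ‖x‖ := by
    rw [real_inner_comm, inner_gradient_left]
    exact (neg_le_abs _).trans ((fderiv ℝ W x).le_opNorm x)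
  calc -(β * ‖x‖ ^ (β - 2) * ⟪x, gradient W x⟫)
      = β * ‖x‖ ^ (β - 2) * -⟪x, gradient W x⟫ := by ring
    _ ≤ β * ‖x‖ ^ (β - 2) * (‖fderiv ℝ W x‖ * ‖x‖) := by gcongr
    _ = β * ‖x‖ ^ (β - 1) * ‖fderiv ℝ W x‖ := by
        rw [show β - 1 = β - 2 + 1 by ring, Real.rpow_add_one hpos.ne']; ring
    _ ≤ β * R ^ (β - 1) * ‖fderiv ℝ W x‖ := by gcongr

/-- Lyapunov condition for `dμ_β = Z_β⁻¹ e^{−|x|^β} dx`, `1 < β ≤ 2`: with `W` smooth and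
`W(x) = e^{a|x|^β}` for `|x| ≥ 1` (`0 < a < 1`), one has
`LW ≤ −c|x|^{2(β−1)} W + b 1_{B(0,R)}`, where `L = Δ − β|x|^{β−2} x·∇`. -/
theorem lyapunov_exp_beta (n : ℕ) (hn : 1 ≤ n)
    (β : ℝ) (hβ : β ∈ Set.Ioc (1:ℝ) 2) (a : ℝ) (ha : a ∈ Set.Ioo (0:ℝ) 1)
    (W : EuclideanSpace ℝ (Fin n) → ℝ)
    (hW_smooth : ContDiff ℝ (⊤ : ℕ∞) W) (hW_one : ∀ x, 1 ≤ W x)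
    (hW_eq : ∀ x : EuclideanSpace ℝ (Fin n), 1 ≤ ‖x‖ → W x = Real.exp (a * ‖x‖ ^ β)) :
    ∃ c > (0:ℝ), ∃ b ≥ (0:ℝ), ∃ R : ℝ, 1 ≤ R ∧
      ∀ x : EuclideanSpace ℝ (Fin n),
        lap W x - β * ‖x‖ ^ (β - 2) * ⟪x, gradient W x⟫
          ≤ -c * ‖x‖ ^ (2 * (β - 1)) * W x
            + b * (Metric.ball (0 : EuclideanSpace ℝ (Fin n)) R).indicator
                (fun _ => (1:ℝ)) x := by
  obtain ⟨hβ1, hβ2⟩ := hβ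
  obtain ⟨ha0, ha1⟩ := ha
  have h1a : 0 < 1 - a := by linarith
  have hβ0 : 0 < β := by linarith
  -- Half of the leading coefficient `a (1 - a) β²` is kept as `c`; the other half absorbs the
  -- lower-order term `a β (n + β - 2) r ^ (β - 2)` once `r ≥ R`.
  set c : ℝ := a * (1 - a) * β ^ 2 / 2 with hc
  set R : ℝ := max 2 (2 * n / (1 - a)) with hR
  have hR2 : 2 ≤ R := le_max_left _ _
  have hRn : 2 * n / (1 - a) ≤ R := le_max_right _ _
  have hcpos : 0 < c := by positivity
  -- A continuous majorant, on the ball of radius `R`, of `LW + c ‖x‖ ^ (2 (β - 1)) W`.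
  let F : EuclideanSpace ℝ (Fin n) → ℝ := fun x =>
    lap W x + β * R ^ (β - 1) * ‖fderiv ℝ W x‖ + c * R ^ (2 * (β - 1)) * W x
  have hlap : Continuous (lap W) := by
    unfold lap
    refine continuous_finsetSum _ fun i _ => ?_
    exact (ContinuousMultilinearMap.apply ℝ (fun _ : Fin 2 => EuclideanSpace ℝ (Fin n)) ℝ
      ![EuclideanSpace.single i 1, EuclideanSpace.single i 1]).continuous.comp
      (hW_smooth.continuous_iteratedFDeriv (m := 2) (by norm_cast))
  have hF : Continuous F := by
    have := hW_smooth.continuous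
    have := hW_smooth.continuous_fderiv (by simp)
    fun_prop
  obtain ⟨M, hM⟩ := (isCompact_closedBall (0 : EuclideanSpace ℝ (Fin n)) R).bddAbove_image
    hF.continuousOn
  refine ⟨c, hcpos, max M 0, le_max_right _ _, R, by linarith, fun x => ?_⟩
  have hW0 : 0 < W x := by linarith [hW_one x]
  rcases lt_or_ge ‖x‖ R with hx | hx
  · rw [Set.indicator_of_mem (by simpa using hx)]
    have hMx : F x ≤ M := hM ⟨x, by simpa using hx.le, rfl⟩
    have hd := neg_drift_le hβ1 W hx.le
    have hp : c * ‖x‖ ^ (2 * (β - 1)) * W x ≤ c * R ^ (2 * (β - 1)) * W x := by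
      gcongr
    have hMM : M ≤ max M 0 := le_max_left _ _
    simp only [F] at hMx
    linarith
  · rw [Set.indicator_of_notMem (by simpa using hx)]
    have hx1 : 1 < ‖x‖ := by linarith
    have hpos : 0 < ‖x‖ := by linarith
    rw [lap_of_eq_exp hW_smooth hW_eq hx1, drift_of_eq_exp hW_eq hx1]
    have hsplit : ‖x‖ ^ (2 * (β - 1)) = ‖x‖ ^ (β - 2) * ‖x‖ ^ β := by
      rw [← Real.rpow_add hpos]; congr 1; ring
    have hrβ : ‖x‖ ≤ ‖x‖ ^ β := Real.self_le_rpow_of_one_le hx1.le hβ1.le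
    -- `n + β - 2 ≤ n ≤ (1 - a) R / 2 ≤ β (1 - a) r ^ β / 2`.
    have hkey : (n + β - 2 : ℝ) ≤ β * (1 - a) / 2 * ‖x‖ ^ β := by
      have h1 : 2 * n ≤ ‖x‖ ^ β * (1 - a) := by
        rw [← div_le_iff₀ h1a]; linarith
      have h2 : ‖x‖ ^ β * (1 - a) ≤ β * (‖x‖ ^ β * (1 - a)) :=
        le_mul_of_one_le_left (by positivity) hβ1.le
      linarith
    have hfin := mul_le_mul_of_nonneg_left hkey
      (show 0 ≤ a * β * W x * ‖x‖ ^ (β - 2) by positivity)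
    rw [hsplit, hc]
    linarith
end
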